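/- arXiv:2112.04458 — 4 statements merged into one kernel-verified Lean document; each statement's English description precedes it below -/
import Mathlib

section
/- Let ρ be a quasi-periodic labelling and let G_ρ be the associated group. Then every quasimorphism on G_ρ is bounded: if φ : G_ρ → ℝ satisfies sup_{g,h ∈ G_ρ} |φ(gh) − φ(g) − φ(h)| < ∞, then φ is a bounded function. -/
/-! ### Letters, labellings and quasi-periodicity -/

/-- The four letters `a, b, a⁻¹, b⁻¹`. -/
inductive Letter : Type
  | a : Letter
  | b : Letter
  | A : Letter  -- `a⁻¹`
  | B : Letter  -- `b⁻¹`
  deriving DecidableEq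

/-- The formal inverse of a letter. -/
def Letter.inv : Letter → Letter
  | .a => .A
  | .A => .a
  | .b => .B
  | .B => .b

/-- We encode the set of half-integers `½ℤ` by `ℤ` via `m ↦ m / 2`; integer points
correspond to even indices and proper half-integer points to odd indices.
A labelling assigns `a^{±1}` to integer points and `b^{±1}` to half-integer points. -/
def IsLabelling (ρ : ℤ → Letter) : Prop :=
  ∀ m : ℤ, (Even m → ρ m = Letter.a ∨ ρ m = Letter.A) ∧
    (Odd m → ρ m = Letter.b ∨ ρ m = Letter.B)

/-- The word of the labelling `ρ` along the block `{k, k+1, …, k+n}` (in the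
half-integer encoding, the block of size `n+1` starting at `k/2`). -/
def blockWord (ρ : ℤ → Letter) (k : ℤ) (n : ℕ) : List Letter :=
  (List.range (n + 1)).map fun i => ρ (k + i)

/-- The formal inverse of a word: reverse the word and invert each letter. -/
def wordInv (w : List Letter) : List Letter :=
  (w.map Letter.inv).reverse

/-- A labelling is quasi-periodic if (1) every subword of the labelling appears as a
subword (string of consecutive letters) of every sufficiently large block, and (2) the
formal inverse of every subword of the labelling is again a subword of the labelling. -/
def IsQuasiPeriodic (ρ : ℤ → Letter) : Prop :=
  IsLabelling ρ ∧
    (∀ (k : ℤ) (n : ℕ), ∃ N : ℕ, ∀ (k' : ℤ) (n' : ℕ), N ≤ n' + 1 →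
      (blockWord ρ k n) <:+: (blockWord ρ k' n')) ∧
    (∀ (k : ℤ) (n : ℕ), ∃ k' : ℤ, blockWord ρ k' n = wordInv (blockWord ρ k n))

/-! ### Thompson's group `F` and the subgroup `H`

Orientation-preserving homeomorphisms of `[0,1]` are realised as order-automorphisms
of `ℝ` that are the identity outside `[0,1]`; orientation-preserving homeomorphisms of
the line are order-automorphisms of `ℝ`. -/

/-- A dyadic rational real number, i.e. an element of `ℤ[1/2]`. -/
def IsDyadic (x : ℝ) : Prop :=
  ∃ (a : ℤ) (b : ℕ), x = (a : ℝ) / 2 ^ b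

/-- Membership in Thompson's group `F`: the identity outside `[0,1]`, and on `[0,1]`
piecewise linear with breakpoints in `ℤ[1/2]` and slopes integer powers of `2`. -/
def InThompsonF (f : ℝ ≃o ℝ) : Prop :=
  (∀ x : ℝ, x ∉ Set.Icc (0 : ℝ) 1 → f x = x) ∧
    ∃ (m : ℕ) (x : Fin (m + 1) → ℝ), x 0 = 0 ∧ x (Fin.last m) = 1 ∧ StrictMono x ∧
      (∀ i, IsDyadic (x i)) ∧
      ∀ i : Fin m, ∃ (k : ℤ) (c : ℝ),
        ∀ t ∈ Set.Icc (x i.castSucc) (x i.succ), f t = 2 ^ k * t + c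

/-- Membership in the subgroup `H ≤ F` of elements whose slopes at `0` and `1`
coincide. -/
def InH (f : ℝ ≃o ℝ) : Prop :=
  InThompsonF f ∧
    ∃ (k : ℤ) (ε : ℝ), 0 < ε ∧ (∀ t ∈ Set.Icc (0 : ℝ) ε, f t = 2 ^ k * t) ∧
      ∀ t ∈ Set.Icc (1 - ε) (1 : ℝ), f t = 1 + 2 ^ k * (t - 1)

/-! ### The generators of `G_ρ` -/

/-- `ζ` is the homeomorphism of `ℝ` which on each `[n, n+1]` is the conjugate of `ν`
(a homeomorphism of `[0,1]`) by the orientation-preserving isometry `[n,n+1] → [0,1]`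
if `ρ(n + ½) = b`, and by the orientation-reversing isometry if `ρ(n + ½) = b⁻¹`.
(In the encoding of `½ℤ` by `ℤ`, the point `n + ½` has index `2n + 1`.) -/
def IsZeta (ρ : ℤ → Letter) (ν ζ : ℝ ≃o ℝ) : Prop :=
  ∀ n : ℤ, ∀ x ∈ Set.Icc (n : ℝ) (n + 1),
    (ρ (2 * n + 1) = Letter.b → ζ x = n + ν (x - n)) ∧
    (ρ (2 * n + 1) = Letter.B → ζ x = (n + 1) - ν ((n + 1) - x))

/-- `χ` is the homeomorphism of `ℝ` which on each `[n-½, n+½]` is the conjugate of `ν`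
by the orientation-preserving isometry `[n-½, n+½] → [0,1]` if `ρ(n) = a`, and by the
orientation-reversing isometry if `ρ(n) = a⁻¹`. -/
def IsChi (ρ : ℤ → Letter) (ν χ : ℝ ≃o ℝ) : Prop :=
  ∀ n : ℤ, ∀ x ∈ Set.Icc ((n : ℝ) - 1/2) ((n : ℝ) + 1/2),
    (ρ (2 * n) = Letter.a → χ x = ((n : ℝ) - 1/2) + ν (x - ((n : ℝ) - 1/2))) ∧
    (ρ (2 * n) = Letter.A → χ x = ((n : ℝ) + 1/2) - ν (((n : ℝ) + 1/2) - x))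

/-! ### Bounded cohomology in degree two -/

/-- A bounded 2-cocycle on `G` with trivial real coefficients. -/
def IsBounded2Cocycle {G : Type*} [Group G] (ω : G → G → ℝ) : Prop :=
  (∃ C : ℝ, ∀ g h : G, |ω g h| ≤ C) ∧
    ∀ g₁ g₂ g₃ : G, ω g₂ g₃ - ω (g₁ * g₂) g₃ + ω g₁ (g₂ * g₃) - ω g₁ g₂ = 0

/-- `ω` is the coboundary of a bounded real-valued function. -/
def IsCoboundaryOfBounded {G : Type*} [Group G] (ω : G → G → ℝ) : Prop :=
  ∃ φ : G → ℝ, (∃ C : ℝ, ∀ g : G, |φ g| ≤ C) ∧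
    ∀ g h : G, ω g h = φ h - φ (g * h) + φ g

/-- A group is 2-boundedly acyclic if `H²_b(G; ℝ) = 0`, i.e. every bounded 2-cocycle is
the coboundary of a bounded function. -/
def Is2BoundedlyAcyclic (G : Type*) [Group G] : Prop :=
  ∀ ω : G → G → ℝ, IsBounded2Cocycle ω → IsCoboundaryOfBounded ω

/-- A 2-cocycle is homogeneous if it vanishes on powers of a single element. -/
def IsHomogeneous {G : Type*} [Group G] (ω : G → G → ℝ) : Prop :=
  ∀ (g : G) (i j : ℤ), ω (g ^ i) (g ^ j) = 0

namespace QM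

/-! ### Dyadic numbers -/

lemma dy_int (n : ℤ) : IsDyadic (n : ℝ) := ⟨n, 0, by simp⟩
lemma dy_zero : IsDyadic (0 : ℝ) := by simpa using dy_int 0
lemma dy_one : IsDyadic (1 : ℝ) := by simpa using dy_int 1

lemma dy_add {x y : ℝ} (hx : IsDyadic x) (hy : IsDyadic y) : IsDyadic (x + y) := by
  obtain ⟨a, b, rfl⟩ := hx
  obtain ⟨c, d, rfl⟩ := hy
  refine ⟨a * 2 ^ d + c * 2 ^ b, b + d, ?_⟩
  push_cast
  field_simp
  ring

lemma dy_neg {x : ℝ} (hx : IsDyadic x) : IsDyadic (-x) := by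
  obtain ⟨a, b, rfl⟩ := hx
  exact ⟨-a, b, by push_cast; ring⟩

lemma dy_sub {x y : ℝ} (hx : IsDyadic x) (hy : IsDyadic y) : IsDyadic (x - y) := by
  rw [sub_eq_add_neg]; exact dy_add hx (dy_neg hy)

lemma dy_mul {x y : ℝ} (hx : IsDyadic x) (hy : IsDyadic y) : IsDyadic (x * y) := by
  obtain ⟨a, b, rfl⟩ := hx
  obtain ⟨c, d, rfl⟩ := hy
  refine ⟨a * c, b + d, ?_⟩
  push_cast
  field_simp
  ring

lemma dy_pow (k : ℤ) : IsDyadic ((2 : ℝ) ^ k) := by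
  obtain ⟨n, rfl | rfl⟩ := k.eq_nat_or_neg
  · exact ⟨2 ^ n, 0, by simp⟩
  · exact ⟨1, n, by simp⟩

lemma dy_smul (k : ℤ) {x : ℝ} : IsDyadic ((2 : ℝ) ^ k * x) ↔ IsDyadic x := by
  constructor
  · intro h
    have h2 := dy_mul (dy_pow (-k)) h
    rwa [← mul_assoc, ← zpow_add₀ (by norm_num), neg_add_cancel, zpow_zero, one_mul] at h2
  · exact dy_mul (dy_pow k)

lemma dy_half {x : ℝ} (hx : IsDyadic x) : IsDyadic (x / 2) := by
  have := dy_mul hx (dy_pow (-1))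
  simpa [div_eq_mul_inv] using this

lemma dy_dense {x y : ℝ} (h : x < y) : ∃ z, IsDyadic z ∧ x < z ∧ z < y := by
  obtain ⟨n, hn⟩ := exists_nat_gt (1 / (y - x))
  have hyx : 0 < y - x := sub_pos.2 h
  have h2 : (n : ℝ) < 2 ^ n := by exact_mod_cast Nat.lt_two_pow_self
  have h3 : 1 / (y - x) < 2 ^ n := hn.trans h2
  have hp : (0 : ℝ) < 2 ^ n := by positivity
  have h4 : 1 < (y - x) * 2 ^ n := by
    rw [div_lt_iff₀ hyx] at h3; linarith
  refine ⟨(⌊x * 2 ^ n⌋ + 1 : ℤ) / 2 ^ n, ⟨_, n, rfl⟩, ?_, ?_⟩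
  · rw [lt_div_iff₀ hp]; push_cast; exact Int.lt_floor_add_one _
  · rw [div_lt_iff₀ hp]; push_cast
    have := Int.floor_le (x * 2 ^ n)
    nlinarith

/-! ### Homeomorphisms of the line -/

abbrev Hm := ℝ ≃o ℝ

lemma mul_app (f g : Hm) (x : ℝ) : (f * g) x = f (g x) := rfl
lemma one_app (x : ℝ) : (1 : Hm) x = x := rfl
lemma inv_app (f : Hm) (x : ℝ) : f⁻¹ (f x) = x := RelIso.inv_apply_self f x
lemma app_inv (f : Hm) (x : ℝ) : f (f⁻¹ x) = x := RelIso.apply_inv_self f x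
lemma inv_fix {f : Hm} {x : ℝ} (h : f x = x) : f⁻¹ x = x := by
  conv_lhs => rw [← h]
  exact inv_app f x
lemma inv_eq_of {f : Hm} {x y : ℝ} (h : f x = y) : f⁻¹ y = x := by
  rw [← h]; exact inv_app f x

/-- Build a homeomorphism from a strictly monotone map with inverse. -/
def mkHm (f g : ℝ → ℝ) (h1 : ∀ x, g (f x) = x) (h2 : ∀ x, f (g x) = x)
    (hf : StrictMono f) : Hm where
  toFun := f
  invFun := g
  left_inv := h1
  right_inv := h2
  map_rel_iff' := hf.le_iff_le

/-- Conjugation by a translation. -/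
def tr (c : ℝ) : Hm →* Hm where
  toFun f := mkHm (fun x => c + f (x - c)) (fun x => c + f.symm (x - c))
    (by intro x; simp) (by intro x; simp)
    (by intro x y h; simpa using h)
  map_one' := by ext x; change c + (x - c) = x; ring
  map_mul' f g := by
    ext x
    change c + f (g (x - c)) = c + f ((c + g (x - c)) - c)
    congr 2; ring

lemma tr_app (c : ℝ) (f : Hm) (x : ℝ) : tr c f x = c + f (x - c) := rfl

/-- Conjugation by the reflection. -/
def mir : Hm →* Hm where
  toFun f := mkHm (fun x => - f (-x)) (fun x => - f.symm (-x))
    (by intro x; simp) (by intro x; simp)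
    (by intro x y h; simpa using h)
  map_one' := by ext x; change -(-x) = x; ring
  map_mul' f g := by
    ext x
    change -(f (g (-x))) = - f (-(-(g (-x))))
    rw [neg_neg]

lemma mir_app (f : Hm) (x : ℝ) : mir f x = - f (-x) := rfl

def sg (ε : ℤ) : Hm →* Hm := if ε = 1 then MonoidHom.id _ else mir

lemma sg_app {ε : ℤ} (h : ε = 1 ∨ ε = -1) (f : Hm) (x : ℝ) :
    sg ε f x = ε * f (ε * x) := by
  rcases h with rfl | rfl
  · simp [sg]
  · simp [sg, mir_app]

/-! ### The elementary maps -/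

noncomputable def Efun (p : ℝ) (n : ℤ) (x : ℝ) : ℝ := if x ≤ p then x else p + 2 ^ n * (x - p)

lemma Efun_inv (p : ℝ) (n : ℤ) (x : ℝ) : Efun p (-n) (Efun p n x) = x := by
  unfold Efun
  by_cases h : x ≤ p
  · simp [h]
  · have h1 : 0 < (2 : ℝ) ^ n * (x - p) := by
      have : 0 < x - p := by linarith [not_le.1 h]
      positivity
    rw [if_neg h, if_neg (by linarith)]
    have : (2 : ℝ) ^ (-n) * 2 ^ n = 1 := by
      rw [← zpow_add₀ (by norm_num)]; simp
    calc p + 2 ^ (-n) * (p + 2 ^ n * (x - p) - p) = p + (2 ^ (-n) * 2 ^ n) * (x - p) := by ring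
      _ = x := by rw [this]; ring

lemma Efun_mono (p : ℝ) (n : ℤ) : StrictMono (Efun p n) := by
  intro x y h
  have hp : (0 : ℝ) < 2 ^ n := by positivity
  unfold Efun
  split_ifs with h1 h2 h2
  · exact h
  · have : 0 < (2 : ℝ) ^ n * (y - p) := mul_pos hp (by linarith [not_le.1 h2])
    linarith
  · linarith
  · have := mul_lt_mul_of_pos_left (sub_lt_sub_right h p) hp
    linarith

noncomputable def E (p : ℝ) (n : ℤ) : Hm :=
  mkHm (Efun p n) (Efun p (-n)) (Efun_inv p n)
    (by intro x; simpa using Efun_inv p (-n) x) (Efun_mono p n)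

lemma E_le {p x : ℝ} (n : ℤ) (h : x ≤ p) : E p n x = x := if_pos h
lemma E_ge {p x : ℝ} (n : ℤ) (h : p ≤ x) : E p n x = p + 2 ^ n * (x - p) := by
  rcases h.eq_or_lt with rfl | h
  · rw [E_le n le_rfl]; ring
  · exact if_neg (not_le.2 h)

lemma E_mul (p : ℝ) (m n : ℤ) : E p m * E p n = E p (m + n) := by
  ext x
  rw [mul_app]
  rcases le_total x p with h | h
  · rw [E_le n h, E_le m h, E_le _ h]
  · have : 0 ≤ (2 : ℝ) ^ n * (x - p) := mul_nonneg (by positivity) (by linarith)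
    rw [E_ge n h, E_ge m (by linarith), E_ge _ h, zpow_add₀ (by norm_num)]; ring

lemma E_zero (p : ℝ) : E p 0 = 1 := by
  ext x
  rcases le_total x p with h | h
  · rw [E_le _ h, one_app]
  · rw [E_ge _ h, one_app]; simp

lemma E_inv (p : ℝ) (n : ℤ) : (E p n)⁻¹ = E p (-n) := by
  rw [inv_eq_iff_mul_eq_one, E_mul]; simp [E_zero]

lemma E_pow (p : ℝ) (n : ℤ) : E p n = (E p 1) ^ n := by
  induction n using Int.induction_on with
  | zero => simp [E_zero]
  | succ i ih => rw [zpow_add_one, ← ih, E_mul]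
  | pred i ih => rw [zpow_sub_one, ← ih, E_inv, E_mul]; rfl

/-! ### The dyadic piecewise linear group -/

/-- no point of `S` lies strictly between two points of `J` -/
def NB (S : Finset ℝ) (J : Set ℝ) : Prop := ∀ x ∈ J, ∀ y ∈ J, ∀ z ∈ S, x < z → z < y → False

def AffOn (f : Hm) (J : Set ℝ) : Prop := ∃ (k : ℤ) (c : ℝ), ∀ t ∈ J, f t = 2 ^ k * t + c

def PLS (f : Hm) (S : Finset ℝ) : Prop := ∀ J : Set ℝ, NB S J → AffOn f J

lemma zpow_inv_cancel (k : ℤ) (x : ℝ) : (2 : ℝ) ^ (-k) * (2 ^ k * x) = x := by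
  rw [← mul_assoc, ← zpow_add₀ (by norm_num)]; simp

def PL : Subgroup Hm where
  carrier := {f | (∀ x, IsDyadic (f x) ↔ IsDyadic x) ∧
    ∃ S : Finset ℝ, (∀ z ∈ S, IsDyadic z) ∧ PLS f S}
  one_mem' := ⟨fun x => Iff.rfl, ∅, by simp, fun J _ => ⟨0, 0, fun t _ => by simp [one_app]⟩⟩
  mul_mem' := by
    classical
    rintro f g ⟨hf, S, hS, hfS⟩ ⟨hg, T, hT, hgT⟩
    refine ⟨fun x => (hf _).trans (hg x), T ∪ S.image (g⁻¹ : Hm), ?_, ?_⟩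
    · intro z hz
      rcases Finset.mem_union.1 hz with hz | hz
      · exact hT z hz
      · obtain ⟨y, hy, rfl⟩ := Finset.mem_image.1 hz
        rw [← hg, app_inv]; exact hS y hy
    · intro J hJ
      obtain ⟨k, c, h1⟩ := hgT J fun x hx y hy z hz =>
        hJ x hx y hy z (Finset.mem_union_left _ hz)
      obtain ⟨l, d, h2⟩ := hfS (g '' J) (by
        rintro _ ⟨x, hx, rfl⟩ _ ⟨y, hy, rfl⟩ z hz hxz hzy
        refine hJ x hx y hy (g⁻¹ z) (Finset.mem_union_right _ (Finset.mem_image_of_mem _ hz)) ?_ ?_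
        · rw [← g.lt_iff_lt, app_inv]; exact hxz
        · rw [← g.lt_iff_lt, app_inv]; exact hzy)
      refine ⟨l + k, 2 ^ l * c + d, fun t ht => ?_⟩
      rw [mul_app, h2 _ ⟨t, ht, rfl⟩, h1 t ht, zpow_add₀ (by norm_num)]; ring
  inv_mem' := by
    classical
    rintro f ⟨hf, S, hS, hfS⟩
    refine ⟨fun x => ?_, S.image f, ?_, ?_⟩
    · rw [← hf, app_inv]
    · intro z hz
      obtain ⟨y, hy, rfl⟩ := Finset.mem_image.1 hz
      exact (hf y).2 (hS y hy)
    · intro J hJ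
      obtain ⟨k, c, h1⟩ := hfS ((f⁻¹ : Hm) '' J) (by
        rintro _ ⟨x, hx, rfl⟩ _ ⟨y, hy, rfl⟩ z hz hxz hzy
        refine hJ x hx y hy (f z) (Finset.mem_image_of_mem _ hz) ?_ ?_
        · have := f.lt_iff_lt.2 hxz
          rwa [app_inv] at this
        · have := f.lt_iff_lt.2 hzy
          rwa [app_inv] at this)
      refine ⟨-k, -(2 ^ (-k) * c), fun t ht => ?_⟩
      have := h1 _ ⟨t, ht, rfl⟩
      rw [app_inv] at this
      conv_rhs => rw [this]
      rw [mul_add, zpow_inv_cancel]; ring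

lemma mem_PL {f : Hm} : f ∈ PL ↔ (∀ x, IsDyadic (f x) ↔ IsDyadic x) ∧
    ∃ S : Finset ℝ, (∀ z ∈ S, IsDyadic z) ∧ PLS f S := Iff.rfl

lemma tr_PL {f : Hm} {c : ℝ} (hc : IsDyadic c) (hf : f ∈ PL) : tr c f ∈ PL := by
  classical
  obtain ⟨hf, S, hS, hfS⟩ := hf
  have key : ∀ x, IsDyadic (c + x) ↔ IsDyadic x := fun x =>
    ⟨fun h => by simpa using dy_sub h hc, dy_add hc⟩
  refine ⟨fun x => ?_, S.image (fun z => c + z), ?_, ?_⟩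
  · rw [tr_app, key, hf, ← key]; simp
  · intro z hz
    obtain ⟨y, hy, rfl⟩ := Finset.mem_image.1 hz
    exact (key y).2 (hS y hy)
  · intro J hJ
    obtain ⟨k, d, h⟩ := hfS ((fun x => x - c) '' J) (by
      rintro _ ⟨x, hx, rfl⟩ _ ⟨y, hy, rfl⟩ z hz hxz hzy
      refine hJ x hx y hy (c + z) (Finset.mem_image_of_mem _ hz) ?_ ?_ <;> simp at * <;> linarith)
    refine ⟨k, c + d - 2 ^ k * c, fun t ht => ?_⟩
    rw [tr_app, h _ ⟨t, ht, rfl⟩]; ring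

lemma mir_PL {f : Hm} (hf : f ∈ PL) : mir f ∈ PL := by
  classical
  obtain ⟨hf, S, hS, hfS⟩ := hf
  have key : ∀ x : ℝ, IsDyadic (-x) ↔ IsDyadic x := fun x =>
    ⟨fun h => by simpa using dy_neg h, dy_neg⟩
  refine ⟨fun x => ?_, S.image (fun z => -z), ?_, ?_⟩
  · rw [mir_app, key, hf, key]
  · intro z hz
    obtain ⟨y, hy, rfl⟩ := Finset.mem_image.1 hz
    exact (key y).2 (hS y hy)
  · intro J hJ
    obtain ⟨k, d, h⟩ := hfS ((fun x => -x) '' J) (by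
      rintro _ ⟨x, hx, rfl⟩ _ ⟨y, hy, rfl⟩ z hz hxz hzy
      refine hJ y hy x hx (-z) (Finset.mem_image_of_mem _ hz) ?_ ?_ <;> simp at * <;> linarith)
    refine ⟨k, -d, fun t ht => ?_⟩
    rw [mir_app, h _ ⟨t, ht, rfl⟩]; ring

lemma sg_PL {f : Hm} (ε : ℤ) (hf : f ∈ PL) : sg ε f ∈ PL := by
  unfold sg
  split_ifs
  · exact hf
  · exact mir_PL hf

lemma E_PL {p : ℝ} (hp : IsDyadic p) (n : ℤ) : E p n ∈ PL := by
  refine ⟨fun x => ?_, {p}, by simpa using hp, ?_⟩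
  · rcases le_total x p with h | h
    · rw [E_le n h]
    · rw [E_ge n h]
      constructor
      · intro h2
        have := (dy_smul n).1 (by simpa using dy_sub h2 hp : IsDyadic ((2 : ℝ) ^ n * (x - p)))
        simpa using dy_add this hp
      · intro h2
        exact dy_add hp ((dy_smul n).2 (dy_sub h2 hp))
  · intro J hJ
    by_cases h : ∃ x ∈ J, x < p
    · obtain ⟨x, hx, hxp⟩ := h
      refine ⟨0, 0, fun t ht => ?_⟩
      rw [E_le n (not_lt.1 fun h => hJ x hx t ht p (by simp) hxp h)]; simp
    · push Not at h
      refine ⟨n, p - 2 ^ n * p, fun t ht => ?_⟩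
      rw [E_ge n (h t ht)]; ring

/-- Generation by elementary maps. -/
lemma gen_aux (n : ℕ) : ∀ (f : Hm) (S : Finset ℝ), S.card = n → (∀ z ∈ S, IsDyadic z) → PLS f S →
    (∃ M, ∀ x ≤ M, f x = x) → f ∈ Subgroup.closure {g | ∃ p n, IsDyadic p ∧ g = E p n} := by
  classical
  induction n with
  | zero =>
    intro f S hS _ hf ⟨M, hM⟩
    obtain rfl := Finset.card_eq_zero.1 hS
    obtain ⟨k, c, h⟩ := hf Set.univ (by intro x _ y _ z hz; simp at hz)
    have h1 := h M trivial
    have h2 := h (M - 1) trivial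
    rw [hM _ le_rfl] at h1
    rw [hM _ (by linarith)] at h2
    have hk : (2 : ℝ) ^ k = 1 := by linarith
    have : f = 1 := by
      ext x; rw [h x trivial, one_app, hk]
      rw [hk] at h1; linarith
    rw [this]; exact one_mem _
  | succ n ih =>
    intro f S hS hd hf ⟨M, hM⟩
    have hne : S.Nonempty := Finset.card_pos.1 (by omega)
    set p := S.max' hne with hp
    have hpS : p ∈ S := S.max'_mem hne
    have hmax : ∀ z ∈ S, z ≤ p := fun z hz => S.le_max' z hz
    set S' := S.erase p with hS'
    obtain ⟨b, cb, hb⟩ := hf (Set.Ici p) (by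
      intro x hx y hy z hz hxz hzy
      have := hmax z hz
      have : p ≤ x := hx
      linarith)
    obtain ⟨a, ca, ha⟩ := hf ({t | ∀ z ∈ S', z ≤ t} ∩ Set.Iic p) (by
      rintro x ⟨hx, hx'⟩ y ⟨hy, hy'⟩ z hz hxz hzy
      have h1 : y ≤ p := hy'
      have : z ∈ S' := Finset.mem_erase.2 ⟨by rintro rfl; linarith, hz⟩
      have := hx z this
      linarith)
    have hpp : 2 ^ b * p + cb = 2 ^ a * p + ca := by
      rw [← hb p Set.self_mem_Ici,
        ← ha p ⟨fun z hz => hmax z (Finset.mem_of_mem_erase hz), Set.self_mem_Iic⟩]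
    have hU : ∀ t, (∀ z ∈ S', z ≤ t) → (f * E p (a - b)) t = 2 ^ a * t + ca := by
      intro t ht
      rw [mul_app]
      rcases le_total t p with h | h
      · rw [E_le _ h]; exact ha t ⟨ht, h⟩
      · have h0 : 0 ≤ (2 : ℝ) ^ (a - b) * (t - p) := mul_nonneg (by positivity) (by linarith)
        rw [E_ge _ h, hb _ (by change p ≤ _; linarith)]
        have : (2 : ℝ) ^ b * 2 ^ (a - b) = 2 ^ a := by
          rw [← zpow_add₀ (by norm_num)]; congr 1; ring
        calc 2 ^ b * (p + 2 ^ (a - b) * (t - p)) + cb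
            = (2 ^ b * p + cb) + (2 ^ b * 2 ^ (a - b)) * (t - p) := by ring
          _ = _ := by rw [hpp, this]; ring
    have key : f * E p (a - b) ∈ Subgroup.closure {g | ∃ p n, IsDyadic p ∧ g = E p n} := by
      refine ih _ S' (by rw [Finset.card_erase_of_mem hpS]; omega)
        (fun z hz => hd z (Finset.mem_of_mem_erase hz)) ?_ ⟨min M p, fun x hx => ?_⟩
      · intro J hJ
        by_cases hh : ∀ t ∈ J, ∀ z ∈ S', z ≤ t
        · exact ⟨a, ca, fun t ht => hU t (hh t ht)⟩
        · push Not at hh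
          obtain ⟨t, ht, z, hz, htz⟩ := hh
          have hzp : z < p := lt_of_le_of_ne (hmax z (Finset.mem_of_mem_erase hz))
            (Finset.ne_of_mem_erase hz)
          have hJz : ∀ y ∈ J, y ≤ z := fun y hy => not_lt.1 fun h => hJ t ht y hy z hz htz h
          obtain ⟨k, c, h⟩ := hf J (by
            intro x hx y hy w hw hxw hwy
            refine hJ x hx y hy w (Finset.mem_erase.2 ⟨?_, hw⟩) hxw hwy
            rintro rfl
            have := hJz y hy
            linarith)
          refine ⟨k, c, fun y hy => ?_⟩
          rw [mul_app, E_le _ (by linarith [hJz y hy])]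
          exact h y hy
      · rw [mul_app, E_le _ (hx.trans (min_le_right _ _))]
        exact hM _ (hx.trans (min_le_left _ _))
    have hE : E p (a - b) ∈ Subgroup.closure {g | ∃ p n, IsDyadic p ∧ g = E p n} :=
      Subgroup.subset_closure ⟨p, _, hd p hpS, rfl⟩
    simpa using mul_mem key (inv_mem hE)

lemma gen {f : Hm} (hf : f ∈ PL) (h : ∃ M, ∀ x ≤ M, f x = x) :
    f ∈ Subgroup.closure {g | ∃ p n, IsDyadic p ∧ g = E p n} := by
  obtain ⟨_, S, hS, hfS⟩ := hf
  exact gen_aux _ f S rfl hS hfS h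

/-- affine near infinity -/
lemma aff_top {f : Hm} (hf : f ∈ PL) : ∃ (k : ℤ) (c M : ℝ), ∀ x ≥ M, f x = 2 ^ k * x + c := by
  obtain ⟨_, S, hS, hfS⟩ := hf
  obtain ⟨M, hM⟩ := S.bddAbove
  obtain ⟨k, c, h⟩ := hfS (Set.Ici M) (by
    intro x hx y hy z hz hxz hzy
    have h1 := hM hz
    have h2 : M ≤ x := hx
    linarith)
  exact ⟨k, c, M, h⟩

/-! ### Comparison with the Thompson group -/

lemma thompson_of_PL {f : Hm} (hf : f ∈ PL) (h : ∀ x, x ∉ Set.Icc (0 : ℝ) 1 → f x = x) :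
    InThompsonF f := by
  classical
  obtain ⟨_, S, hS, hfS⟩ := hf
  refine ⟨h, ?_⟩
  set T := insert 0 (insert 1 (S.filter fun z => 0 < z ∧ z < 1)) with hT
  have h0T : (0 : ℝ) ∈ T := by simp [hT]
  have h1T : (1 : ℝ) ∈ T := by simp [hT]
  have hrange : ∀ z ∈ T, 0 ≤ z ∧ z ≤ 1 := by
    intro z hz
    simp only [hT, Finset.mem_insert, Finset.mem_filter] at hz
    rcases hz with rfl | rfl | ⟨_, h1, h2⟩
    · norm_num
    · norm_num
    · exact ⟨h1.le, h2.le⟩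
  have hcard : T.card = (T.card - 1) + 1 := by
    have := Finset.card_pos.2 ⟨_, h0T⟩
    omega
  set m := T.card - 1
  let x := T.orderEmbOfFin hcard
  have hsurj : ∀ z ∈ T, ∃ i, x i = z := by
    intro z hz
    have : z ∈ Set.range x := by rw [Finset.range_orderEmbOfFin]; exact hz
    exact this
  have hmem : ∀ i, x i ∈ T := fun i => Finset.orderEmbOfFin_mem T hcard i
  refine ⟨m, x, ?_, ?_, x.strictMono, ?_, ?_⟩
  · obtain ⟨i, hi⟩ := hsurj 0 h0T
    apply le_antisymm
    · rw [← hi]; exact x.monotone (Fin.zero_le _)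
    · exact (hrange _ (hmem _)).1
  · obtain ⟨i, hi⟩ := hsurj 1 h1T
    apply le_antisymm
    · exact (hrange _ (hmem _)).2
    · rw [← hi]; exact x.monotone (Fin.le_last _)
  · intro i
    have := hmem i
    simp only [hT, Finset.mem_insert, Finset.mem_filter] at this
    rcases this with h | h | ⟨h, _⟩
    · rw [h]; exact dy_zero
    · rw [h]; exact dy_one
    · exact hS _ h
  · intro i
    apply hfS
    rintro u ⟨hu1, hu2⟩ v ⟨hv1, hv2⟩ z hz huz hzv
    have r1 := hrange _ (hmem i.castSucc)
    have r2 := hrange _ (hmem i.succ)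
    obtain ⟨j, hj⟩ := hsurj z (by
      simp only [hT, Finset.mem_insert, Finset.mem_filter]
      exact Or.inr (Or.inr ⟨hz, by linarith, by linarith⟩))
    have a1 : x i.castSucc < x j := by rw [hj]; linarith
    have a2 : x j < x i.succ := by rw [hj]; linarith
    rw [x.lt_iff_lt] at a1 a2
    rw [Fin.lt_def] at a1 a2
    simp at a1 a2
    omega

lemma fix_zero_one {f : Hm} (h : ∀ x, x ∉ Set.Icc (0 : ℝ) 1 → f x = x) : f 0 = 0 ∧ f 1 = 1 := by
  have hneg : ∀ x < (0 : ℝ), f x = x := fun x hx => h x (fun h => by linarith [h.1])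
  have hpos : ∀ x > (1 : ℝ), f x = x := fun x hx => h x (fun h => by linarith [h.2])
  refine ⟨le_antisymm ?_ ?_, le_antisymm ?_ ?_⟩
  · by_contra hc
    push Not at hc
    have h1 : f (f⁻¹ 0) = 0 := app_inv f 0
    have h2 : f⁻¹ 0 < 0 := by rw [← f.lt_iff_lt, h1]; exact hc
    rw [hneg _ h2] at h1; linarith
  · by_contra hc
    push Not at hc
    have h1 := hneg _ hc
    have := f.injective h1
    linarith
  · by_contra hc
    push Not at hc
    have h1 := hpos _ hc
    have := f.injective h1
    linarith
  · by_contra hc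
    push Not at hc
    have h1 : f (f⁻¹ 1) = 1 := app_inv f 1
    have h2 : 1 < f⁻¹ 1 := by rw [← f.lt_iff_lt, h1]; exact hc
    rw [hpos _ h2] at h1; linarith

lemma PL_of_thompson {f : Hm} (hf : InThompsonF f) : f ∈ PL := by
  classical
  obtain ⟨h, m, x, hx0, hx1, hmono, hdy, haff⟩ := hf
  obtain ⟨f0, f1⟩ := fix_zero_one h
  have hfd : ∀ i, IsDyadic (f (x i)) := by
    intro i
    induction i using Fin.induction with
    | zero => rw [hx0, f0]; exact dy_zero
    | succ i ih =>
      obtain ⟨k, c, hc⟩ := haff i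
      have hlt : x i.castSucc < x i.succ := hmono (Fin.castSucc_lt_succ)
      have e1 := hc _ ⟨le_rfl, hlt.le⟩
      have e2 := hc _ ⟨hlt.le, le_rfl⟩
      have : f (x i.succ) = f (x i.castSucc) + 2 ^ k * (x i.succ - x i.castSucc) := by
        rw [e1, e2]; ring
      rw [this]
      exact dy_add ih ((dy_smul k).2 (dy_sub (hdy _) (hdy _)))
  -- location of points
  have hloc : ∀ t, 0 ≤ t → t < 1 → ∃ i : Fin m, x i.castSucc ≤ t ∧ t < x i.succ := by
    intro t h0 h1
    by_contra hc
    push Not at hc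
    have : ∀ i, x i ≤ t := by
      intro i
      induction i using Fin.induction with
      | zero => rw [hx0]; exact h0
      | succ i ih => exact hc i ih
    have := this (Fin.last m)
    rw [hx1] at this; linarith
  refine ⟨fun t => ?_, Finset.univ.image x, ?_, ?_⟩
  · by_cases ht : t ∈ Set.Icc (0 : ℝ) 1
    · rcases ht.2.eq_or_lt with rfl | h1
      · rw [f1]
      · obtain ⟨i, hi1, hi2⟩ := hloc t ht.1 h1
        obtain ⟨k, c, hc⟩ := haff i
        have e1 := hc _ ⟨le_rfl, hi1.trans hi2.le⟩
        have e2 := hc t ⟨hi1, hi2.le⟩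
        have e3 : f t = f (x i.castSucc) + 2 ^ k * (t - x i.castSucc) := by rw [e1, e2]; ring
        rw [e3]
        constructor
        · intro hh
          have := (dy_smul k).1
            (by simpa using dy_sub hh (hfd i.castSucc) :
              IsDyadic ((2 : ℝ) ^ k * (t - x i.castSucc)))
          simpa using dy_add this (hdy i.castSucc)
        · intro hh
          exact dy_add (hfd _) ((dy_smul k).2 (dy_sub hh (hdy _)))
    · rw [h t ht]
  · intro z hz
    obtain ⟨i, _, rfl⟩ := Finset.mem_image.1 hz
    exact hdy i
  · intro J hJ
    have hJ' : ∀ u ∈ J, ∀ v ∈ J, ∀ i, u < x i → x i < v → False := fun u hu v hv i =>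
      hJ u hu v hv (x i) (Finset.mem_image_of_mem _ (Finset.mem_univ i))
    by_cases hsub : ∃ u ∈ J, ∃ v ∈ J, u < v
    · obtain ⟨u, hu, v, hv, huv⟩ := hsub
      have hu0 : u < 0 → AffOn f J := by
        intro hu0
        refine ⟨0, 0, fun t ht => ?_⟩
        have : t ≤ 0 := by
          by_contra hc
          push Not at hc
          exact hJ' u hu t ht 0 (by rw [hx0]; exact hu0) (by rw [hx0]; exact hc)
        rcases this.eq_or_lt with rfl | h2
        · simp [f0]
        · rw [h t (fun h => by linarith [h.1])]; simp
      rcases lt_or_ge u 0 with hu0' | hu0'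
      · exact hu0 hu0'
      rcases lt_or_ge u 1 with hu1 | hu1
      · obtain ⟨i, hi1, hi2⟩ := hloc u hu0' hu1
        obtain ⟨k, c, hc⟩ := haff i
        refine ⟨k, c, fun t ht => hc t ⟨?_, ?_⟩⟩
        · by_contra hcon
          push Not at hcon
          have h3 : x i.castSucc < v := hi1.trans_lt huv
          exact hJ' t ht v hv _ hcon h3
        · by_contra hcon
          push Not at hcon
          exact hJ' u hu t ht _ hi2 hcon
      · refine ⟨0, 0, fun t ht => ?_⟩
        have : 1 ≤ t := by
          by_contra hc
          push Not at hc
          exact hJ' t ht v hv (Fin.last m) (by rw [hx1]; exact hc) (by rw [hx1]; linarith)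
        rcases this.eq_or_lt with rfl | h2
        · simp [f1]
        · rw [h t (fun h => by linarith [h.2])]; simp
    · push Not at hsub
      rcases J.eq_empty_or_nonempty with rfl | ⟨u, hu⟩
      · exact ⟨0, 0, by simp⟩
      · refine ⟨0, f u - u, fun t ht => ?_⟩
        have : t = u := le_antisymm (hsub u hu t ht) (hsub t ht u hu)
        rw [this]; simp
end QM

namespace QM
open Filter
open scoped commutatorElement

/-! ### Perfectness of compactly supported PL maps -/

/-- maps which are eventually the identity along a filter -/
def evId (l : Filter ℝ) : Subgroup Hm where
  carrier := {f | ∀ᶠ x in l, f x = x}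
  one_mem' := Eventually.of_forall fun _ => rfl
  mul_mem' := by
    intro f g hf hg
    filter_upwards [hf, hg] with x h1 h2
    rw [mul_app, h2, h1]
  inv_mem' := by
    intro f hf
    filter_upwards [hf] with x h1
    exact inv_fix h1

lemma mem_evId {l : Filter ℝ} {f : Hm} : f ∈ evId l ↔ ∀ᶠ x in l, f x = x := Iff.rfl

def Ab : Subgroup Hm := PL ⊓ evId atBot
def Lc : Subgroup Hm := Ab ⊓ evId atTop

lemma E_Ab {p : ℝ} (hp : IsDyadic p) (n : ℤ) : E p n ∈ Ab :=
  ⟨E_PL hp n, by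
    change ∀ᶠ x in atBot, E p n x = x
    filter_upwards [eventually_le_atBot p] with x hx
    exact E_le n hx⟩

def Germ (f : Hm) (k : ℤ) (c : ℝ) : Prop := ∀ᶠ x in atTop, f x = 2 ^ k * x + c

lemma Hm_top (f : Hm) : Tendsto f atTop atTop := f.tendsto_atTop

lemma Germ.mul {f g : Hm} {k l : ℤ} {c d : ℝ} (hf : Germ f k c) (hg : Germ g l d) :
    Germ (f * g) (k + l) (2 ^ k * d + c) := by
  filter_upwards [hg, (Hm_top g).eventually hf] with x h1 h2
  rw [mul_app, h2, h1, zpow_add₀ (by norm_num)]; ring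

lemma Germ.inv {f : Hm} {k : ℤ} {c : ℝ} (hf : Germ f k c) :
    Germ f⁻¹ (-k) (- 2 ^ (-k) * c) := by
  filter_upwards [(Hm_top f⁻¹).eventually hf] with x h1
  rw [app_inv] at h1
  have := zpow_inv_cancel k (f⁻¹ x)
  rw [← this]
  have h2 : 2 ^ k * f⁻¹ x = x - c := by linarith
  rw [h2]; ring

lemma Germ.one : Germ 1 0 0 := Eventually.of_forall fun x => by simp [one_app]

lemma Germ.uniq {f : Hm} {k l : ℤ} {c d : ℝ} (hf : Germ f k c) (hg : Germ f l d) :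
    k = l ∧ c = d := by
  obtain ⟨M, hM⟩ := eventually_atTop.1 (hf.and hg)
  have h1 := hM M le_rfl
  have h2 := hM (M + 1) (by linarith)
  have e1 : (2 : ℝ) ^ k * M + c = 2 ^ l * M + d := h1.1.symm.trans h1.2
  have e2 : (2 : ℝ) ^ k * (M + 1) + c = 2 ^ l * (M + 1) + d := h2.1.symm.trans h2.2
  have e3 : (2 : ℝ) ^ k = 2 ^ l := by linarith
  refine ⟨zpow_right_injective₀ (by norm_num) (by norm_num) e3, ?_⟩
  rw [e3] at e1; linarith

lemma Germ.E (p : ℝ) (n : ℤ) : Germ (E p n) n (p - 2 ^ n * p) := by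
  filter_upwards [eventually_ge_atTop p] with x hx
  rw [E_ge n hx]; ring

lemma Ab_germ {f : Hm} (hf : f ∈ Ab) : ∃ k c, Germ f k c := by
  obtain ⟨k, c, M, h⟩ := aff_top hf.1
  exact ⟨k, c, eventually_atTop.2 ⟨M, h⟩⟩

lemma mem_Lc {f : Hm} : f ∈ Lc ↔ f ∈ Ab ∧ Germ f 0 0 := by
  simp [Lc, Subgroup.mem_inf, Germ, mem_evId]

lemma Ab_gen {f : Hm} (hf : f ∈ Ab) :
    f ∈ Subgroup.closure {g | ∃ p n, IsDyadic p ∧ g = E p n} := by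
  obtain ⟨M, h⟩ := eventually_atBot.1 (mem_evId.1 hf.2)
  exact gen hf.1 ⟨M, h⟩

lemma dy_gt (M : ℝ) : ∃ q, IsDyadic q ∧ M < q := by
  obtain ⟨z, h, h1, _⟩ := dy_dense (show M < M + 1 by linarith)
  exact ⟨z, h, h1⟩

/-- the map `E r 1 * E r' (-1)` is a translation near infinity -/
lemma germ_tt (r r' : ℝ) : Germ (E r 1 * E r' (-1)) 0 (r' - r) := by
  have h := (Germ.E r 1).mul (Germ.E r' (-1))
  convert h using 1
  norm_num; ring

lemma tt_Ab {r r' : ℝ} (hr : IsDyadic r) (hr' : IsDyadic r') : E r 1 * E r' (-1) ∈ Ab :=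
  mul_mem (E_Ab hr 1) (E_Ab hr' (-1))

lemma cutoff {a : Hm} (ha : a ∈ Ab) : ∀ M, ∃ b ∈ Lc, ∀ x ≤ M, b x = a x := by
  have := Ab_gen ha
  clear ha
  induction this using Subgroup.closure_induction with
  | mem g hg =>
    obtain ⟨p, n, hp, rfl⟩ := hg
    intro M
    obtain ⟨q, hq, hMq⟩ := dy_gt (E p n M)
    set u := (q - p) * (1 - 2 ^ (-n)) with hu
    have hud : IsDyadic u := dy_mul (dy_sub hq hp) (dy_sub dy_one (dy_pow _))
    obtain ⟨r, hr, hMr⟩ := dy_gt (max (E p n M) (E p n M + u))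
    have h1 := (le_max_left _ _).trans_lt hMr
    have h2 := (le_max_right _ _).trans_lt hMr
    refine ⟨(E r 1 * E (r - u) (-1)) * (E q (-n) * E p n), mem_Lc.2 ⟨?_, ?_⟩, ?_⟩
    · exact mul_mem (tt_Ab hr (dy_sub hr hud)) (mul_mem (E_Ab hq _) (E_Ab hp _))
    · have h := (germ_tt r (r - u)).mul ((Germ.E q (-n)).mul (Germ.E p n))
      convert h using 1
      · ring
      · have : (2 : ℝ) ^ (-n) * 2 ^ n = 1 := by
          rw [← zpow_add₀ (by norm_num)]; simp
        rw [hu]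
        simp only [zpow_zero, one_mul]
        linear_combination p * this
    · intro x hx
      have : E p n x ≤ E p n M := (E p n).monotone hx
      simp only [mul_app]
      rw [E_le (p := q) _ (by linarith), E_le (p := r - u) _ (by linarith),
        E_le (p := r) _ (by linarith)]
  | one => exact fun M => ⟨1, one_mem _, fun _ _ => rfl⟩
  | mul a b _ _ iha ihb =>
    intro M
    obtain ⟨b', hb', h1⟩ := ihb M
    obtain ⟨a', ha', h2⟩ := iha (b M)
    refine ⟨a' * b', mul_mem ha' hb', fun x hx => ?_⟩
    rw [mul_app, mul_app, h1 x hx, h2 _ (b.monotone hx)]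
  | inv a _ iha =>
    intro M
    obtain ⟨a', ha', h2⟩ := iha (a⁻¹ M)
    refine ⟨a'⁻¹, inv_mem ha', fun x hx => ?_⟩
    have := h2 (a⁻¹ x) (a⁻¹.monotone hx)
    rw [app_inv] at this
    exact inv_eq_of this

lemma conj_cut {a l : Hm} (ha : a ∈ Ab) (hl : l ∈ Lc) :
    ∃ b ∈ Lc, a * l * a⁻¹ = b * l * b⁻¹ := by
  obtain ⟨M, hM⟩ := eventually_atTop.1 (mem_evId.1 hl.2)
  obtain ⟨b, hb, hab⟩ := cutoff ha M
  refine ⟨b, hb, ?_⟩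
  ext x
  simp only [mul_app]
  obtain ⟨y, rfl⟩ := a.surjective x
  rw [inv_app]
  rcases le_total y M with h | h
  · have h1 : b⁻¹ (a y) = y := inv_eq_of (hab y h)
    rw [h1]
    have h2 : l y ≤ l M := l.monotone h
    rw [hM M le_rfl] at h2
    exact (hab _ h2).symm
  · rw [hM y h]
    have h1 : a M ≤ a y := a.monotone h
    have h2 : b⁻¹ (a M) = M := inv_eq_of (hab M le_rfl)
    have h3 := b⁻¹.monotone h1
    rw [h2] at h3
    rw [hM _ h3, app_inv]

/-! the quotient -/

abbrev LA : Subgroup Ab := Lc.subgroupOf Ab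

lemma mem_LA {a : Ab} : a ∈ LA ↔ Germ (a : Hm) 0 0 := by
  rw [Subgroup.mem_subgroupOf, mem_Lc]; simp

instance LA_normal : LA.Normal where
  conj_mem := by
    intro l hl a
    rw [mem_LA] at hl ⊢
    obtain ⟨k, c, h⟩ := Ab_germ a.2
    have := (h.mul hl).mul h.inv
    have e : (2 : ℝ) ^ k * 2 ^ (-k) = 1 := by rw [← zpow_add₀ (by norm_num)]; simp
    have e2 : (0 : ℝ) = 2 ^ (k + 0) * (-2 ^ (-k) * c) + (2 ^ k * 0 + c) := by
      rw [add_zero]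
      linear_combination c * e
    rw [← e2, add_zero, add_neg_cancel] at this
    exact this

abbrev NA : Subgroup Ab := ⁅LA, LA⁆

abbrev QA := Ab ⧸ NA

def pq : Ab →* QA := QuotientGroup.mk' NA

lemma pq_one {a : Ab} : pq a = 1 ↔ a ∈ NA := QuotientGroup.eq_one_iff a

lemma pq_comm {a l : Ab} (hl : l ∈ LA) : Commute (pq a) (pq l) := by
  obtain ⟨b, hb, h⟩ := conj_cut a.2 (Subgroup.mem_subgroupOf.1 hl)
  have hbA : b ∈ Ab := hb.1
  have h1 : a * l * a⁻¹ = (⟨b, hbA⟩ : Ab) * l * (⟨b, hbA⟩ : Ab)⁻¹ := Subtype.ext h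
  have h2 : pq ⁅(⟨b, hbA⟩ : Ab), l⁆ = 1 := pq_one.2
    (Subgroup.commutator_mem_commutator (Subgroup.mem_subgroupOf.2 hb) hl)
  rw [commutatorElement_def, ← h1] at h2
  rw [← commutatorElement_eq_one_iff_commute, commutatorElement_def]
  simpa using h2

def IsT (t : Ab) : Prop := ∃ c, Germ (t : Hm) 0 c

lemma IsT.mul {t t' : Ab} (h : IsT t) (h' : IsT t') : IsT (t * t') := by
  obtain ⟨c, hc⟩ := h
  obtain ⟨d, hd⟩ := h'
  exact ⟨_, by simpa using hc.mul hd⟩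

lemma IsT.inv {t : Ab} (h : IsT t) : IsT t⁻¹ := by
  obtain ⟨c, hc⟩ := h
  exact ⟨_, by simpa using hc.inv⟩

lemma IsT.conj {t : Ab} (h : IsT t) (a : Ab) : IsT (a * t * a⁻¹) := by
  obtain ⟨c, hc⟩ := h
  obtain ⟨k, d, hk⟩ := Ab_germ a.2
  exact ⟨_, by simpa using (hk.mul hc).mul hk.inv⟩

lemma germ_dy {f : Hm} (hf : f ∈ PL) {c : ℝ} (h : Germ f 0 c) : IsDyadic c := by
  obtain ⟨M, hM⟩ := eventually_atTop.1 h
  obtain ⟨q, hq, hMq⟩ := dy_gt M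
  have h1 := hM q hMq.le
  have h2 := (hf.1 q).2 hq
  rw [h1] at h2
  simpa using dy_sub h2 hq

lemma germ_pow {f : Hm} {u : ℝ} (h : Germ f 0 u) (m : ℤ) : Germ (f ^ m) 0 (m * u) := by
  induction m using Int.induction_on with
  | zero => simpa using Germ.one
  | succ i ih =>
    rw [zpow_add_one]
    have := ih.mul h
    convert this using 1
    push_cast; simp; ring
  | pred i ih =>
    rw [zpow_sub_one]
    have := ih.mul h.inv
    convert this using 1
    push_cast; simp; ring

lemma T_comm {t t' : Ab} (h : IsT t) (h' : IsT t') : Commute (pq t) (pq t') := by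
  obtain ⟨c, hc⟩ := h
  obtain ⟨d, hd⟩ := h'
  obtain ⟨m, k, hcd⟩ := germ_dy t.2.1 hc
  obtain ⟨m', k', hdd⟩ := germ_dy t'.2.1 hd
  set u : ℝ := 1 / 2 ^ (k + k') with hu
  have hud : IsDyadic u := ⟨1, k + k', by simp [hu]⟩
  set t1 : Ab := ⟨E 0 1 * E u (-1), tt_Ab dy_zero hud⟩
  have ht1 : Germ (t1 : Hm) 0 u := by simpa using germ_tt 0 u
  have key : ∀ (t : Ab) (c : ℝ) (m : ℤ), Germ (t : Hm) 0 c → c = m * u →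
      ∃ l ∈ LA, t = l * t1 ^ m := by
    intro t c m h e
    refine ⟨t * (t1 ^ m)⁻¹, ?_, by simp⟩
    rw [mem_LA]
    have := h.mul (germ_pow ht1 m).inv
    rw [e] at this
    simpa using this
  obtain ⟨l, hl, e⟩ := key t c (m * 2 ^ k') hc (by rw [hcd, hu]; push_cast; rw [pow_add]; field_simp)
  obtain ⟨l', hl', e'⟩ := key t' d (m' * 2 ^ k) hd
    (by rw [hdd, hu]; push_cast; rw [pow_add]; field_simp)
  rw [e, e', map_mul, map_mul, map_zpow, map_zpow]
  refine Commute.mul_left ?_ (Commute.mul_right ?_ ?_)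
  · rw [← map_zpow, ← map_mul]; exact (pq_comm hl).symm
  · rw [← map_zpow]; exact (pq_comm hl')
  · exact (Commute.refl (pq t1)).zpow_zpow _ _

noncomputable def eA (p : ℝ) (hp : IsDyadic p) : Ab := ⟨E p 1, E_Ab hp 1⟩
noncomputable def e0 : Ab := eA 0 dy_zero

lemma s_mul {t t' : Ab} (h : IsT t) (h' : IsT t') :
    pq ⁅e0, t * t'⁆ = pq ⁅e0, t⁆ * pq ⁅e0, t'⁆ := by
  have e : ⁅e0, t * t'⁆ = (e0 * t * e0⁻¹) * ((e0 * t' * e0⁻¹) * t'⁻¹) * t⁻¹ := by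
    simp only [commutatorElement_def]; group
  have e2 : ⁅e0, t⁆ = (e0 * t * e0⁻¹) * t⁻¹ := by
    simp only [commutatorElement_def]
  have e3 : ⁅e0, t'⁆ = (e0 * t' * e0⁻¹) * t'⁻¹ := by
    simp only [commutatorElement_def]
  rw [e, e2, e3, map_mul, map_mul, map_mul _ _ t⁻¹]
  have := T_comm ((h'.conj e0).mul h'.inv) h.inv
  rw [mul_assoc, this.eq, ← mul_assoc]

lemma s_inv {t : Ab} (h : IsT t) : pq ⁅e0, t⁻¹⁆ = (pq ⁅e0, t⁆)⁻¹ := by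
  have := s_mul h h.inv
  rw [mul_inv_cancel, commutatorElement_one_right, map_one] at this
  exact (inv_eq_of_mul_eq_one_right this.symm).symm

def SQ (q : QA) : Prop := ∃ t, IsT t ∧ q = pq ⁅e0, t⁆

lemma SQ.mul {q r : QA} (hq : SQ q) (hr : SQ r) : SQ (q * r) := by
  obtain ⟨t, ht, rfl⟩ := hq
  obtain ⟨t', ht', rfl⟩ := hr
  exact ⟨_, ht.mul ht', (s_mul ht ht').symm⟩

lemma SQ.inv {q : QA} (hq : SQ q) : SQ q⁻¹ := by
  obtain ⟨t, ht, rfl⟩ := hq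
  exact ⟨_, ht.inv, (s_inv ht).symm⟩

lemma SQ.conj {q : QA} (hq : SQ q) (k : ℤ) : SQ (pq e0 ^ k * q * (pq e0 ^ k)⁻¹) := by
  obtain ⟨t, ht, rfl⟩ := hq
  refine ⟨_, ht.conj (e0 ^ k), ?_⟩
  rw [← map_zpow, ← map_inv, ← map_mul, ← map_mul]
  congr 1
  simp only [commutatorElement_def]
  have h : Commute e0 (e0 ^ k) := (Commute.refl e0).zpow_right k
  have h1 : e0 * (e0 ^ k * t * (e0 ^ k)⁻¹) * e0⁻¹ = e0 ^ k * (e0 * t * e0⁻¹) * (e0 ^ k)⁻¹ := by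
    group
  rw [h1]; group

lemma e_conj {p q : ℝ} (hp : IsDyadic p) (hq : IsDyadic q) (h : p < q) (hr : IsDyadic (2 * q - p)) :
    eA p hp * eA q hq * (eA p hp)⁻¹ = eA (2 * q - p) hr := by
  rw [mul_inv_eq_iff_eq_mul]
  apply Subtype.ext
  change E p 1 * E q 1 = E (2 * q - p) 1 * E p 1
  ext x
  simp only [mul_app]
  rcases le_total x q with h1 | h1
  · rw [E_le _ h1]
    rcases le_total x p with h2 | h2
    · rw [E_le _ h2, E_le _ (by linarith)]
    · rw [E_ge _ h2, E_le _ (by norm_num; linarith)]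
  · rw [E_ge _ h1, E_ge _ (by norm_num; linarith), E_ge (p := p) _ (by linarith),
      E_ge _ (by norm_num; linarith)]
    norm_num; ring

lemma d_T {q : ℝ} (hq : IsDyadic q) : IsT (eA q hq * e0⁻¹) := by
  refine ⟨0 - q, ?_⟩
  have := germ_tt q 0
  have e : ((eA q hq * e0⁻¹ : Ab) : Hm) = E q 1 * E 0 (-1) := by
    rw [← E_inv]; rfl
  rw [e]; exact this

lemma d_lt {q r : ℝ} (hq : IsDyadic q) (hr : IsDyadic r) (h : q < r) :
    SQ (pq (eA r hr * e0⁻¹) * (pq (eA q hq * e0⁻¹))⁻¹) := by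
  have hp : IsDyadic (2 * q - r) := dy_sub (by simpa using dy_mul (dy_int 2) hq) hr
  have hc := e_conj hp hq (by linarith) (by simpa using hr)
  have hc' : eA (2 * q - r) hp * eA q hq * (eA (2 * q - r) hp)⁻¹ = eA r hr := by
    rw [hc]; congr 1; ring
  set dq := eA q hq * e0⁻¹ with hdq
  set dp := eA (2 * q - r) hp * e0⁻¹ with hdp
  have T1 : IsT dq := d_T hq
  have T2 : IsT dp := d_T hp
  refine ⟨dq * dp⁻¹, T1.mul T2.inv, ?_⟩
  rw [← hc', ← map_inv, ← map_mul]
  have e1 : eA (2 * q - r) hp = dp * e0 := by simp [hdp]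
  have e2 : eA q hq = dq * e0 := by simp [hdq]
  rw [e1, e2]
  have e3 : dp * e0 * (dq * e0) * (dp * e0)⁻¹ * e0⁻¹ * dq⁻¹ =
      dp * (⁅e0, dq * dp⁻¹⁆ * (dq * dp⁻¹)) * dq⁻¹ := by
    simp only [commutatorElement_def]; group
  rw [e3]
  have T3 : IsT ⁅e0, dq * dp⁻¹⁆ := by
    rw [commutatorElement_def]
    exact ((T1.mul T2.inv).conj e0).mul (T1.mul T2.inv).inv
  have c1 := T_comm T2 T3
  have c2 := T_comm T2 T1
  simp only [map_mul, map_inv] at *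
  rw [← mul_assoc, ← mul_assoc, c1.eq, mul_assoc _ (pq dp) (pq dq), c2.eq]
  group

lemma d_S {q : ℝ} (hq : IsDyadic q) : SQ (pq (eA q hq * e0⁻¹)) := by
  have h0 : eA 0 dy_zero * e0⁻¹ = 1 := mul_inv_cancel _
  rcases lt_trichotomy q 0 with h | h | h
  · have := (d_lt hq dy_zero h).inv
    simpa [h0] using this
  · subst h
    rw [show eA 0 hq * e0⁻¹ = 1 from mul_inv_cancel _]
    exact ⟨1, ⟨0, Germ.one⟩, by simp⟩
  · have := d_lt dy_zero hq h
    simpa [h0] using this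

lemma SE_pow {q : ℝ} (hq : IsDyadic q) (n : ℤ) : ∃ (r : QA) (k : ℤ), SQ r ∧ pq (eA q hq) ^ n = r * pq e0 ^ k := by
  obtain hs := d_S hq
  have e : pq (eA q hq) = pq (eA q hq * e0⁻¹) * pq e0 := by simp
  rw [e]
  generalize pq (eA q hq * e0⁻¹) = d at hs
  refine ⟨(d * pq e0) ^ n * (pq e0 ^ n)⁻¹, n, ?_, by simp⟩
  induction n using Int.induction_on with
  | zero => exact ⟨1, ⟨0, Germ.one⟩, by simp⟩
  | succ i ih =>
    have := ih.mul (hs.conj i)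
    convert this using 1
    rw [zpow_add_one, zpow_add_one]; group
  | pred i ih =>
    have := ih.mul (hs.inv.conj (-i - 1))
    convert this using 1
    rw [zpow_sub_one, zpow_sub_one]; group

lemma SE {a : Hm} (ha : a ∈ Ab) : ∃ (r : QA) (k : ℤ), SQ r ∧ pq ⟨a, ha⟩ = r * pq e0 ^ k := by
  suffices ∃ h : a ∈ Ab, ∃ (r : QA) (k : ℤ), SQ r ∧ pq ⟨a, h⟩ = r * pq e0 ^ k from this.2
  have := Ab_gen ha
  clear ha
  induction this using Subgroup.closure_induction with
  | mem g hg =>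
    obtain ⟨p, n, hp, rfl⟩ := hg
    refine ⟨E_Ab hp n, ?_⟩
    have : (⟨E p n, E_Ab hp n⟩ : Ab) = eA p hp ^ n := Subtype.ext (E_pow p n)
    rw [this, map_zpow]; exact SE_pow hp n
  | one => exact ⟨one_mem _, 1, 0, ⟨1, ⟨0, Germ.one⟩, by simp⟩, by simp; exact map_one pq⟩
  | mul a b _ _ iha ihb =>
    obtain ⟨h1, r, k, hr, e⟩ := iha
    obtain ⟨h2, r', k', hr', e'⟩ := ihb
    refine ⟨mul_mem h1 h2, _, k + k', hr.mul (hr'.conj k), ?_⟩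
    have : (⟨a * b, mul_mem h1 h2⟩ : Ab) = ⟨a, h1⟩ * ⟨b, h2⟩ := rfl
    rw [this, map_mul, e, e', zpow_add]; group
  | inv a _ iha =>
    obtain ⟨h1, r, k, hr, e⟩ := iha
    refine ⟨inv_mem h1, _, -k, hr.inv.conj (-k), ?_⟩
    have : (⟨a⁻¹, inv_mem h1⟩ : Ab) = ⟨a, h1⟩⁻¹ := rfl
    rw [this, map_inv, e]; group

lemma Lc_perfect : Lc ≤ ⁅Lc, Lc⁆ := by
  intro f hf
  obtain ⟨hA, hg⟩ := mem_Lc.1 hf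
  obtain ⟨r, k, ⟨t, ⟨c, hc⟩, rfl⟩, e⟩ := SE hA
  set F : Ab := ⟨f, hA⟩ with hF
  have h1 : (⁅e0, t⁆ * e0 ^ k)⁻¹ * F ∈ NA := by
    rw [← pq_one, map_mul, map_inv, map_mul, map_zpow, e, inv_mul_cancel]
  have h2 : (⁅e0, t⁆ * e0 ^ k)⁻¹ * F ∈ LA := Subgroup.commutator_le_left _ _ h1
  have h3 : ⁅e0, t⁆ * e0 ^ k ∈ LA := by
    have hFL : F ∈ LA := mem_LA.2 hg
    have := mul_mem hFL (inv_mem h2)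
    simpa using this
  have g0 : Germ (e0 : Hm) 1 0 := by simpa [e0, eA] using Germ.E 0 1
  have gk : Germ ((e0 ^ k : Ab) : Hm) k 0 := by
    have : ((e0 ^ k : Ab) : Hm) = E 0 k := by rw [E_pow]; rfl
    rw [this]; simpa using Germ.E 0 k
  have g1 : Germ ((⁅e0, t⁆ : Ab) : Hm) 0 c := by
    have := ((g0.mul hc).mul g0.inv).mul hc.inv
    rw [commutatorElement_def]
    have e2 : c = (2 : ℝ) ^ ((1 : ℤ) + 0 + -1) * (-2 ^ (-0 : ℤ) * c) +
        (2 ^ ((1 : ℤ) + 0) * (-2 ^ (-1 : ℤ) * 0) + (2 ^ (1 : ℤ) * c + 0)) := by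
      norm_num; ring
    rw [← e2] at this
    simpa using this
  have g2 := g1.mul gk
  obtain ⟨h4, h5⟩ := Germ.uniq (mem_LA.1 h3) g2
  have hk : k = 0 := by simpa using h4.symm
  have hc0 : c = 0 := by simpa using h5.symm
  subst hk; subst hc0
  have h6 : pq ⁅e0, t⁆ = 1 := by
    have := pq_comm (a := e0) (mem_LA.2 hc)
    rw [← commutatorElement_eq_one_iff_commute] at this
    rw [map_commutatorElement]; exact this
  rw [h6, zpow_zero, mul_one, pq_one] at e
  have h7 : f ∈ (NA).map Ab.subtype := ⟨F, e, rfl⟩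
  rw [Subgroup.map_commutator] at h7
  have h8 : LA.map Ab.subtype = Lc := by
    rw [Subgroup.subgroupOf_map_subtype]
    exact inf_eq_left.2 inf_le_left
  rwa [h8] at h7

end QM

namespace QM
open Filter
open scoped commutatorElement

/-! ### The group `Fc` of maps compactly supported in `(-1/2, 1/2)` -/

/-- PL maps supported in `[-R, R]` -/
def LR (R : ℝ) : Subgroup Hm where
  carrier := {f | f ∈ PL ∧ ∀ x, R ≤ |x| → f x = x}
  one_mem' := ⟨one_mem _, fun _ _ => rfl⟩
  mul_mem' := by
    rintro f g ⟨h1, h2⟩ ⟨h3, h4⟩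
    exact ⟨mul_mem h1 h3, fun x hx => by rw [mul_app, h4 x hx, h2 x hx]⟩
  inv_mem' := by
    rintro f ⟨h1, h2⟩
    exact ⟨inv_mem h1, fun x hx => inv_fix (h2 x hx)⟩

lemma mem_LR {R : ℝ} {f : Hm} : f ∈ LR R ↔ f ∈ PL ∧ ∀ x, R ≤ |x| → f x = x := Iff.rfl

lemma LR_mono {R R' : ℝ} (h : R ≤ R') : LR R ≤ LR R' :=
  fun _ hf => ⟨hf.1, fun x hx => hf.2 x (h.trans hx)⟩

lemma Lc_iff {f : Hm} : f ∈ Lc ↔ ∃ R, f ∈ LR R := by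
  constructor
  · rintro ⟨⟨h1, h2⟩, h3⟩
    obtain ⟨M, hM⟩ := eventually_atBot.1 (mem_evId.1 h2)
    obtain ⟨M', hM'⟩ := eventually_atTop.1 (mem_evId.1 h3)
    refine ⟨max (-M) M', h1, fun x hx => ?_⟩
    have ha := (le_max_left _ _).trans hx
    have hb := (le_max_right _ _).trans hx
    rcases le_total 0 x with h | h
    · rw [abs_of_nonneg h] at hb; exact hM' x hb
    · rw [abs_of_nonpos h] at ha; exact hM x (by linarith)
  · rintro ⟨R, h1, h2⟩
    refine ⟨⟨h1, ?_⟩, ?_⟩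
    · exact eventually_atBot.2 ⟨-R, fun x hx => h2 x (by linarith [neg_le_abs x])⟩
    · exact eventually_atTop.2 ⟨R, fun x hx => h2 x (by linarith [le_abs_self x])⟩

def Fc : Subgroup Hm where
  carrier := {f | ∃ r, r < 1 / 2 ∧ f ∈ LR r}
  one_mem' := ⟨0, by norm_num, one_mem _⟩
  mul_mem' := by
    rintro f g ⟨r, h1, h2⟩ ⟨r', h3, h4⟩
    exact ⟨max r r', max_lt h1 h3, mul_mem (LR_mono (le_max_left _ _) h2)
      (LR_mono (le_max_right _ _) h4)⟩
  inv_mem' := by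
    rintro f ⟨r, h1, h2⟩
    exact ⟨r, h1, inv_mem h2⟩

lemma mem_Fc {f : Hm} : f ∈ Fc ↔ ∃ r, r < 1 / 2 ∧ f ∈ LR r := Iff.rfl

lemma Fc_r {f : Hm} (h : f ∈ Fc) : ∃ r, 0 < r ∧ r < 1 / 2 ∧ f ∈ LR r := by
  obtain ⟨r, h1, h2⟩ := h
  exact ⟨max r (1 / 4), lt_max_of_lt_right (by norm_num), max_lt h1 (by norm_num),
    LR_mono (le_max_left _ _) h2⟩

lemma mir_LR {R : ℝ} {f : Hm} (h : f ∈ LR R) : mir f ∈ LR R :=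
  ⟨mir_PL h.1, fun x hx => by rw [mir_app, h.2 (-x) (by rwa [abs_neg]), neg_neg]⟩

lemma mir_Fc {f : Hm} (h : f ∈ Fc) : mir f ∈ Fc := by
  obtain ⟨r, h1, h2⟩ := h
  exact ⟨r, h1, mir_LR h2⟩

lemma sg_Fc {f : Hm} (ε : ℤ) (h : f ∈ Fc) : sg ε f ∈ Fc := by
  unfold sg
  split_ifs
  · exact h
  · exact mir_Fc h

lemma comm_LR {g : Hm} (hg : g ∈ ⁅Lc, Lc⁆) : ∃ R, g ∈ ⁅LR R, LR R⁆ := by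
  rw [Subgroup.commutator_def] at hg
  have mono : ∀ {R R' : ℝ}, R ≤ R' → ⁅LR R, LR R⁆ ≤ ⁅LR R', LR R'⁆ := fun h =>
    Subgroup.commutator_mono (LR_mono h) (LR_mono h)
  induction hg using Subgroup.closure_induction with
  | mem g hg =>
    obtain ⟨a, ha, b, hb, rfl⟩ := hg
    obtain ⟨R, hR⟩ := Lc_iff.1 ha
    obtain ⟨R', hR'⟩ := Lc_iff.1 hb
    exact ⟨max R R', Subgroup.commutator_mem_commutator (LR_mono (le_max_left _ _) hR)
      (LR_mono (le_max_right _ _) hR')⟩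
  | one => exact ⟨0, one_mem _⟩
  | mul a b _ _ iha ihb =>
    obtain ⟨R, hR⟩ := iha
    obtain ⟨R', hR'⟩ := ihb
    exact ⟨max R R', mul_mem (mono (le_max_left _ _) hR) (mono (le_max_right _ _) hR')⟩
  | inv a _ iha =>
    obtain ⟨R, hR⟩ := iha
    exact ⟨R, inv_mem hR⟩

lemma squeeze {r R : ℝ} (hr0 : 0 < r) (hr : r < 1 / 2) (hR : 1 ≤ R) : ∃ b ∈ PL,
    (∀ x, |x| ≤ r → b x = x) ∧ ∃ r' < 1 / 2, b R ≤ r' ∧ -r' ≤ b (-R) := by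
  obtain ⟨q, hq, h1, h2⟩ := dy_dense hr
  obtain ⟨k, hk⟩ := pow_unbounded_of_one_lt ((R - q) / (1 / 2 - q)) (show (1 : ℝ) < 2 by norm_num)
  have hq2 : 0 < 1 / 2 - q := by linarith
  rw [div_lt_iff₀ hq2] at hk
  have hp : (0 : ℝ) < 2 ^ k := by positivity
  have hz : ((2 : ℝ) ^ (-(k : ℤ))) * 2 ^ k = 1 := by
    rw [zpow_neg, zpow_natCast]; exact inv_mul_cancel₀ hp.ne'
  have hz0 : (0 : ℝ) < 2 ^ (-(k : ℤ)) := by positivity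
  have hlt : (2 : ℝ) ^ (-(k : ℤ)) * (R - q) < 1 / 2 - q := by
    have := mul_lt_mul_of_pos_left hk hz0
    rwa [← mul_assoc, hz, one_mul] at this
  have hpos : (0 : ℝ) < 2 ^ (-(k : ℤ)) * (R - q) := mul_pos hz0 (by linarith)
  refine ⟨E q (-k) * mir (E q (-k)), mul_mem (E_PL hq _) (mir_PL (E_PL hq _)), ?_, ?_⟩
  · intro x hx
    obtain ⟨h3, h4⟩ := abs_le.1 hx
    rw [mul_app, mir_app, E_le (x := -x) _ (by linarith), neg_neg, E_le _ (by linarith)]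
  · refine ⟨q + 2 ^ (-(k : ℤ)) * (R - q), by linarith, ?_, ?_⟩
    · rw [mul_app, mir_app, E_le (x := -R) _ (by linarith), neg_neg, E_ge _ (by linarith)]
    · rw [mul_app, mir_app, neg_neg, E_ge (x := R) _ (by linarith), E_le _ (by linarith)]

lemma Fc_perfect : Fc ≤ ⁅Fc, Fc⁆ := by
  intro f hf
  obtain ⟨r, hr0, hr, hfr⟩ := Fc_r hf
  obtain ⟨R, hR⟩ := comm_LR (Lc_perfect (Lc_iff.2 ⟨r, hfr⟩))
  have hR := Subgroup.commutator_mono (LR_mono (le_max_left R 1)) (LR_mono (le_max_left R 1)) hR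
  obtain ⟨b, hb, hbr, r', hr', hb1, hb2⟩ := squeeze hr0 hr (le_max_right R 1)
  generalize max R 1 = S at *
  have hi1 : b⁻¹ r = r := inv_fix (hbr r (by rw [abs_of_pos hr0]))
  have hi2 : b⁻¹ (-r) = -r := inv_fix (hbr (-r) (by rw [abs_neg, abs_of_pos hr0]))
  have e : b * f * b⁻¹ = f := by
    have hfr1 : f r = r := hfr.2 r (le_abs_self r)
    have hfr2 : f (-r) = -r := hfr.2 (-r) (by rw [abs_neg]; exact le_abs_self r)
    ext x
    simp only [mul_app]
    rcases le_total r |x| with h | h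
    · have : r ≤ |b⁻¹ x| := by
        rcases le_abs'.1 h with h | h
        · have := b⁻¹.monotone h
          rw [hi2] at this
          linarith [neg_le_abs (b⁻¹ x)]
        · have := b⁻¹.monotone h
          rw [hi1] at this
          linarith [le_abs_self (b⁻¹ x)]
      rw [hfr.2 _ this, app_inv, hfr.2 _ h]
    · have h1 : b⁻¹ x = x := inv_fix (hbr x h)
      obtain ⟨h3, h4⟩ := abs_le.1 h
      rw [h1]
      apply hbr
      have h5 := f.monotone h3
      have h6 := f.monotone h4
      rw [hfr2] at h5
      rw [hfr1] at h6
      exact abs_le.2 ⟨h5, h6⟩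
  have h1 : (MulAut.conj b) f ∈ (⁅LR S, LR S⁆).map (MulAut.conj b).toMonoidHom := ⟨f, hR, rfl⟩
  rw [Subgroup.map_commutator, MulAut.conj_apply, e] at h1
  have h2 : (LR S).map (MulAut.conj b).toMonoidHom ≤ Fc := by
    rintro _ ⟨l, hl, rfl⟩
    change b * l * b⁻¹ ∈ Fc
    refine ⟨r', hr', mul_mem (mul_mem hb hl.1) (inv_mem hb), fun x hx => ?_⟩
    simp only [mul_app]
    rw [hl.2, app_inv]
    rcases le_abs'.1 hx with h | h
    · have := b⁻¹.monotone (h.trans hb2)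
      rw [inv_app] at this
      linarith [neg_le_abs (b⁻¹ x)]
    · have := b⁻¹.monotone (hb1.trans h)
      rw [inv_app] at this
      linarith [le_abs_self (b⁻¹ x)]
  exact Subgroup.commutator_mono h2 h2 h1

/-! ### Bumps and pushes -/

noncomputable def bump (p d : ℝ) : Hm := E p 1 * E (p + d) (-1) * E (p + 2 * d) (-1) * E (p + 4 * d) 1

lemma bump_PL {p d : ℝ} (hp : IsDyadic p) (hd : IsDyadic d) : bump p d ∈ PL := by
  have h2 : IsDyadic (2 * d) := by simpa using dy_mul (dy_int 2) hd
  have h4 : IsDyadic (4 * d) := by simpa using dy_mul (dy_int 4) hd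
  exact mul_mem (mul_mem (mul_mem (E_PL hp _) (E_PL (dy_add hp hd) _)) (E_PL (dy_add hp h2) _))
    (E_PL (dy_add hp h4) _)

lemma bump_le {p d x : ℝ} (hd : 0 < d) (h : x ≤ p) : bump p d x = x := by
  simp only [bump, mul_app]
  rw [E_le (x := x) _ (by linarith), E_le (x := x) _ (by linarith), E_le (x := x) _ (by linarith),
    E_le (x := x) _ (by linarith)]

lemma bump_1 {p d x : ℝ} (hd : 0 < d) (h : p ≤ x) (h2 : x ≤ p + d) :
    bump p d x = p + 2 * (x - p) := by
  simp only [bump, mul_app]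
  rw [E_le (x := x) _ (by linarith), E_le (x := x) _ (by linarith), E_le (x := x) _ (by linarith),
    E_ge (x := x) _ h]
  norm_num

lemma bump_2 {p d x : ℝ} (hd : 0 < d) (h : p + d ≤ x) (h2 : x ≤ p + 2 * d) :
    bump p d x = x + d := by
  simp only [bump, mul_app]
  rw [E_le (x := x) _ (by linarith), E_le (x := x) _ (by linarith), E_ge (x := x) _ h,
    E_ge (p := p) _ (by norm_num; linarith)]
  norm_num; ring

lemma bump_3 {p d x : ℝ} (hd : 0 < d) (h : p + 2 * d ≤ x) (h2 : x ≤ p + 4 * d) :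
    bump p d x = x + (p + 4 * d - x) / 2 := by
  simp only [bump, mul_app]
  rw [E_le (x := x) _ (by linarith), E_ge (x := x) _ h,
    E_ge (p := p + d) _ (by norm_num; linarith), E_ge (p := p) _ (by norm_num; linarith)]
  norm_num; ring

lemma bump_4 {p d x : ℝ} (hd : 0 < d) (h : p + 4 * d ≤ x) : bump p d x = x := by
  simp only [bump, mul_app]
  rw [E_ge (x := x) _ h, E_ge (p := p + 2 * d) _ (by norm_num; linarith),
    E_ge (p := p + d) _ (by norm_num; linarith), E_ge (p := p) _ (by norm_num; linarith)]
  norm_num; ring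

lemma bump_gt {p d x : ℝ} (hd : 0 < d) (h : p < x) (h2 : x < p + 4 * d) : x < bump p d x := by
  rcases le_total x (p + d) with h3 | h3
  · rw [bump_1 hd h.le h3]; linarith
  rcases le_total x (p + 2 * d) with h4 | h4
  · rw [bump_2 hd h3 h4]; linarith
  · rw [bump_3 hd h4 h2.le]; linarith

lemma iter_exists {f : Hm} {a b : ℝ} (hab : a ≤ b) (h : ∀ x ∈ Set.Icc a b, x < f x) :
    ∃ N : ℕ, b < (f ^ N) a := by
  by_contra hc
  push Not at hc
  obtain ⟨x0, hx0, hmin⟩ := isCompact_Icc.exists_isMinOn (Set.nonempty_Icc.2 hab)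
    ((f.continuous.sub continuous_id).continuousOn (s := Set.Icc a b))
  set ε := f x0 - x0 with hε
  have hε0 : 0 < ε := by have := h x0 hx0; linarith
  have key : ∀ N : ℕ, a + N * ε ≤ (f ^ N) a := by
    intro N
    induction N with
    | zero => simp [one_app]
    | succ n ih =>
      have hn : 0 ≤ n * ε := by positivity
      have h1 := hmin (show (f ^ n) a ∈ Set.Icc a b from ⟨by linarith, hc n⟩)
      simp only [Set.mem_ofPred_eq, Pi.sub_apply, id] at h1
      rw [pow_succ', mul_app]
      push_cast
      linarith
  obtain ⟨n, hn⟩ := exists_nat_gt ((b - a) / ε)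
  rw [div_lt_iff₀ hε0] at hn
  have := key n
  have := hc n
  linarith

lemma push_exists {r : ℝ} (hr0 : 0 < r) (hr : r < 1 / 2) :
    ∃ p ∈ Fc, r < p (-r) ∧ ∀ x, x ≤ p x := by
  obtain ⟨q, hq, h1, h2⟩ := dy_dense hr
  have hq0 : 0 < q / 2 := by linarith
  set B := bump (-q) (q / 2) with hB
  have hgt : ∀ x, -q < x → x < q → x < B x := fun x h3 h4 => bump_gt hq0 h3 (by linarith)
  have hfix : ∀ x, q ≤ |x| → B x = x := by
    intro x hx
    rcases le_abs'.1 hx with h | h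
    · exact bump_le hq0 h
    · exact bump_4 hq0 (by linarith)
  have hge : ∀ x, x ≤ B x := by
    intro x
    rcases lt_or_ge |x| q with h | h
    · rw [abs_lt] at h; exact (hgt x h.1 h.2).le
    · exact (hfix x h).ge
  obtain ⟨N, hN⟩ := iter_exists (f := B) (show -r ≤ r by linarith)
    (fun x hx => hgt x (by linarith [hx.1]) (by linarith [hx.2]))
  have hBF : B ∈ Fc := ⟨q, h2, bump_PL (dy_neg hq) (dy_half hq), hfix⟩
  refine ⟨B ^ N, pow_mem hBF N, hN, ?_⟩
  intro x
  clear hN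
  induction N with
  | zero => simp [one_app]
  | succ n ih => rw [pow_succ', mul_app]; exact ih.trans (hge _)

end QM

namespace QM
open scoped commutatorElement

/-! ### Positions -/

def Agr (J : Set ℝ) : Subgroup (Hm × Hm) where
  carrier := {p | (∀ x ∈ J, p.1 x = p.2 x) ∧ ∀ x, p.2 x ∈ J ↔ x ∈ J}
  one_mem' := ⟨fun _ _ => rfl, fun _ => Iff.rfl⟩
  mul_mem' := by
    rintro ⟨f, g⟩ ⟨f', g'⟩ ⟨h1, h2⟩ ⟨h3, h4⟩
    refine ⟨fun x hx => ?_, fun x => ?_⟩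
    · simp only [Prod.mk_mul_mk, mul_app] at *
      rw [h3 x hx, h1 _ ((h4 x).2 hx)]
    · simp only [Prod.mk_mul_mk, mul_app] at *
      rw [h2, h4]
  inv_mem' := by
    rintro ⟨f, g⟩ ⟨h1, h2⟩
    simp only at h1 h2
    have h3 : ∀ x, g⁻¹ x ∈ J ↔ x ∈ J := fun x => by rw [← h2, app_inv]
    refine ⟨fun x hx => ?_, h3⟩
    simp only [Prod.inv_mk]
    apply inv_eq_of
    rw [h1 _ ((h3 x).2 hx), app_inv]

lemma Agr_one {J : Set ℝ} {z : Hm} (h : ∀ x ∈ J, z x = x) : (z, (1 : Hm)) ∈ Agr J :=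
  ⟨h, fun _ => Iff.rfl⟩

lemma Agr_comm {J : Set ℝ} {z z' u u' : Hm} (h : (z, u) ∈ Agr J) (h' : (z', u') ∈ Agr J) :
    (⁅z, z'⁆, ⁅u, u'⁆) ∈ Agr J :=
  mul_mem (mul_mem (mul_mem h h') (inv_mem h)) (inv_mem h')

def Iv (m : ℤ) : Set ℝ := Set.Icc (((m : ℝ) - 1) / 2) (((m : ℝ) + 1) / 2)

lemma pres_Icc {f : Hm} {a b : ℝ} (ha : f a = a) (hb : f b = b) (x : ℝ) :
    f x ∈ Set.Icc a b ↔ x ∈ Set.Icc a b := by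
  have h1 : a ≤ f x ↔ a ≤ x := by
    conv_lhs => rw [← ha]
    exact f.le_iff_le
  have h2 : f x ≤ b ↔ x ≤ b := by
    conv_lhs => rw [← hb]
    exact f.le_iff_le
  rw [Set.mem_Icc, Set.mem_Icc, h1, h2]

lemma tile (c : ℤ) (x : ℝ) : ∃ m : ℤ, m % 2 = c % 2 ∧ x ∈ Iv m := by
  refine ⟨c + 2 * ⌊x - (c - 1) / 2⌋, by omega, ?_⟩
  have h1 := Int.floor_le (x - ((c : ℝ) - 1) / 2)
  have h2 := Int.lt_floor_add_one (x - ((c : ℝ) - 1) / 2)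
  constructor
  · push_cast; linarith
  · push_cast; linarith

/-- maps fixing the complement of the open interval `(-1/2, 1/2)` -/
def FO : Subgroup Hm where
  carrier := {f | ∀ x, x ∉ Set.Ioo (-(1 / 2) : ℝ) (1 / 2) → f x = x}
  one_mem' := fun _ _ => rfl
  mul_mem' := by
    intro f g hf hg x hx
    rw [mul_app, hg x hx, hf x hx]
  inv_mem' := by
    intro f hf x hx
    exact inv_fix (hf x hx)

lemma mem_FO {f : Hm} : f ∈ FO ↔ ∀ x, x ∉ Set.Ioo (-(1 / 2) : ℝ) (1 / 2) → f x = x := Iff.rfl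

lemma FO_abs {f : Hm} (h : f ∈ FO) {x : ℝ} (hx : 1 / 2 ≤ |x|) : f x = x := by
  apply h
  rintro ⟨h1, h2⟩
  exact absurd (abs_lt.2 ⟨h1, h2⟩) (not_lt.2 hx)

lemma Fc_FO {f : Hm} (h : f ∈ Fc) : f ∈ FO := by
  obtain ⟨r, hr, hf⟩ := h
  intro x hx
  apply hf.2
  by_contra hc
  have h2 := abs_lt.1 ((not_le.1 hc).trans hr)
  exact hx ⟨h2.1, h2.2⟩

noncomputable def loc (m ε : ℤ) : Hm →* Hm := (tr ((m : ℝ) / 2)).comp (sg ε)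

lemma loc_app (m : ℤ) {ε : ℤ} (h : ε = 1 ∨ ε = -1) (f : Hm) (x : ℝ) :
    loc m ε f x = m / 2 + ε * f (ε * (x - m / 2)) := by
  change tr _ (sg ε f) x = _
  rw [tr_app, sg_app h]

open Classical in
noncomputable def locE (s : ℤ → ℤ) (E : Set ℤ) (m : ℤ) : Hm →* Hm :=
  if m ∈ E then loc m (s m) else 1

lemma locE_in {s : ℤ → ℤ} {E : Set ℤ} {m : ℤ} (h : m ∈ E) : locE s E m = loc m (s m) := if_pos h
lemma locE_out {s : ℤ → ℤ} {E : Set ℤ} {m : ℤ} (h : m ∉ E) : locE s E m = 1 := if_neg h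

def Sgp (s : ℤ → ℤ) (c : ℤ) (E : Set ℤ) : Subgroup (Hm × Hm) where
  carrier := {p | p.1 ∈ FO ∧ ∀ m : ℤ, m % 2 = c % 2 → (p.2, locE s E m p.1) ∈ Agr (Iv m)}
  one_mem' := ⟨one_mem _, fun m _ => by
    change ((1 : Hm), locE s E m 1) ∈ _
    rw [map_one]; exact one_mem (Agr (Iv m))⟩
  mul_mem' := by
    rintro ⟨f, z⟩ ⟨f', z'⟩ ⟨h1, h2⟩ ⟨h3, h4⟩
    refine ⟨mul_mem h1 h3, fun m hm => ?_⟩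
    change (z * z', locE s E m (f * f')) ∈ _
    rw [map_mul]; exact mul_mem (h2 m hm) (h4 m hm)
  inv_mem' := by
    rintro ⟨f, z⟩ ⟨h1, h2⟩
    refine ⟨inv_mem h1, fun m hm => ?_⟩
    change (z⁻¹, locE s E m f⁻¹) ∈ _
    rw [map_inv]; exact inv_mem (h2 m hm)

lemma loc_pres {f : Hm} (hf : f ∈ FO) (m : ℤ) {ε : ℤ} (h : ε = 1 ∨ ε = -1) (x : ℝ) :
    loc m ε f x ∈ Iv m ↔ x ∈ Iv m := by
  have f1 : f (1 / 2) = 1 / 2 := hf _ (by simp)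
  have f2 : f (-(1 / 2)) = -(1 / 2) := hf _ (by simp)
  apply pres_Icc
  · rw [loc_app m h]
    rcases h with rfl | rfl
    · rw [show (((1 : ℤ) : ℝ) * (((m : ℝ) - 1) / 2 - m / 2)) = -(1 / 2) by push_cast; ring, f2]
      push_cast; ring
    · rw [show (((-1 : ℤ) : ℝ) * (((m : ℝ) - 1) / 2 - m / 2)) = (1 / 2) by push_cast; ring, f1]
      push_cast; ring
  · rw [loc_app m h]
    rcases h with rfl | rfl
    · rw [show (((1 : ℤ) : ℝ) * (((m : ℝ) + 1) / 2 - m / 2)) = (1 / 2) by push_cast; ring, f1]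
      push_cast; ring
    · rw [show (((-1 : ℤ) : ℝ) * (((m : ℝ) + 1) / 2 - m / 2)) = -(1 / 2) by push_cast; ring, f2]
      push_cast; ring

def PM (s : ℤ → ℤ) : Prop := ∀ m, s m = 1 ∨ s m = -1

lemma locE_Agr {s : ℤ → ℤ} (hs : PM s) {f : Hm} (hf : f ∈ FO) (E : Set ℤ) (m : ℤ) {z : Hm}
    (h : ∀ x ∈ Iv m, z x = locE s E m f x) : (z, locE s E m f) ∈ Agr (Iv m) := by
  refine ⟨h, fun x => ?_⟩
  by_cases hm : m ∈ E
  · simp only [locE_in hm]; exact loc_pres hf m (hs m) x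
  · simp only [locE_out hm]; rfl

lemma Sgp_mk {s : ℤ → ℤ} (hs : PM s) {f : Hm} (hf : f ∈ FO) {c : ℤ} {E : Set ℤ} {z : Hm}
    (h1 : ∀ m : ℤ, m % 2 = c % 2 → m ∈ E → ∀ x ∈ Iv m, z x = loc m (s m) f x)
    (h2 : ∀ m : ℤ, m % 2 = c % 2 → m ∉ E → ∀ x ∈ Iv m, z x = x) : (f, z) ∈ Sgp s c E := by
  refine ⟨hf, fun m hm => locE_Agr hs hf E m ?_⟩
  by_cases hE : m ∈ E
  · rw [locE_in hE]; exact h1 m hm hE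
  · rw [locE_out hE]; exact h2 m hm hE

lemma Sgp_in {s : ℤ → ℤ} {f z : Hm} {c : ℤ} {E : Set ℤ} (h : (f, z) ∈ Sgp s c E) {m : ℤ}
    (hm : m % 2 = c % 2) (hE : m ∈ E) : (z, loc m (s m) f) ∈ Agr (Iv m) := by
  have := h.2 m hm
  rwa [locE_in hE] at this

lemma Sgp_out {s : ℤ → ℤ} {f z : Hm} {c : ℤ} {E : Set ℤ} (h : (f, z) ∈ Sgp s c E) {m : ℤ}
    (hm : m % 2 = c % 2) (hE : m ∉ E) : (z, (1 : Hm)) ∈ Agr (Iv m) := by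
  have := h.2 m hm
  rwa [locE_out hE] at this

lemma Sgp_uniq {s : ℤ → ℤ} {f z z' : Hm} {c : ℤ} {E : Set ℤ} (h : (f, z) ∈ Sgp s c E)
    (h' : (f, z') ∈ Sgp s c E) : z = z' := by
  ext x
  obtain ⟨m, hm, hx⟩ := tile c x
  rw [(h.2 m hm).1 x hx, (h'.2 m hm).1 x hx]

lemma Sgp_congr {s : ℤ → ℤ} {f z : Hm} {c c' : ℤ} {E E' : Set ℤ} (h : (f, z) ∈ Sgp s c E)
    (hc : c % 2 = c' % 2) (hE : ∀ m : ℤ, m % 2 = c % 2 → (m ∈ E ↔ m ∈ E')) :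
    (f, z) ∈ Sgp s c' E' := by
  refine ⟨h.1, fun m hm => ?_⟩
  have hm' : m % 2 = c % 2 := hm.trans hc.symm
  have := h.2 m hm'
  by_cases hmE : m ∈ E
  · rw [locE_in hmE] at this
    rwa [locE_in ((hE m hm').1 hmE)]
  · rw [locE_out hmE] at this
    rwa [locE_out (fun h => hmE ((hE m hm').2 h))]

lemma Agr_conj {J : Set ℝ} {z z' u u' : Hm} (h : (z, u) ∈ Agr J) (h' : (z', u') ∈ Agr J) :
    (z * z' * z⁻¹, u * u' * u⁻¹) ∈ Agr J :=
  mul_mem (mul_mem h h') (inv_mem h)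

lemma Sgp_conj {s : ℤ → ℤ} {f z g y : Hm} {c : ℤ} {E : Set ℤ} (h : (f, z) ∈ Sgp s c E)
    (h' : (g, y) ∈ Sgp s c Set.univ) : (g * f * g⁻¹, y * z * y⁻¹) ∈ Sgp s c E := by
  refine ⟨mul_mem (mul_mem h'.1 h.1) (inv_mem h'.1), fun m hm => ?_⟩
  have h1 := Sgp_in h' hm (Set.mem_univ m)
  by_cases hE : m ∈ E
  · have h2 := Sgp_in h hm hE
    simp only [locE_in hE, map_mul, map_inv]
    exact Agr_conj h1 h2
  · have h2 := Agr_conj h1 (Sgp_out h hm hE)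
    simp only [locE_out hE, MonoidHom.one_apply]
    simpa using h2

/-! ### Sets of positions that can be isolated inside `G` -/

def BB (G : Subgroup Hm) (s : ℤ → ℤ) (E : Set ℤ) : Prop :=
  ∀ c : ℤ, ∀ f ∈ Fc, ∃ z ∈ G, (f, z) ∈ Sgp s c E

lemma BB_of_comm {G : Subgroup Hm} {s : ℤ → ℤ} {E : Set ℤ}
    (h : ∀ c : ℤ, ∀ a ∈ Fc, ∀ b ∈ Fc, ∃ z ∈ G, (⁅a, b⁆, z) ∈ Sgp s c E) : BB G s E := by
  intro c f hf
  have h1 : Fc ≤ (Sgp s c E ⊓ G.comap (MonoidHom.snd Hm Hm)).map (MonoidHom.fst Hm Hm) := by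
    refine Fc_perfect.trans (Subgroup.commutator_le.2 ?_)
    intro a ha b hb
    obtain ⟨z, hz, hz'⟩ := h c a ha b hb
    exact ⟨(⁅a, b⁆, z), ⟨hz', hz⟩, rfl⟩
  obtain ⟨⟨f', z⟩, ⟨h2, h3⟩, rfl⟩ := h1 hf
  exact ⟨z, h3, h2⟩

lemma BB_inter {G : Subgroup Hm} {s : ℤ → ℤ} {E E' : Set ℤ} (h : BB G s E) (h' : BB G s E') :
    BB G s (E ∩ E') := by
  apply BB_of_comm
  intro c a ha b hb
  obtain ⟨z, hz, h1⟩ := h c a ha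
  obtain ⟨y, hy, h2⟩ := h' c b hb
  refine ⟨⁅z, y⁆, mul_mem (mul_mem (mul_mem hz hy) (inv_mem hz)) (inv_mem hy),
    mul_mem (mul_mem (mul_mem h1.1 h2.1) (inv_mem h1.1)) (inv_mem h2.1), fun m hm => ?_⟩
  have k1 := h1.2 m hm
  have k2 := h2.2 m hm
  simp only
  by_cases hE : m ∈ E
  · by_cases hE' : m ∈ E'
    · rw [locE_in (show m ∈ E ∩ E' from ⟨hE, hE'⟩), map_commutatorElement]
      rw [locE_in hE] at k1
      rw [locE_in hE'] at k2
      exact Agr_comm k1 k2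
    · rw [locE_out (fun h => hE' h.2)]
      rw [locE_out hE'] at k2
      simpa using Agr_comm k1 k2
  · rw [locE_out (fun h => hE h.1)]
    rw [locE_out hE] at k1
    simpa using Agr_comm k1 k2

lemma BB_compl {G : Subgroup Hm} {s : ℤ → ℤ} {E : Set ℤ} (h0 : BB G s Set.univ) (h : BB G s E) :
    BB G s Eᶜ := by
  intro c f hf
  obtain ⟨z, hz, h1⟩ := h0 c f hf
  obtain ⟨y, hy, h2⟩ := h c f hf
  refine ⟨z * y⁻¹, mul_mem hz (inv_mem hy), h1.1, fun m hm => ?_⟩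
  have k1 := Sgp_in h1 hm (Set.mem_univ m)
  by_cases hE : m ∈ E
  · have k2 := mul_mem k1 (inv_mem (Sgp_in h2 hm hE))
    have : m ∉ Eᶜ := fun h => h hE
    simp only [locE_out this]
    simpa using k2
  · have k2 := mul_mem k1 (inv_mem (Sgp_out h2 hm hE))
    simp only [locE_in (show m ∈ Eᶜ from hE)]
    simpa using k2

lemma BB_union {G : Subgroup Hm} {s : ℤ → ℤ} {E E' : Set ℤ} (h0 : BB G s Set.univ)
    (h : BB G s E) (h' : BB G s E') : BB G s (E ∪ E') := by
  have := BB_compl h0 (BB_inter (BB_compl h0 h) (BB_compl h0 h'))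
  rwa [Set.compl_inter, compl_compl, compl_compl] at this

lemma BB_empty {G : Subgroup Hm} {s : ℤ → ℤ} (h0 : BB G s Set.univ) : BB G s ∅ := by
  have := BB_compl h0 h0
  rwa [Set.compl_univ] at this

lemma BB_parity {G : Subgroup Hm} {s : ℤ → ℤ} (h0 : BB G s Set.univ) :
    BB G s {m | m % 2 = 0} := by
  intro c f hf
  rcases Int.emod_two_eq_zero_or_one c with hc | hc
  · obtain ⟨z, hz, h⟩ := h0 c f hf
    exact ⟨z, hz, Sgp_congr h rfl (by intro m hm; simp; omega)⟩
  · obtain ⟨z, hz, h⟩ := BB_empty h0 c f hf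
    exact ⟨z, hz, Sgp_congr h rfl (by intro m hm; simp; omega)⟩

lemma Sgp_neg {s : ℤ → ℤ} (hs : PM s) {f z : Hm} {c : ℤ} {E : Set ℤ} (h : (f, z) ∈ Sgp s c E) :
    (mir f, z) ∈ Sgp (-s) c E := by
  have hf : mir f ∈ FO := by
    intro x hx
    rw [mir_app, h.1 (-x), neg_neg]
    intro h; apply hx
    constructor <;> linarith [h.1, h.2]
  refine ⟨hf, fun m hm => ?_⟩
  by_cases hE : m ∈ E
  · have := Sgp_in h hm hE
    simp only [locE_in hE]
    have e : loc m ((-s) m) (mir f) = loc m (s m) f := by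
      ext x
      have h2 : (-s) m = 1 ∨ (-s) m = -1 := by
        rcases hs m with h | h <;> simp [h]
      rw [loc_app m h2, loc_app m (hs m), mir_app]
      simp
    rwa [e]
  · have := Sgp_out h hm hE
    simp only [locE_out hE]
    simpa using this

lemma PM_neg {s : ℤ → ℤ} (hs : PM s) : PM (-s) := by
  intro m
  rcases hs m with h | h <;> simp [h]

lemma mir_mir (f : Hm) : mir (mir f) = f := by
  ext x; simp [mir_app]

lemma BB_neg {G : Subgroup Hm} {s : ℤ → ℤ} (hs : PM s) {E : Set ℤ} (h : BB G s E) :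
    BB G (-s) E := by
  intro c f hf
  obtain ⟨z, hz, h1⟩ := h c (mir f) (mir_Fc hf)
  refine ⟨z, hz, ?_⟩
  have := Sgp_neg hs h1
  rwa [mir_mir] at this

end QM

namespace QM
open scoped commutatorElement

/-! ### Reading the neighbouring labels -/

/-- the half of `Iv m` in direction `ε` -/
def Hf (m ε : ℤ) : Set ℝ := {x | 0 ≤ ε * (x - m / 2) ∧ ε * (x - m / 2) ≤ 1 / 2}

lemma Hf_sub {m ε : ℤ} (h : ε = 1 ∨ ε = -1) {x : ℝ} (hx : x ∈ Hf m ε) : x ∈ Iv m := by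
  obtain ⟨h1, h2⟩ := hx
  rcases h with rfl | rfl
  · push_cast at h1 h2
    constructor <;> linarith
  · push_cast at h1 h2
    constructor <;> linarith

lemma Hf_next {m ε : ℤ} (h : ε = 1 ∨ ε = -1) {x : ℝ} (hx : x ∈ Hf m ε) : x ∈ Iv (m + ε) := by
  obtain ⟨h1, h2⟩ := hx
  rcases h with rfl | rfl
  · push_cast at h1 h2
    constructor <;> push_cast <;> linarith
  · push_cast at h1 h2
    constructor <;> push_cast <;> linarith

lemma Hf_cover {m ε : ℤ} (h : ε = 1 ∨ ε = -1) {x : ℝ} (hx : x ∈ Iv m) :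
    x ∈ Hf m ε ∨ x ∈ Hf m (-ε) := by
  obtain ⟨h1, h2⟩ := hx
  rcases le_total x (m / 2) with h3 | h3
  · rcases h with rfl | rfl
    · right; constructor <;> push_cast <;> linarith
    · left; constructor <;> push_cast <;> linarith
  · rcases h with rfl | rfl
    · left; constructor <;> push_cast <;> linarith
    · right; constructor <;> push_cast <;> linarith

lemma Hf_pres {u : Hm} {m ε : ℤ} (h : ε = 1 ∨ ε = -1) (h1 : u (m / 2) = m / 2)
    (h2 : u ((m + ε) / 2) = (m + ε) / 2) (x : ℝ) : u x ∈ Hf m ε ↔ x ∈ Hf m ε := by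
  rcases h with rfl | rfl
  · have e : Hf m 1 = Set.Icc ((m : ℝ) / 2) ((m + (1 : ℤ)) / 2) := by
      ext y; simp only [Hf, Set.mem_ofPred_eq, Set.mem_Icc]; push_cast
      constructor <;> rintro ⟨h1, h2⟩ <;> constructor <;> linarith
    rw [e]; exact pres_Icc h1 h2 x
  · have e : Hf m (-1) = Set.Icc (((m : ℝ) + ((-1 : ℤ) : ℝ)) / 2) ((m : ℝ) / 2) := by
      ext y; simp only [Hf, Set.mem_ofPred_eq, Set.mem_Icc]; push_cast
      constructor <;> rintro ⟨h1, h2⟩ <;> constructor <;> linarith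
    rw [e]; exact pres_Icc h2 h1 x

lemma Sgp_fix {s : ℤ → ℤ} (hs : PM s) {f z : Hm} {c : ℤ} {E : Set ℤ} (h : (f, z) ∈ Sgp s c E)
    (hf : f 0 = 0) (j : ℤ) : z (j / 2) = j / 2 := by
  obtain ⟨m, hm, hj⟩ := tile c ((j : ℝ) / 2)
  by_cases hE : m ∈ E
  · have := (Sgp_in h hm hE).1 _ hj
    rw [this]
    change loc m (s m) f (j / 2) = _
    rw [loc_app m (hs m)]
    have hcase : j = m - 1 ∨ j = m ∨ j = m + 1 := by
      obtain ⟨h1, h2⟩ := hj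
      have h3 : (m : ℝ) - 1 ≤ j := by linarith
      have h4 : (j : ℝ) ≤ m + 1 := by linarith
      have h3 : m - 1 ≤ j := by exact_mod_cast h3
      have h4 : j ≤ m + 1 := by exact_mod_cast h4
      omega
    have f1 : f (1 / 2) = 1 / 2 := h.1 _ (by simp)
    have f2 : f (-(1 / 2)) = -(1 / 2) := h.1 _ (by simp)
    rcases hs m with h5 | h5 <;> rw [h5] <;> rcases hcase with h6 | h6 | h6 <;>
      rw [h6] <;> push_cast
    · rw [show (1 : ℝ) * (((m : ℝ) - 1) / 2 - m / 2) = -(1 / 2) by ring, f2]; ring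
    · rw [show (1 : ℝ) * ((m : ℝ) / 2 - m / 2) = 0 by ring, hf]; ring
    · rw [show (1 : ℝ) * (((m : ℝ) + 1) / 2 - m / 2) = (1 / 2) by ring, f1]; ring
    · rw [show (-1 : ℝ) * (((m : ℝ) - 1) / 2 - m / 2) = (1 / 2) by ring, f1]; ring
    · rw [show (-1 : ℝ) * ((m : ℝ) / 2 - m / 2) = 0 by ring, hf]; ring
    · rw [show (-1 : ℝ) * (((m : ℝ) + 1) / 2 - m / 2) = -(1 / 2) by ring, f2]; ring
  · exact (Sgp_out h hm hE).1 _ hj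

/-- `g` is supported in `[u, v]` with `0 < u`, `v < 1/2` -/
def PosS (g : Hm) : Prop := g ∈ PL ∧ ∃ u v : ℝ, 0 < u ∧ v < 1 / 2 ∧ ∀ x, (x ≤ u ∨ v ≤ x) → g x = x

lemma PosS_Fc {g : Hm} (h : PosS g) : g ∈ Fc := by
  obtain ⟨h1, u, v, hu, hv, h2⟩ := h
  refine ⟨max v 0, max_lt hv (by norm_num), h1, fun x hx => h2 x ?_⟩
  have a := (le_max_left _ _).trans hx
  have b := (le_max_right _ _).trans hx
  rcases le_total 0 x with h | h
  · right; rwa [abs_of_nonneg h] at a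
  · left; linarith

lemma PosS_nb {g : Hm} (h : PosS g) {η : ℤ} (hη : η = 1 ∨ η = -1) :
    sg η (tr (-(1 / 2)) g) ∈ Fc ∧ sg η (tr (-(1 / 2)) g) 0 = 0 := by
  obtain ⟨h1, u, v, hu, hv, h2⟩ := h
  constructor
  · apply sg_Fc
    have hd : IsDyadic (-(1 / 2) : ℝ) := by
      have := dy_neg (dy_half dy_one); simpa using this
    refine ⟨max (1 / 2 - u) 0, max_lt (by linarith) (by norm_num), tr_PL hd h1, fun x hx => ?_⟩
    have a := (le_max_left _ _).trans hx
    rw [tr_app, h2]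
    · ring
    · rcases le_total 0 x with h | h
      · right; linarith
      · left; rw [abs_of_nonpos h] at a; linarith
  · rw [sg_app hη, tr_app, h2]
    · ring_nf
    · right; norm_num; linarith

lemma conj_Pos {r : ℝ} {p a : Hm} (hp : p ∈ Fc) (ha : a ∈ LR r) (hr0 : 0 < r) (hr : r < 1 / 2)
    (hpr : r < p (-r)) : PosS (p * a * p⁻¹) := by
  obtain ⟨t, ht, hpt⟩ := hp
  refine ⟨mul_mem (mul_mem hpt.1 ha.1) (inv_mem hpt.1), p (-r), p r, by linarith, ?_, ?_⟩
  · have h1 := p.strictMono hr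
    rwa [hpt.2 (1 / 2) (by rw [abs_of_pos (by norm_num)]; exact ht.le)] at h1
  · intro x hx
    simp only [mul_app]
    rw [ha.2, app_inv]
    rcases hx with h | h
    · have := p⁻¹.monotone h
      rw [inv_app] at this
      linarith [neg_le_abs (p⁻¹ x)]
    · have := p⁻¹.monotone h
      rw [inv_app] at this
      linarith [le_abs_self (p⁻¹ x)]

lemma sq_pm {e : ℤ} (h : e = 1 ∨ e = -1) : (e : ℝ) * e = 1 := by
  rcases h with rfl | rfl <;> norm_num

lemma front_comm {s : ℤ → ℤ} (hs : PM s) {E : Set ℤ} {η : ℤ} (hη : η = 1 ∨ η = -1) {c : ℤ}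
    {a b z1 z2 : Hm} (ha : PosS a) (hb : PosS b) (h1 : (a, z1) ∈ Sgp s c Set.univ)
    (h2 : (sg η (tr (-(1 / 2)) b), z2) ∈ Sgp s (c + 1) E) :
    (⁅a, b⁆, ⁅z1, z2⁆) ∈ Sgp s c {m | m + s m ∈ E ∧ s (m + s m) = η * s m} := by
  have hb' := PosS_nb hb hη
  have haF := Fc_FO (PosS_Fc ha)
  have hbF := Fc_FO (PosS_Fc hb)
  have hfix2 := Sgp_fix hs h2 hb'.2
  obtain ⟨haP, ua, va, hua, hva, hat⟩ := ha
  obtain ⟨hbP, ub, vb, hub, hvb, hbt⟩ := hb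
  have a0 : a 0 = 0 := hat _ (Or.inl hua.le)
  have ah : a (1 / 2) = 1 / 2 := hat _ (Or.inr hva.le)
  have b0 : b 0 = 0 := hbt _ (Or.inl hub.le)
  have bh : b (1 / 2) = 1 / 2 := hbt _ (Or.inr hvb.le)
  -- the back half
  have back : ∀ m : ℤ, m % 2 = c % 2 → ∀ x ∈ Hf m (-s m), ⁅z1, z2⁆ x = x := by
    intro m hm x hx
    have hε : -s m = 1 ∨ -s m = -1 := by rcases hs m with h | h <;> simp [h]
    have k1 : (z1, (1 : Hm)) ∈ Agr (Hf m (-s m)) := by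
      apply Agr_one
      intro y hy
      have := (Sgp_in h1 hm (Set.mem_univ m)).1 y (Hf_sub hε hy)
      rw [this]
      change loc m (s m) a y = y
      rw [loc_app m (hs m), hat]
      · have := sq_pm (hs m)
        linear_combination (y - m / 2) * this
      · left
        have := hy.1
        push_cast at this
        linarith
    have k2 : (z2, z2) ∈ Agr (Hf m (-s m)) := by
      refine ⟨fun _ _ => rfl, fun y => Hf_pres hε (hfix2 m) ?_ y⟩
      have := hfix2 (m + -s m)
      push_cast at this ⊢
      exact this
    have := (Agr_comm k1 k2).1 x hx
    simpa using this
  have locpres : ∀ g : Hm, g 0 = 0 → g (1 / 2) = 1 / 2 → ∀ m x,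
      loc m (s m) g x ∈ Hf m (s m) ↔ x ∈ Hf m (s m) := by
    intro g g0 gh m x
    apply Hf_pres (hs m)
    · rw [loc_app m (hs m), sub_self, mul_zero, g0]; ring
    · rw [loc_app m (hs m), show (s m : ℝ) * (((m : ℝ) + s m) / 2 - m / 2) = (s m * s m) / 2 by ring,
        sq_pm (hs m), gh]
      ring
  have front1 : ∀ m : ℤ, m % 2 = c % 2 → (z1, loc m (s m) a) ∈ Agr (Hf m (s m)) := by
    intro m hm
    exact ⟨fun x hx => (Sgp_in h1 hm (Set.mem_univ m)).1 x (Hf_sub (hs m) hx),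
      fun x => locpres a a0 ah m x⟩
  have par : ∀ m : ℤ, m % 2 = c % 2 → (m + s m) % 2 = (c + 1) % 2 := by
    intro m hm
    rcases hs m with h | h <;> rw [h] <;> omega
  have hcF : ⁅a, b⁆ ∈ FO := mul_mem (mul_mem (mul_mem haF hbF) (inv_mem haF)) (inv_mem hbF)
  refine Sgp_mk hs hcF ?_ ?_
  · rintro m hm ⟨hE, hη2⟩ x hx
    rcases Hf_cover (hs m) hx with hx | hx
    · have k2 : (z2, loc m (s m) b) ∈ Agr (Hf m (s m)) := by
        refine ⟨fun y hy => ?_, fun y => locpres b b0 bh m y⟩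
        have := (Sgp_in h2 (par m hm) hE).1 y (Hf_next (hs m) hy)
        rw [this]
        change loc _ _ _ y = loc m (s m) b y
        rw [loc_app _ (hs _), loc_app m (hs m), sg_app hη, tr_app, hη2]
        have e1 := sq_pm hη
        have e2 := sq_pm (hs m)
        have e3 : (η : ℝ) * (((η * s m : ℤ) : ℝ) * (y - ((m + s m : ℤ) : ℝ) / 2)) - -(1 / 2) =
            s m * (y - m / 2) := by
          push_cast
          linear_combination (s m * (y - (m + s m) / 2) : ℝ) * e1 - (1 / 2) * e2
        rw [e3]
        push_cast
        linear_combination (s m * (-(1 / 2) + b (s m * (y - m / 2))) : ℝ) * e1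
      have := (Agr_comm (front1 m hm) k2).1 x hx
      rw [this]
      rw [map_commutatorElement]
    · rw [back m hm x hx, loc_app m (hs m)]
      have hneg : (s m : ℝ) * (x - m / 2) ≤ 0 := by
        have := hx.1
        push_cast at this
        linarith
      have e : ⁅a, b⁆ ((s m : ℝ) * (x - m / 2)) = (s m : ℝ) * (x - m / 2) := by
        have fa : a ((s m : ℝ) * (x - m / 2)) = (s m : ℝ) * (x - m / 2) :=
          hat _ (Or.inl (by linarith))
        have fb : b ((s m : ℝ) * (x - m / 2)) = (s m : ℝ) * (x - m / 2) :=
          hbt _ (Or.inl (by linarith))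
        simp only [commutatorElement_def, mul_app]
        rw [inv_fix fb, inv_fix fa, fb, fa]
      rw [e]
      have := sq_pm (hs m)
      linear_combination (-(x - m / 2)) * this
  · intro m hm hE x hx
    rcases Hf_cover (hs m) hx with hx | hx
    · have k2 : (z2, (1 : Hm)) ∈ Agr (Hf m (s m)) := by
        apply Agr_one
        intro y hy
        by_cases hmE : m + s m ∈ E
        · have := (Sgp_in h2 (par m hm) hmE).1 y (Hf_next (hs m) hy)
          rw [this]
          change loc _ _ _ y = y
          have hη2 : s (m + s m) = -(η * s m) := by
            have hne : s (m + s m) ≠ η * s m := fun h => hE ⟨hmE, h⟩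
            rcases hs m with h | h <;> rcases hs (m + s m) with h' | h' <;> rcases hη with h'' | h'' <;>
              simp_all
          rw [loc_app _ (hs _), sg_app hη, tr_app, hη2]
          have e1 := sq_pm hη
          have e2 := sq_pm (hs m)
          have e3 : (η : ℝ) * (((-(η * s m) : ℤ) : ℝ) * (y - ((m + s m : ℤ) : ℝ) / 2)) - -(1 / 2) =
              1 - s m * (y - m / 2) := by
            push_cast
            linear_combination -(s m * (y - (m + s m) / 2) : ℝ) * e1 + (1 / 2) * e2
          rw [e3, hbt]
          · push_cast
            linear_combination (-(s m * (1 / 2 - s m * (y - m / 2)) : ℝ)) * e1 + (y - m / 2) * e2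
          · right
            have := hy.2
            linarith
        · exact (Sgp_out h2 (par m hm) hmE).1 y (Hf_next (hs m) hy)
      have := (Agr_comm (front1 m hm) k2).1 x hx
      simpa using this
    · exact back m hm x hx

lemma BB_front {G : Subgroup Hm} {s : ℤ → ℤ} (hs : PM s) (h0 : BB G s Set.univ) {E : Set ℤ}
    (h : BB G s E) {η : ℤ} (hη : η = 1 ∨ η = -1) :
    BB G s {m | m + s m ∈ E ∧ s (m + s m) = η * s m} := by
  apply BB_of_comm
  intro c a ha b hb
  obtain ⟨r, hr0, hr, har⟩ := Fc_r ha
  obtain ⟨r', hr0', hr', hbr⟩ := Fc_r hb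
  have har := LR_mono (le_max_left r r') har
  have hbr := LR_mono (le_max_right r r') hbr
  have hR0 : 0 < max r r' := lt_max_of_lt_left hr0
  have hR : max r r' < 1 / 2 := max_lt hr hr'
  generalize max r r' = R at *
  obtain ⟨p, hp, hpr, -⟩ := push_exists hR0 hR
  have pa := conj_Pos hp har hR0 hR hpr
  have pb := conj_Pos hp hbr hR0 hR hpr
  obtain ⟨z1, hz1, k1⟩ := h0 c _ (PosS_Fc pa)
  obtain ⟨z2, hz2, k2⟩ := h (c + 1) _ (PosS_nb pb hη).1
  obtain ⟨y, hy, k3⟩ := h0 c _ (inv_mem hp)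
  have := Sgp_conj (front_comm hs hη pa pb k1 k2) k3
  have e : p⁻¹ * ⁅p * a * p⁻¹, p * b * p⁻¹⁆ * p⁻¹⁻¹ = ⁅a, b⁆ := by
    simp only [commutatorElement_def]; group
  rw [e] at this
  exact ⟨y * ⁅z1, z2⁆ * y⁻¹, mul_mem (mul_mem hy
    (mul_mem (mul_mem (mul_mem hz1 hz2) (inv_mem hz1)) (inv_mem hz2))) (inv_mem hy), this⟩

lemma BB_back {G : Subgroup Hm} {s : ℤ → ℤ} (hs : PM s) (h0 : BB G s Set.univ) {E : Set ℤ}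
    (h : BB G s E) {η : ℤ} (hη : η = 1 ∨ η = -1) :
    BB G s {m | m - s m ∈ E ∧ s (m - s m) = η * s m} := by
  have := BB_neg (PM_neg hs) (BB_front (PM_neg hs) (BB_neg hs h0) (BB_neg hs h) hη)
  rw [neg_neg] at this
  have e : {m | m - s m ∈ E ∧ s (m - s m) = η * s m} =
      {m | m + (-s) m ∈ E ∧ (-s) (m + (-s) m) = η * (-s) m} := by
    ext m
    simp [sub_eq_add_neg]
  rw [e]
  exact this

/-! ### Local sets -/

def qq (s : ℤ → ℤ) (m i : ℤ) : ℤ := s m * s (m + s m * i)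

lemma BB_qq {G : Subgroup Hm} {s : ℤ → ℤ} (hs : PM s) (h0 : BB G s Set.univ) (n : ℕ) :
    ∀ i : ℤ, |i| ≤ n → BB G s {m | qq s m i = 1} := by
  induction n with
  | zero =>
    intro i hi
    have : i = 0 := by simpa using hi
    subst this
    convert h0 using 1
    ext m
    rcases hs m with h | h <;> simp [qq, h]
  | succ n ih =>
    intro i hi
    by_cases hin : |i| ≤ n
    · exact ih i hin
    have key : ∀ j : ℤ, |j| ≤ n → BB G s {m | qq s m (j + 1) = 1} ∧
        BB G s {m | qq s m (-(j + 1)) = 1} := by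
      intro j hj
      have hj' : |-j| ≤ n := by rwa [abs_neg]
      constructor
      · have h1 := BB_front hs h0 (ih j hj) (Or.inl rfl)
        have h2 := BB_front hs h0 (BB_compl h0 (ih (-j) hj')) (Or.inr rfl)
        convert BB_union h0 h1 h2 using 1
        ext m
        simp only [Set.mem_ofPred_eq, Set.mem_union, Set.mem_compl_iff, qq]
        have e1 : m + s m * (j + 1) = m + s m + s m * j := by ring
        rw [e1]
        rcases hs m with h | h <;> rcases hs (m + s m) with h' | h' <;>
          rcases hs (m + s m + s m * j) with h'' | h'' <;> simp_all
      · have h1 := BB_back hs h0 (ih (-j) hj') (Or.inl rfl)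
        have h2 := BB_back hs h0 (BB_compl h0 (ih j hj)) (Or.inr rfl)
        convert BB_union h0 h1 h2 using 1
        ext m
        simp only [Set.mem_ofPred_eq, Set.mem_union, Set.mem_compl_iff, qq]
        have e1 : m + s m * (-(j + 1)) = m - s m + s m * (-j) := by ring
        rw [e1]
        rcases hs m with h | h <;> rcases hs (m - s m) with h' | h' <;>
          rcases hs (m - s m + s m * (-j)) with h'' | h'' <;> simp_all
    rcases le_total 0 i with h | h
    · rw [abs_of_nonneg h] at hi hin
      have := (key (i - 1) (by rw [abs_of_nonneg (by omega)]; push_cast at hi; omega)).1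
      simpa using this
    · rw [abs_of_nonpos h] at hi hin
      have := (key (-i - 1) (by rw [abs_of_nonneg (by omega)]; push_cast at hi; omega)).2
      simpa using this

lemma BB_finite {G : Subgroup Hm} {s : ℤ → ℤ} (h0 : BB G s Set.univ) {ι : Type*} (X : ι → Set ℤ)
    (hX : ∀ i, BB G s (X i)) (I : Finset ι) : ∀ E : Set ℤ,
    (∀ m m', (∀ i ∈ I, m ∈ X i ↔ m' ∈ X i) → (m ∈ E ↔ m' ∈ E)) → BB G s E := by
  classical
  induction I using Finset.induction_on with
  | empty =>
    intro E hE
    by_cases h : (0 : ℤ) ∈ E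
    · convert h0
      ext m
      simpa using (hE m 0 (by simp)).2 h
    · convert BB_empty h0
      ext m
      simpa using fun hm => h ((hE m 0 (by simp)).1 hm)
  | insert j I hj ih =>
    intro E hE
    have h1 := ih {m | ∃ m' ∈ E, m' ∈ X j ∧ ∀ i ∈ I, m ∈ X i ↔ m' ∈ X i} (by
      intro m m' h
      constructor
      · rintro ⟨k, hk, hkj, hk2⟩
        exact ⟨k, hk, hkj, fun i hi => (h i hi).symm.trans (hk2 i hi)⟩
      · rintro ⟨k, hk, hkj, hk2⟩
        exact ⟨k, hk, hkj, fun i hi => (h i hi).trans (hk2 i hi)⟩)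
    have h2 := ih {m | ∃ m' ∈ E, m' ∉ X j ∧ ∀ i ∈ I, m ∈ X i ↔ m' ∈ X i} (by
      intro m m' h
      constructor
      · rintro ⟨k, hk, hkj, hk2⟩
        exact ⟨k, hk, hkj, fun i hi => (h i hi).symm.trans (hk2 i hi)⟩
      · rintro ⟨k, hk, hkj, hk2⟩
        exact ⟨k, hk, hkj, fun i hi => (h i hi).trans (hk2 i hi)⟩)
    convert BB_union h0 (BB_inter h1 (hX j)) (BB_inter h2 (BB_compl h0 (hX j))) using 1
    ext m
    constructor
    · intro hm
      by_cases hmj : m ∈ X j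
      · left; exact ⟨⟨m, hm, hmj, fun _ _ => Iff.rfl⟩, hmj⟩
      · right; exact ⟨⟨m, hm, hmj, fun _ _ => Iff.rfl⟩, hmj⟩
    · rintro (⟨⟨k, hk, hkj, hk2⟩, hmj⟩ | ⟨⟨k, hk, hkj, hk2⟩, hmj⟩)
      · refine (hE m k ?_).2 hk
        intro i hi
        rcases Finset.mem_insert.1 hi with rfl | hi
        · simp [hkj, hmj]
        · exact hk2 i hi
      · refine (hE m k ?_).2 hk
        intro i hi
        rcases Finset.mem_insert.1 hi with rfl | hi
        · exact iff_of_false hmj hkj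
        · exact hk2 i hi

def Sim (s : ℤ → ℤ) (R : ℕ) (m m' : ℤ) : Prop :=
  m % 2 = m' % 2 ∧ ∀ i : ℤ, |i| ≤ R → qq s m i = qq s m' i

def Loc (s : ℤ → ℤ) (E : Set ℤ) : Prop :=
  ∃ R : ℕ, ∀ m m', Sim s R m m' → (m ∈ E ↔ m' ∈ E)

lemma qq_pm {s : ℤ → ℤ} (hs : PM s) (m i : ℤ) : qq s m i = 1 ∨ qq s m i = -1 := by
  unfold qq
  rcases hs m with h | h <;> rcases hs (m + s m * i) with h' | h' <;> simp [h] at * <;> simp [h']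

lemma BB_Loc {G : Subgroup Hm} {s : ℤ → ℤ} (hs : PM s) (h0 : BB G s Set.univ) {E : Set ℤ}
    (h : Loc s E) : BB G s E := by
  obtain ⟨R, hR⟩ := h
  let X : Option ℤ → Set ℤ := fun o => match o with
    | none => {m | m % 2 = 0}
    | some i => {m | qq s m i = 1}
  have hX : ∀ o, BB G s (X o) := by
    intro o
    match o with
    | none => exact BB_parity h0
    | some i => exact BB_qq hs h0 i.natAbs i (by simp)
  classical
  refine BB_finite h0 X hX (insert none ((Finset.Icc (-(R : ℤ)) R).image some)) E ?_
  intro m m' hmm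
  apply hR
  constructor
  · have := hmm none (by simp)
    simp only [X, Set.mem_ofPred_eq] at this
    omega
  · intro i hi
    have hi' := abs_le.1 hi
    have := hmm (some i) (by simp [hi'])
    simp only [X, Set.mem_ofPred_eq] at this
    rcases qq_pm hs m i with h | h <;> rcases qq_pm hs m' i with h' | h' <;> simp_all

end QM

namespace QM
open Filter Topology
open scoped commutatorElement

/-! ### Identification of the group -/

open Classical in
noncomputable def sgn (ρ : ℤ → Letter) (m : ℤ) : ℤ :=
  if ρ m = Letter.a ∨ ρ m = Letter.b then 1 else -1

lemma sgn_PM (ρ : ℤ → Letter) : PM (sgn ρ) := by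
  intro m; unfold sgn; split_ifs <;> simp

lemma half_FO {ν : Hm} (h : ∀ x, x ∉ Set.Icc (0 : ℝ) 1 → ν x = x) : tr (-(1 / 2)) ν ∈ FO := by
  obtain ⟨h0, h1⟩ := fix_zero_one h
  intro x hx
  rw [tr_app]
  have : ν (x - -(1 / 2)) = x - -(1 / 2) := by
    by_cases hc : x - -(1 / 2) ∈ Set.Icc (0 : ℝ) 1
    · by_cases h2 : x = -(1 / 2)
      · rw [h2, sub_self]; exact h0
      by_cases h3 : x = 1 / 2
      · rw [h3]; norm_num; exact h1
      · exact absurd ⟨lt_of_le_of_ne (by linarith [hc.1]) (Ne.symm h2),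
          lt_of_le_of_ne (by linarith [hc.2]) h3⟩ hx
    · exact h _ hc
  rw [this]; ring

lemma zeta_Sgp {ρ : ℤ → Letter} (hρ : IsLabelling ρ) {ν ζ : Hm}
    (h : ∀ x, x ∉ Set.Icc (0 : ℝ) 1 → ν x = x) (hz : IsZeta ρ ν ζ) :
    (tr (-(1 / 2)) ν, ζ) ∈ Sgp (sgn ρ) 1 Set.univ := by
  refine Sgp_mk (sgn_PM ρ) (half_FO h) ?_ (fun m _ hm => absurd (Set.mem_univ m) hm)
  intro m hm _ x hx
  obtain ⟨n, rfl⟩ : ∃ n, m = 2 * n + 1 := ⟨m / 2, by omega⟩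
  have hx' : x ∈ Set.Icc (n : ℝ) (n + 1) := by
    obtain ⟨h1, h2⟩ := hx
    push_cast at h1 h2
    constructor <;> linarith
  obtain ⟨k1, k2⟩ := hz n x hx'
  rw [loc_app _ (sgn_PM ρ _), tr_app]
  rcases (hρ (2 * n + 1)).2 ⟨n, rfl⟩ with h | h
  · rw [k1 h, show sgn ρ (2 * n + 1) = 1 by simp [sgn, h]]
    rw [show ((1 : ℤ) : ℝ) * (x - ((2 * n + 1 : ℤ) : ℝ) / 2) - -(1 / 2) = x - n by push_cast; ring]
    push_cast; ring
  · rw [k2 h, show sgn ρ (2 * n + 1) = -1 by simp [sgn, h]]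
    rw [show ((-1 : ℤ) : ℝ) * (x - ((2 * n + 1 : ℤ) : ℝ) / 2) - -(1 / 2) = n + 1 - x by
      push_cast; ring]
    push_cast; ring

lemma chi_Sgp {ρ : ℤ → Letter} (hρ : IsLabelling ρ) {ν ζ : Hm}
    (h : ∀ x, x ∉ Set.Icc (0 : ℝ) 1 → ν x = x) (hz : IsChi ρ ν ζ) :
    (tr (-(1 / 2)) ν, ζ) ∈ Sgp (sgn ρ) 0 Set.univ := by
  refine Sgp_mk (sgn_PM ρ) (half_FO h) ?_ (fun m _ hm => absurd (Set.mem_univ m) hm)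
  intro m hm _ x hx
  obtain ⟨n, rfl⟩ : ∃ n, m = 2 * n := ⟨m / 2, by omega⟩
  have hx' : x ∈ Set.Icc ((n : ℝ) - 1 / 2) (n + 1 / 2) := by
    obtain ⟨h1, h2⟩ := hx
    push_cast at h1 h2
    constructor <;> linarith
  obtain ⟨k1, k2⟩ := hz n x hx'
  rw [loc_app _ (sgn_PM ρ _), tr_app]
  rcases (hρ (2 * n)).1 ⟨n, by ring⟩ with h | h
  · rw [k1 h, show sgn ρ (2 * n) = 1 by simp [sgn, h]]
    rw [show ((1 : ℤ) : ℝ) * (x - ((2 * n : ℤ) : ℝ) / 2) - -(1 / 2) = x - (n - 1 / 2) by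
      push_cast; ring]
    push_cast; ring
  · rw [k2 h, show sgn ρ (2 * n) = -1 by simp [sgn, h]]
    rw [show ((-1 : ℤ) : ℝ) * (x - ((2 * n : ℤ) : ℝ) / 2) - -(1 / 2) = n + 1 / 2 - x by
      push_cast; ring]
    push_cast; ring

lemma Fc_H {f : Hm} (hf : f ∈ Fc) : InH (tr (1 / 2) f) := by
  have hF := Fc_FO hf
  obtain ⟨r, hr0, hr, hfr⟩ := Fc_r hf
  have hd : IsDyadic (1 / 2 : ℝ) := dy_half dy_one
  have key : ∀ x : ℝ, r ≤ |x - 1 / 2| → tr (1 / 2) f x = x := by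
    intro x hx
    rw [tr_app, hfr.2 _ hx]; ring
  refine ⟨thompson_of_PL (tr_PL hd hfr.1) ?_, 0, 1 / 2 - r, by linarith, ?_, ?_⟩
  · intro x hx
    apply key
    by_contra hc
    have := abs_lt.1 (not_le.1 hc)
    exact hx ⟨by linarith, by linarith⟩
  · intro t ht
    rw [key, zpow_zero, one_mul]
    rw [abs_of_nonpos (by linarith [ht.2])]
    linarith [ht.2]
  · intro t ht
    rw [key, zpow_zero, one_mul]
    · ring
    rw [abs_of_nonneg (by linarith [ht.1])]
    linarith [ht.1]

lemma BB_univ {G : Subgroup Hm} {s : ℤ → ℤ} {H : Subgroup Hm} (hH : ∀ f, f ∈ H ↔ InH f)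
    {S : Set Hm} (hS : Subgroup.closure S = H)
    (h : ∀ ν ∈ S, ∀ c, ∃ z ∈ G, (tr (-(1 / 2)) ν, z) ∈ Sgp s c Set.univ) : BB G s Set.univ := by
  intro c f hf
  have h1 : H ≤ ((Sgp s c Set.univ ⊓ G.comap (MonoidHom.snd Hm Hm)).map
      (MonoidHom.fst Hm Hm)).comap (tr (-(1 / 2))) := by
    rw [← hS, Subgroup.closure_le]
    intro ν hν
    obtain ⟨z, hz, k⟩ := h ν hν c
    exact ⟨(_, z), ⟨k, hz⟩, rfl⟩
  obtain ⟨⟨f', z⟩, ⟨k1, k2⟩, k3⟩ := h1 ((hH _).2 (Fc_H hf))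
  have e : f' = f := by
    have k3 : f' = tr (-(1 / 2)) (tr (1 / 2) f) := k3
    rw [k3]
    ext x
    simp only [tr_app]
    ring_nf
  subst e
  exact ⟨z, k2, k1⟩

/-- germs at the left endpoint -/
def LGm : Subgroup (Hm × Multiplicative ℤ) where
  carrier := {p | ∀ᶠ t in 𝓝[≥] (0 : ℝ), p.1 (-(1 / 2) + t) = -(1 / 2) + 2 ^ (p.2.toAdd) * t}
  one_mem' := by
    change ∀ᶠ t in 𝓝[≥] (0 : ℝ), -(1 / 2) + t = -(1 / 2) + 2 ^ (0 : ℤ) * t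
    exact Eventually.of_forall fun t => by simp
  mul_mem' := by
    rintro ⟨f, k⟩ ⟨g, l⟩ hf hg
    have ht : Tendsto (fun t : ℝ => (2 : ℝ) ^ (l.toAdd) * t) (𝓝[≥] 0) (𝓝[≥] 0) := by
      apply tendsto_nhdsWithin_of_tendsto_nhds_of_eventually_within
      · have : Tendsto (fun t : ℝ => (2 : ℝ) ^ (l.toAdd) * t) (𝓝 0) (𝓝 (2 ^ (l.toAdd) * 0)) :=
          tendsto_id.const_mul _
        rw [mul_zero] at this
        exact this.mono_left nhdsWithin_le_nhds
      · filter_upwards [self_mem_nhdsWithin] with t ht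
        have : (0 : ℝ) ≤ t := ht
        exact Set.mem_Ici.2 (by positivity)
    filter_upwards [hg, ht.eventually hf] with t h1 h2
    simp only [Prod.mk_mul_mk, mul_app] at *
    rw [h1, h2, toAdd_mul, zpow_add₀ (by norm_num)]
    ring
  inv_mem' := by
    rintro ⟨f, k⟩ hf
    have ht : Tendsto (fun t : ℝ => (2 : ℝ) ^ (-k.toAdd) * t) (𝓝[≥] 0) (𝓝[≥] 0) := by
      apply tendsto_nhdsWithin_of_tendsto_nhds_of_eventually_within
      · have : Tendsto (fun t : ℝ => (2 : ℝ) ^ (-k.toAdd) * t) (𝓝 0) (𝓝 (2 ^ (-k.toAdd) * 0)) :=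
          tendsto_id.const_mul _
        rw [mul_zero] at this
        exact this.mono_left nhdsWithin_le_nhds
      · filter_upwards [self_mem_nhdsWithin] with t ht
        have : (0 : ℝ) ≤ t := ht
        exact Set.mem_Ici.2 (by positivity)
    filter_upwards [ht.eventually hf] with t h2
    simp only [Prod.inv_mk] at *
    apply inv_eq_of
    rw [toAdd_inv, h2, ← mul_assoc, ← zpow_add₀ (by norm_num), add_neg_cancel, zpow_zero, one_mul]

lemma LGm_of {f : Hm} {k : ℤ} {ε : ℝ} (hε : 0 < ε)
    (h : ∀ t, 0 ≤ t → t < ε → f (-(1 / 2) + t) = -(1 / 2) + 2 ^ k * t) :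
    (f, Multiplicative.ofAdd k) ∈ LGm := by
  change ∀ᶠ t in 𝓝[≥] (0 : ℝ), _
  filter_upwards [Ico_mem_nhdsGE hε] with t ht
  exact h t ht.1 ht.2

lemma LGm_id {f : Hm} (h : (f, (1 : Multiplicative ℤ)) ∈ LGm) :
    ∃ ε > 0, ∀ t, 0 ≤ t → t < ε → f (-(1 / 2) + t) = -(1 / 2) + t := by
  have h : ∀ᶠ t in 𝓝[≥] (0 : ℝ), f (-(1 / 2) + t) = -(1 / 2) + 2 ^ (0 : ℤ) * t := h
  obtain ⟨ε, hε, h2⟩ := mem_nhdsGE_iff_exists_Ico_subset.1 h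
  refine ⟨ε, hε, fun t h0 h1 => ?_⟩
  have := h2 ⟨h0, h1⟩
  simpa using this

lemma Fc_of_germs {f : Hm} (h0 : f ∈ PL) (hF : f ∈ FO) (h1 : (f, (1 : Multiplicative ℤ)) ∈ LGm)
    (h2 : (mir f, (1 : Multiplicative ℤ)) ∈ LGm) : f ∈ Fc := by
  obtain ⟨ε, hε, k1⟩ := LGm_id h1
  obtain ⟨δ, hδ, k2⟩ := LGm_id h2
  have hm : 0 < min ε δ := lt_min hε hδ
  refine ⟨1 / 2 - min ε δ / 2, by linarith, h0, fun x hx => ?_⟩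
  by_cases hc : 1 / 2 ≤ |x|
  · exact FO_abs hF hc
  have hx2 := abs_lt.1 (not_le.1 hc)
  rcases le_total 0 x with h | h
  · rw [abs_of_nonneg h] at hx
    have := k2 (1 / 2 - x) (by linarith) (by linarith [min_le_right ε δ])
    rw [mir_app] at this
    ring_nf at this
    linarith
  · rw [abs_of_nonpos h] at hx
    have := k1 (1 / 2 + x) (by linarith) (by linarith [min_le_left ε δ])
    ring_nf at this
    linarith

noncomputable def wp : Hm := bump 0 (1 / 16)

lemma wp_PL : wp ∈ PL := by
  have h : IsDyadic (1 / 2 / 2 / 2 / 2 : ℝ) := dy_half (dy_half (dy_half (dy_half dy_one)))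
  have e : (1 / 2 / 2 / 2 / 2 : ℝ) = 1 / 16 := by norm_num
  rw [e] at h
  exact bump_PL dy_zero h
lemma wp_le {x : ℝ} (h : x ≤ 0) : wp x = x := bump_le (by norm_num) h
lemma wp_ge {x : ℝ} (h : 1 / 4 ≤ x) : wp x = x := bump_4 (by norm_num) (by linarith)
lemma wp_germ {x : ℝ} (h : 0 ≤ x) (h2 : x ≤ 1 / 16) : wp x = 2 * x := by
  rw [wp, bump_1 (by norm_num) h (by linarith)]; ring
lemma wp_nn {x : ℝ} (h : 0 ≤ x) : 0 ≤ wp x := by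
  have := wp.monotone h; rwa [wp_le le_rfl] at this
lemma wp_hf {x : ℝ} (h : x ≤ 1 / 2) : wp x ≤ 1 / 2 := by
  have := wp.monotone h; rwa [wp_ge (x := 1 / 2) (by norm_num)] at this

noncomputable def ww : Hm := mir wp * wp
noncomputable def wt : Hm := tr (1 / 2) (mir wp) * tr (-(1 / 2)) wp

lemma ww_nn {x : ℝ} (h : 0 ≤ x) : ww x = wp x := by
  rw [ww, mul_app, mir_app, wp_le (x := -(wp x)) (by linarith [wp_nn h]), neg_neg]
lemma ww_np {x : ℝ} (h : x ≤ 0) : ww x = -wp (-x) := by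
  rw [ww, mul_app, wp_le h, mir_app]
lemma ww_neg (x : ℝ) : ww (-x) = - ww x := by
  rcases le_total 0 x with h | h
  · rw [ww_nn h, ww_np (by linarith), neg_neg]
  · rw [ww_np h, ww_nn (by linarith), neg_neg]
lemma wt_np {x : ℝ} (h : x ≤ 0) : wt x = -(1 / 2) + wp (x + 1 / 2) := by
  have := wp_hf (x := x + 1 / 2) (by linarith)
  rw [wt, mul_app, tr_app (-(1 / 2)), sub_neg_eq_add, tr_app, mir_app, wp_ge (by linarith)]
  ring
lemma wt_nn {x : ℝ} (h : 0 ≤ x) : wt x = 1 / 2 - wp (1 / 2 - x) := by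
  rw [wt, mul_app, tr_app (-(1 / 2)), sub_neg_eq_add, wp_ge (x := x + 1 / 2) (by linarith), tr_app,
    mir_app]
  ring_nf
lemma wt_neg (x : ℝ) : wt (-x) = - wt x := by
  rcases le_total 0 x with h | h
  · rw [wt_nn h, wt_np (by linarith)]; ring_nf
  · rw [wt_np h, wt_nn (by linarith)]; ring_nf
lemma ww_Fc : ww ∈ Fc := by
  refine mul_mem (mir_Fc ?_) ?_ <;>
  · refine ⟨1 / 4, by norm_num, wp_PL, fun x hx => ?_⟩
    rcases le_total 0 x with h | h
    · rw [abs_of_nonneg h] at hx; exact wp_ge hx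
    · exact wp_le h
lemma wt_PL : wt ∈ PL := by
  have hd : IsDyadic (1 / 2 : ℝ) := dy_half dy_one
  exact mul_mem (tr_PL hd (mir_PL wp_PL)) (tr_PL (dy_neg hd) wp_PL)
lemma mir_wt : mir wt = wt := by
  ext x; rw [mir_app, wt_neg, neg_neg]
lemma wt_FO : wt ∈ FO := by
  intro x hx
  rcases le_total 0 x with h | h
  · have : 1 / 2 ≤ x := by
      by_contra hc; exact hx ⟨by linarith, by linarith⟩
    rw [wt_nn h, wp_le (by linarith)]; ring
  · have : x ≤ -(1 / 2) := by
      by_contra hc; exact hx ⟨by linarith, by linarith⟩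
    rw [wt_np h, wp_le (by linarith)]; ring
lemma wt_germ : (wt, Multiplicative.ofAdd (1 : ℤ)) ∈ LGm := by
  apply LGm_of (ε := 1 / 16) (by norm_num)
  intro t h0 h1
  rw [wt_np (by linarith), show -(1 / 2) + t + 1 / 2 = t by ring, wp_germ h0 h1.le]
  norm_num

lemma ww_wt {s : ℤ → ℤ} (hs : PM s) {c : ℤ} {z : Hm} (h : (ww, z) ∈ Sgp s (c + 1) Set.univ) :
    (wt, z) ∈ Sgp s c Set.univ := by
  have odd : ∀ g : Hm, (∀ x, g (-x) = - g x) → ∀ m x, loc m (s m) g x = m / 2 + g (x - m / 2) := by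
    intro g hg m x
    rw [loc_app m (hs m)]
    rcases hs m with h | h
    · rw [h]; simp
    · rw [h]
      rw [show ((-1 : ℤ) : ℝ) * (x - m / 2) = -(x - m / 2) by push_cast; ring, hg]
      push_cast; ring
  refine Sgp_mk hs wt_FO ?_ (fun m _ hm => absurd (Set.mem_univ m) hm)
  intro m hm _ x hx
  obtain ⟨hx1, hx2⟩ := hx
  rw [odd _ wt_neg]
  rcases le_total x (m / 2) with h' | h'
  · have := (Sgp_in h (m := m - 1) (by omega) (Set.mem_univ _)).1 x
      ⟨by push_cast; linarith, by push_cast; linarith⟩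
    rw [this]
    change loc _ _ ww x = _
    rw [odd _ ww_neg, wt_np (by linarith), ww_nn (by push_cast; linarith)]
    push_cast
    ring_nf
  · have := (Sgp_in h (m := m + 1) (by omega) (Set.mem_univ _)).1 x
      ⟨by push_cast; linarith, by push_cast; linarith⟩
    rw [this]
    change loc _ _ ww x = _
    rw [odd _ ww_neg, wt_nn (by linarith), ww_np (by push_cast; linarith)]
    push_cast
    ring_nf

def GS (s : ℤ → ℤ) : Set Hm := {z | ∃ c, ∃ f ∈ Fc, (f, z) ∈ Sgp s c Set.univ}

lemma mem_GS {G : Subgroup Hm} {s : ℤ → ℤ} (hs : PM s) (h0 : BB G s Set.univ) {ν ζ : Hm} {c : ℤ}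
    (hν : InH ν) (h : (tr (-(1 / 2)) ν, ζ) ∈ Sgp s c Set.univ) :
    ζ ∈ Subgroup.closure (GS s) := by
  obtain ⟨z, hz, k1⟩ := h0 (c + 1) ww ww_Fc
  have k2 := ww_wt hs k1
  obtain ⟨hT, k, ε, hε, e1, e2⟩ := hν
  have g1 : (tr (-(1 / 2)) ν, Multiplicative.ofAdd k) ∈ LGm := by
    apply LGm_of hε
    intro t h0 h1
    rw [tr_app, show -(1 / 2) + t - -(1 / 2) = t by ring, e1 t ⟨h0, h1.le⟩]
  have g2 : (mir (tr (-(1 / 2)) ν), Multiplicative.ofAdd k) ∈ LGm := by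
    apply LGm_of hε
    intro t h0 h1
    rw [mir_app, tr_app, show -(-(1 / 2) + t) - -(1 / 2) = 1 - t by ring,
      e2 (1 - t) ⟨by linarith, by linarith⟩]
    ring
  have w1 : (wt ^ k, Multiplicative.ofAdd k) ∈ LGm := by
    have := zpow_mem wt_germ k
    convert this using 1
    ext1
    · rfl
    · change Multiplicative.ofAdd k = (Multiplicative.ofAdd (1 : ℤ)) ^ k
      rw [← ofAdd_zsmul]; simp
  have hd : IsDyadic (1 / 2 : ℝ) := dy_half dy_one
  have heF : (wt ^ k)⁻¹ * tr (-(1 / 2)) ν ∈ Fc := by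
    apply Fc_of_germs
    · exact mul_mem (inv_mem (zpow_mem wt_PL k)) (tr_PL (dy_neg hd) (PL_of_thompson hT))
    · exact mul_mem (inv_mem (zpow_mem wt_FO k)) h.1
    · have := mul_mem (inv_mem w1) g1
      simpa using this
    · have := mul_mem (inv_mem w1) g2
      rw [map_mul, map_inv, map_zpow, mir_wt]
      simpa using this
  obtain ⟨y, hy, k3⟩ := h0 c _ heF
  have k4 := mul_mem (zpow_mem k2 k) k3
  have e : (wt, z) ^ k * ((wt ^ k)⁻¹ * tr (-(1 / 2)) ν, y) = (tr (-(1 / 2)) ν, z ^ k * y) := by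
    ext1
    · change wt ^ k * ((wt ^ k)⁻¹ * _) = _
      simp
    · rfl
  rw [e] at k4
  rw [Sgp_uniq h k4]
  have m1 : z ∈ GS s := ⟨_, _, ww_Fc, k1⟩
  have m2 : y ∈ GS s := ⟨_, _, heF, k3⟩
  exact mul_mem (zpow_mem (Subgroup.subset_closure m1) k) (Subgroup.subset_closure m2)

end QM

namespace QM
open Filter Topology
open scoped commutatorElement

/-! ### Homogeneous quasimorphisms -/

lemma homog {Γ : Type*} [Group Γ] {φ : Γ → ℝ} {D : ℝ} (h : ∀ g k, |φ (g * k) - φ g - φ k| ≤ D) :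
    ∃ ψ : Γ → ℝ, (∀ g, |ψ g - φ g| ≤ D) ∧ ∀ g (n : ℕ), ψ (g ^ n) = n * ψ g := by
  have lim1 : ∀ φ : Γ → ℝ, (∀ g k, |φ (g * k) - φ g - φ k| ≤ D) → ∀ g, ∃ l : ℝ,
      Tendsto (fun n : ℕ => φ (g ^ n) / n) atTop (𝓝 l) ∧ l ≤ φ g + D := by
    intro φ h g
    have hsub : Subadditive (fun n : ℕ => φ (g ^ n) + D) := by
      intro m n
      have := (abs_le.1 (h (g ^ m) (g ^ n))).2
      simp only [pow_add]
      linarith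
    have hD : 0 ≤ D := (abs_nonneg _).trans (h 1 1)
    have hlow : ∀ n : ℕ, -(n * (|φ g| + D)) - |φ 1| ≤ φ (g ^ n) := by
      intro n
      induction n with
      | zero => simp; exact neg_abs_le _
      | succ n ih =>
        have := (abs_le.1 (h (g ^ n) g)).1
        rw [pow_succ]
        push_cast
        linarith [neg_abs_le (φ g)]
    have hbdd : BddBelow (Set.range fun n : ℕ => (φ (g ^ n) + D) / n) := by
      refine ⟨-(|φ g| + D) - |φ 1|, ?_⟩
      rintro _ ⟨n, rfl⟩
      simp only
      rcases Nat.eq_zero_or_pos n with rfl | hn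
      · simp; linarith [abs_nonneg (φ g), abs_nonneg (φ 1)]
      · have hn' : (1 : ℝ) ≤ n := by exact_mod_cast hn
        rw [le_div_iff₀ (by linarith)]
        have := hlow n
        nlinarith [abs_nonneg (φ 1)]
    refine ⟨hsub.lim, ?_, ?_⟩
    · have t1 := hsub.tendsto_lim hbdd
      have t2 : Tendsto (fun n : ℕ => D / (n : ℝ)) atTop (𝓝 0) :=
        tendsto_const_div_atTop_nhds_zero_nat D
      have t3 := t1.sub t2
      rw [sub_zero] at t3
      refine t3.congr fun n => ?_
      ring
    · have := hsub.lim_le_div hbdd (n := 1) one_ne_zero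
      simpa using this
  choose ψ hψ hψ2 using lim1 φ h
  refine ⟨ψ, fun g => ?_, fun g k => ?_⟩
  · have hneg : ∀ g k, |(-φ) (g * k) - (-φ) g - (-φ) k| ≤ D := by
      intro g k
      have := h g k
      rw [← abs_neg] at this
      convert this using 2
      simp only [Pi.neg_apply]; ring
    obtain ⟨l, hl, hl2⟩ := lim1 (-φ) hneg g
    have e : l = -ψ g := by
      refine tendsto_nhds_unique hl ?_
      refine (hψ g).neg.congr fun n => ?_
      simp only [Pi.neg_apply]; ring
    simp only [Pi.neg_apply] at hl2
    rw [abs_le]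
    constructor <;> linarith [hψ2 g]
  · rcases Nat.eq_zero_or_pos k with rfl | hk
    · have h1 := hψ (g ^ 0)
      have h2 : Tendsto (fun n : ℕ => φ ((g ^ 0) ^ n) / (n : ℝ)) atTop (𝓝 0) := by
        simpa using tendsto_const_div_atTop_nhds_zero_nat (φ 1)
      rw [tendsto_nhds_unique h1 h2]; simp
    · have h1 := hψ (g ^ k)
      have h2 : Tendsto (fun n : ℕ => k * n) atTop atTop :=
        tendsto_atTop_mono (fun n => Nat.le_mul_of_pos_left n hk) tendsto_id
      have h3 := ((hψ g).comp h2).const_mul (k : ℝ)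
      refine tendsto_nhds_unique h1 (h3.congr fun n => ?_)
      simp only [Function.comp]
      rw [pow_mul]
      have : (k : ℝ) ≠ 0 := by positivity
      push_cast
      field_simp

structure HQ (G : Subgroup Hm) (ψ : Hm → ℝ) (C : ℝ) : Prop where
  qm : ∀ g ∈ G, ∀ h ∈ G, |ψ (g * h) - ψ g - ψ h| ≤ C
  pow : ∀ g ∈ G, ∀ n : ℕ, ψ (g ^ n) = n * ψ g

lemma zero_of_bdd {x C : ℝ} (h : ∀ n : ℕ, |(n : ℝ) * x| ≤ C) : x = 0 := by
  by_contra hx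
  have hx := abs_pos.2 hx
  obtain ⟨n, hn⟩ := exists_nat_gt (C / |x|)
  rw [div_lt_iff₀ hx] at hn
  have := h n
  rw [abs_mul, Nat.abs_cast] at this
  linarith

lemma HQ.comm {G : Subgroup Hm} {ψ : Hm → ℝ} {C : ℝ} (h : HQ G ψ C) {x y : Hm} (hx : x ∈ G)
    (hy : y ∈ G) (hxy : Commute x y) : ψ (x * y) = ψ x + ψ y := by
  have : ψ (x * y) - ψ x - ψ y = 0 := by
    apply zero_of_bdd (C := C)
    intro n
    have := h.qm (x ^ n) (pow_mem hx n) (y ^ n) (pow_mem hy n)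
    rw [← hxy.mul_pow, h.pow _ (mul_mem hx hy), h.pow _ hx, h.pow _ hy] at this
    convert this using 2
    ring
  linarith

lemma HQ.one {G : Subgroup Hm} {ψ : Hm → ℝ} {C : ℝ} (h : HQ G ψ C) : ψ 1 = 0 := by
  have := h.pow 1 (one_mem _) 0
  simpa using this

lemma HQ.inv {G : Subgroup Hm} {ψ : Hm → ℝ} {C : ℝ} (h : HQ G ψ C) {x : Hm} (hx : x ∈ G) :
    ψ x⁻¹ = - ψ x := by
  have := h.comm hx (inv_mem hx) (Commute.inv_right (Commute.refl x))
  rw [mul_inv_cancel, h.one] at this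
  linarith

lemma HQ.conj {G : Subgroup Hm} {ψ : Hm → ℝ} {C : ℝ} (h : HQ G ψ C) {x t : Hm} (hx : x ∈ G)
    (ht : t ∈ G) : ψ (t * x * t⁻¹) = ψ x := by
  have : ψ (t * x * t⁻¹) - ψ x = 0 := by
    apply zero_of_bdd (C := 2 * C)
    intro n
    have h1 := abs_le.1 (h.qm (t * x ^ n) (mul_mem ht (pow_mem hx n)) t⁻¹ (inv_mem ht))
    have h2 := abs_le.1 (h.qm t ht (x ^ n) (pow_mem hx n))
    rw [← conj_pow, h.inv ht, h.pow _ (mul_mem (mul_mem ht hx) (inv_mem ht))] at h1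
    rw [h.pow _ hx] at h2
    rw [abs_le]
    constructor <;> linarith [h1.1, h1.2, h2.1, h2.2]
  linarith

/-- `x` is supported in `K` -/
def Sup (x : Hm) (K : Set ℝ) : Prop := ∀ u, u ∉ K → x u = u

lemma Sup.comm {x y : Hm} {K W : Set ℝ} (hx : Sup x K) (hy : Sup y W) (h : Disjoint K W) :
    Commute x y := by
  have stab : ∀ {z : Hm} {J : Set ℝ}, Sup z J → ∀ u, u ∈ J → z u ∈ J := by
    intro z J hz u hu
    by_contra hc
    have := z.injective (hz _ hc)
    rw [this] at hc
    exact hc hu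
  change x * y = y * x
  ext u
  simp only [mul_app]
  by_cases h1 : u ∈ K
  · have h2 := Set.disjoint_left.1 h h1
    have h3 := Set.disjoint_left.1 h (stab hx u h1)
    rw [hy u h2, hy _ h3]
  · rw [hx u h1]
    by_cases h2 : u ∈ W
    · exact hx _ (Set.disjoint_right.1 h (stab hy u h2))
    · rw [hy u h2, hx u h1]

def tel (t x : Hm) : ℕ → Hm
  | 0 => 1
  | n + 1 => x * (t * tel t x n * t⁻¹)

lemma displ {G : Subgroup Hm} {ψ : Hm → ℝ} {C : ℝ} (h : HQ G ψ C) {K W : Set ℝ} {t : Hm}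
    (ht : t ∈ G) (hKW : Disjoint K W) (htW : ∀ u ∈ K ∪ W, t u ∈ W) {x y : Hm} (hx : x ∈ G)
    (hy : y ∈ G) (hxK : Sup x K) (hyK : Sup y K) : ψ (x * y) = ψ x + ψ y := by
  have step : ∀ z : Hm, Sup z (K ∪ W) → Sup (t * z * t⁻¹) W := by
    intro z hz u hu
    simp only [mul_app]
    rw [hz, app_inv]
    intro hc
    have := htW _ hc
    rw [app_inv] at this
    exact hu this
  have supp : ∀ x : Hm, Sup x K → ∀ n, Sup (tel t x n) (K ∪ W) := by
    intro x hx n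
    induction n with
    | zero => exact fun _ _ => rfl
    | succ n ih =>
      intro u hu
      have hu1 : u ∉ K := fun h => hu (Or.inl h)
      have hu2 : u ∉ W := fun h => hu (Or.inr h)
      change x ((t * tel t x n * t⁻¹) u) = u
      rw [step _ ih u hu2, hx u hu1]
  have memG : ∀ x : Hm, x ∈ G → ∀ n, tel t x n ∈ G := by
    intro x hx n
    induction n with
    | zero => exact one_mem _
    | succ n ih => exact mul_mem hx (mul_mem (mul_mem ht ih) (inv_mem ht))
  have val : ∀ x : Hm, x ∈ G → Sup x K → ∀ n : ℕ, ψ (tel t x n) = n * ψ x := by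
    intro x hx hxK n
    induction n with
    | zero => simpa [tel] using h.one
    | succ n ih =>
      change ψ (x * (t * tel t x n * t⁻¹)) = _
      rw [h.comm hx (mul_mem (mul_mem ht (memG x hx n)) (inv_mem ht))
        (hxK.comm (step _ (supp x hxK n)) hKW), h.conj (memG x hx n) ht, ih]
      push_cast; ring
  have hxyK : Sup (x * y) K := by
    intro u hu
    rw [mul_app, hyK u hu, hxK u hu]
  have mul : ∀ n, tel t (x * y) n = tel t x n * tel t y n := by
    intro n
    induction n with
    | zero => simp [tel]
    | succ n ih =>
      simp only [tel]
      rw [ih]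
      have hc : y * (t * tel t x n * t⁻¹) = (t * tel t x n * t⁻¹) * y :=
        hyK.comm (step _ (supp x hxK n)) hKW
      calc x * y * (t * (tel t x n * tel t y n) * t⁻¹)
          = x * (y * (t * tel t x n * t⁻¹)) * (t * tel t y n * t⁻¹) := by group
        _ = _ := by rw [hc]; group
  have : ψ (x * y) - ψ x - ψ y = 0 := by
    apply zero_of_bdd (C := C)
    intro n
    have k := h.qm _ (memG x hx n) _ (memG y hy n)
    rw [← mul, val _ (mul_mem hx hy) hxyK, val _ hx hxK, val _ hy hyK] at k
    convert k using 2
    ring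
  linarith

/-! ### The groups `PE` -/

def PE (s : ℤ → ℤ) (E : Set ℤ) : Subgroup Hm :=
  Subgroup.closure {z | ∃ E', E' ⊆ E ∧ Loc s E' ∧ ∃ c, ∃ f ∈ Fc, (f, z) ∈ Sgp s c E'}

lemma PE_le {G : Subgroup Hm} {s : ℤ → ℤ} (hs : PM s) (h0 : BB G s Set.univ) (E : Set ℤ) :
    PE s E ≤ G := by
  refine (Subgroup.closure_le _).2 ?_
  rintro z ⟨E', -, hL, c, f, hf, hz⟩
  obtain ⟨y, hy, h⟩ := BB_Loc hs h0 hL c f hf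
  rw [Sgp_uniq hz h]; exact hy

lemma PE_mono {s : ℤ → ℤ} {E E' : Set ℤ} (h : E ⊆ E') : PE s E ≤ PE s E' := by
  refine Subgroup.closure_mono ?_
  rintro z ⟨E1, h1, h2⟩
  exact ⟨E1, h1.trans h, h2⟩

def XX (E : Set ℤ) (r : ℝ) : Set ℝ := {x | ∃ m ∈ E, |x - m / 2| ≤ r}

lemma XX_mono (E : Set ℤ) {r r' : ℝ} (h : r ≤ r') : XX E r ⊆ XX E r' := by
  rintro x ⟨m, hm, hx⟩
  exact ⟨m, hm, hx.trans h⟩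

lemma PE_sup {s : ℤ → ℤ} (hs : PM s) {E : Set ℤ} {z : Hm} (hz : z ∈ PE s E) :
    ∃ r, 1 / 4 < r ∧ r < 1 / 2 ∧ Sup z (XX E r) := by
  induction hz using Subgroup.closure_induction with
  | mem z hz =>
    obtain ⟨E', hE, -, c, f, hf, hz⟩ := hz
    obtain ⟨r, hr, hfr⟩ := hf
    refine ⟨max r (3 / 8), lt_max_of_lt_right (by norm_num), max_lt hr (by norm_num), ?_⟩
    intro u hu
    obtain ⟨m, hm, hum⟩ := tile c u
    by_cases hmE : m ∈ E'
    · rw [(Sgp_in hz hm hmE).1 u hum]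
      change loc m (s m) f u = u
      have hlt : r < |u - m / 2| := by
        by_contra hc
        exact hu ⟨m, hE hmE, (not_lt.1 hc).trans (le_max_left _ _)⟩
      rw [loc_app m (hs m), hfr.2]
      · linear_combination (u - m / 2) * sq_pm (hs m)
      · rcases hs m with h | h <;> rw [h] <;> simp [abs_sub_comm] <;>
          [rw [abs_sub_comm]; skip] <;> first | exact hlt.le | (rw [abs_sub_comm]; exact hlt.le)
    · exact (Sgp_out hz hm hmE).1 u hum
  | one => exact ⟨3 / 8, by norm_num, by norm_num, fun _ _ => rfl⟩
  | mul x y _ _ hx hy =>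
    obtain ⟨r, h1, h2, h3⟩ := hx
    obtain ⟨r', h1', h2', h3'⟩ := hy
    refine ⟨max r r', lt_max_of_lt_left h1, max_lt h2 h2', fun u hu => ?_⟩
    rw [mul_app, h3' u (fun h => hu (XX_mono E (le_max_right _ _) h)),
      h3 u (fun h => hu (XX_mono E (le_max_left _ _) h))]
  | inv x _ hx =>
    obtain ⟨r, h1, h2, h3⟩ := hx
    exact ⟨r, h1, h2, fun u hu => inv_fix (h3 u hu)⟩

/-- The displacement property. -/
def Dis (G : Subgroup Hm) (E : Set ℤ) : Prop := ∀ r, 1 / 4 < r → r < 1 / 2 →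
  ∃ t ∈ G, ∃ W : Set ℝ, Disjoint (XX E r) W ∧ ∀ u ∈ XX E r ∪ W, t u ∈ W

lemma PE_zero {G : Subgroup Hm} {s : ℤ → ℤ} (hs : PM s) (h0 : BB G s Set.univ) {ψ : Hm → ℝ}
    {C : ℝ} (h : HQ G ψ C) {E : Set ℤ} (hE : Dis G E) {z : Hm} (hz : z ∈ PE s E) : ψ z = 0 := by
  have hG := PE_le hs h0 E
  have add : ∀ x ∈ PE s E, ∀ y ∈ PE s E, ψ (x * y) = ψ x + ψ y := by
    intro x hx y hy
    obtain ⟨r, h1, h2, h3⟩ := PE_sup hs hx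
    obtain ⟨r', h1', h2', h3'⟩ := PE_sup hs hy
    obtain ⟨t, ht, W, k1, k2⟩ := hE (max r r') (lt_max_of_lt_left h1) (max_lt h2 h2')
    exact displ h ht k1 k2 (hG hx) (hG hy)
      (fun u hu => h3 u (fun h => hu (XX_mono E (le_max_left _ _) h)))
      (fun u hu => h3' u (fun h => hu (XX_mono E (le_max_right _ _) h)))
  let Z : Subgroup Hm :=
    { carrier := {z | z ∈ PE s E ∧ ψ z = 0}
      one_mem' := ⟨one_mem _, h.one⟩
      mul_mem' := by
        rintro x y ⟨h1, h2⟩ ⟨h3, h4⟩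
        exact ⟨mul_mem h1 h3, by rw [add x h1 y h3, h2, h4, add_zero]⟩
      inv_mem' := by
        rintro x ⟨h1, h2⟩
        exact ⟨inv_mem h1, by rw [h.inv (hG h1), h2, neg_zero]⟩ }
  suffices hZ : PE s E ≤ Z from (hZ hz).2
  refine (Subgroup.closure_le _).2 ?_
  rintro z ⟨E', hE', hL, c, f, hf, hz⟩
  have hB : BB Z s E' := by
    apply BB_of_comm
    intro c a ha b hb
    obtain ⟨x, hx, k1⟩ := BB_Loc hs h0 hL c a ha
    obtain ⟨y, hy, k2⟩ := BB_Loc hs h0 hL c b hb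
    have hxP : x ∈ PE s E := Subgroup.subset_closure ⟨E', hE', hL, c, a, ha, k1⟩
    have hyP : y ∈ PE s E := Subgroup.subset_closure ⟨E', hE', hL, c, b, hb, k2⟩
    refine ⟨⁅x, y⁆, ⟨mul_mem (mul_mem (mul_mem hxP hyP) (inv_mem hxP)) (inv_mem hyP), ?_⟩,
      mul_mem (mul_mem (mul_mem k1 k2) (inv_mem k1)) (inv_mem k2)⟩
    rw [commutatorElement_def, add _ (mul_mem (mul_mem hxP hyP) (inv_mem hxP)) _ (inv_mem hyP),
      add _ (mul_mem hxP hyP) _ (inv_mem hxP), add x hxP y hyP, h.inv hx, h.inv hy]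
    ring
  obtain ⟨y, hy, k⟩ := hB c f hf
  rw [Sgp_uniq hz k]; exact hy

end QM

namespace QM
open Filter Topology
open scoped commutatorElement

/-! ### Displacing along the runs of `E` -/

lemma Sgp_combine {G : Subgroup Hm} {s o : ℤ → ℤ} (hs : PM s) (ho : PM o) (h0 : BB G s Set.univ)
    {E : Set ℤ} (hE : Loc s E) (hso : Loc s {m | s m * o m = 1}) : BB G o E := by
  intro c f hf
  have hB1 := BB_inter (BB_Loc hs h0 hE) (BB_Loc hs h0 hso)
  have hB2 := BB_inter (BB_Loc hs h0 hE) (BB_compl h0 (BB_Loc hs h0 hso))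
  obtain ⟨z1, hz1, k1⟩ := hB1 c f hf
  obtain ⟨z2, hz2, k2⟩ := hB2 c (mir f) (mir_Fc hf)
  refine ⟨z1 * z2, mul_mem hz1 hz2, Sgp_mk ho (Fc_FO hf) ?_ ?_⟩
  · intro m hm hmE x hx
    by_cases hc : s m * o m = 1
    · have a1 := Sgp_in k1 hm ⟨hmE, hc⟩
      have a2 := Sgp_out k2 hm (fun h => h.2 hc)
      have := (mul_mem a1 a2).1 x hx
      have e : s m = o m := by
        rcases hs m with h | h <;> rcases ho m with h' | h' <;> simp_all
      rw [← e]
      simpa using this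
    · have a1 := Sgp_out k1 hm (fun h => hc h.2)
      have a2 := Sgp_in k2 hm ⟨hmE, hc⟩
      have := (mul_mem a1 a2).1 x hx
      have e : o m = - s m := by
        rcases hs m with h | h <;> rcases ho m with h' | h' <;> simp_all
      have this : (z1 * z2) x = (1 * loc m (s m) (mir f)) x := this
      rw [this, one_mul, loc_app m (hs m), loc_app m (ho m), mir_app, e]
      push_cast; ring_nf
  · intro m hm hmE x hx
    have a1 := Sgp_out k1 hm (fun h => hmE h.1)
    have a2 := Sgp_out k2 hm (fun h => hmE h.1)
    have := (mul_mem a1 a2).1 x hx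
    simpa using this

section dyn
variable {E : Set ℤ} {o : ℤ → ℤ} {κ : ℤ → ℕ} {r : ℝ}

def Exit (E : Set ℤ) (o : ℤ → ℤ) (r : ℝ) : Set ℝ :=
  {x | ∃ m ∈ E, m + o m ∉ E ∧ r < o m * (x - m / 2) ∧ o m * (x - m / 2) < 1 / 2}

def Stg (E : Set ℤ) (o : ℤ → ℤ) (κ : ℤ → ℕ) (r : ℝ) (k : ℕ) : Set ℝ :=
  {x | ∃ m ∈ E, k ≤ κ m ∧ |x - m / 2| ≤ r} ∪ Exit E o r

lemma abs_pm {ε : ℤ} (h : ε = 1 ∨ ε = -1) (y : ℝ) : |(ε : ℝ) * y| = |y| := by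
  rcases h with rfl | rfl <;> simp

lemma Iv_iff {m : ℤ} {x : ℝ} : x ∈ Iv m ↔ |x - m / 2| ≤ 1 / 2 := by
  rw [abs_le]
  constructor
  · rintro ⟨h1, h2⟩; constructor <;> linarith
  · rintro ⟨h1, h2⟩; constructor <;> linarith

lemma Exit_disj (ho : PM o) (hr : r < 1 / 2) (hr' : 1 / 4 < r) :
    Disjoint (XX E r) (Exit E o r) := by
  rw [Set.disjoint_left]
  rintro x ⟨m', hm', hx⟩ ⟨m, hm, hmE, h1, h2⟩
  have hx := abs_le.1 hx
  have key : m' = m ∨ m' = m + o m := by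
    rcases ho m with h | h <;> rw [h] at h1 h2 ⊢ <;> push_cast at h1 h2
    · have a1 : (m' : ℝ) < m + 2 := by linarith
      have a2 : (m : ℝ) - 1 < m' := by linarith
      have a1 : m' < m + 2 := by exact_mod_cast a1
      have a2 : m - 1 < m' := by exact_mod_cast a2
      omega
    · have a1 : (m' : ℝ) < m + 1 := by linarith
      have a2 : (m : ℝ) - 2 < m' := by linarith
      have a1 : m' < m + 1 := by exact_mod_cast a1
      have a2 : m - 2 < m' := by exact_mod_cast a2
      omega
  rcases key with rfl | rfl
  · have : |(o m' : ℝ) * (x - m' / 2)| ≤ r := by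
      rw [abs_pm (ho m'), abs_le]; exact hx
    linarith [le_abs_self ((o m' : ℝ) * (x - m' / 2))]
  · exact hmE hm'

lemma Stg_step (ho : PM o) (hconst : ∀ m ∈ E, m + 1 ∈ E → o (m + 1) = o m)
    (hκ : ∀ m ∈ E, m + o m ∈ E → κ m < κ (m + o m)) (hpar : ∀ m, m % 2 = (κ m : ℤ) % 2)
    (hr : r < 1 / 2) (hr' : 1 / 4 < r) {p : Hm} (hp : p ∈ FO) (hp1 : r < p (-r))
    (hp2 : ∀ x, x ≤ p x) {k : ℕ} {τ : Hm} (hτ : (p, τ) ∈ Sgp o k {m | m ∈ E ∧ κ m = k})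
    {x : ℝ} (hx : x ∈ Stg E o κ r k) : τ x ∈ Stg E o κ r (k + 1) := by
  have ph : p (1 / 2) = 1 / 2 := hp _ (by simp)
  have hin : ∀ m ∈ E, κ m = k → x ∈ Iv m → o m * (τ x - m / 2) = p (o m * (x - m / 2)) := by
    intro m hm hk hxm
    have h1 : τ x = loc m (o m) p x := (Sgp_in hτ (by rw [hpar m, hk]) ⟨hm, hk⟩).1 x hxm
    rw [h1, loc_app m (ho m)]
    linear_combination (p (o m * (x - m / 2)) : ℝ) * sq_pm (ho m)
  have hout : ∀ m : ℤ, m % 2 = (k : ℤ) % 2 → ¬ (m ∈ E ∧ κ m = k) → x ∈ Iv m → τ x = x := by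
    intro m hm hk hxm
    exact (Sgp_out hτ hm hk).1 x hxm
  rcases hx with ⟨m, hm, hkm, hxr⟩ | ⟨m, hm, hmE, hx1, hx2⟩
  · have hxI : x ∈ Iv m := Iv_iff.2 (hxr.trans hr.le)
    rcases hkm.eq_or_lt with hk | hk
    · -- the point gets pushed out of `m`
      have h1 := hin m hm hk.symm hxI
      have hxr' : |(o m : ℝ) * (x - m / 2)| ≤ r := by rw [abs_pm (ho m)]; exact hxr
      have h2 := abs_le.1 hxr'
      have h3 : r < o m * (τ x - m / 2) := by
        rw [h1]; exact hp1.trans_le (p.monotone h2.1)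
      have h4 : o m * (τ x - m / 2) < 1 / 2 := by
        rw [h1, ← ph]; exact p.strictMono (by linarith)
      by_cases hmE : m + o m ∈ E
      · left
        refine ⟨m + o m, hmE, ?_, ?_⟩
        · have := hκ m hm hmE; omega
        · rw [← abs_pm (ho m), abs_le]
          have e : (o m : ℝ) * (τ x - ((m + o m : ℤ) : ℝ) / 2) = o m * (τ x - m / 2) - 1 / 2 := by
            push_cast
            linear_combination (-(1 / 2) : ℝ) * sq_pm (ho m)
          rw [e]
          constructor <;> linarith
      · right; exact ⟨m, hm, hmE, h3, h4⟩
    · by_cases hpm : m % 2 = (k : ℤ) % 2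
      · rw [hout m hpm (fun h => by omega) hxI]
        left; exact ⟨m, hm, hk, hxr⟩
      · obtain ⟨m', hm', hxm'⟩ := tile k x
        by_cases hc : m' ∈ E ∧ κ m' = k
        · obtain ⟨hm'E, hk'⟩ := hc
          have hadj : m' = m + 1 ∨ m' = m - 1 := by
            have h1 := abs_le.1 hxr
            have h2 := abs_le.1 (Iv_iff.1 hxm')
            have a1 : (m' : ℝ) < m + 2 := by linarith
            have a2 : (m : ℝ) - 2 < m' := by linarith
            have a1 : m' < m + 2 := by exact_mod_cast a1
            have a2 : m - 2 < m' := by exact_mod_cast a2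
            omega
          have hmm : m = m' + o m' ∧ o m = o m' := by
            rcases hadj with rfl | rfl
            · have e := hconst m hm hm'E
              rcases ho m with h | h
              · have := hκ m hm (by rw [h]; exact hm'E)
                rw [h] at this; omega
              · rw [e, h]; exact ⟨by ring, rfl⟩
            · have e := hconst (m - 1) hm'E (by simpa using hm)
              rw [sub_add_cancel] at e
              rcases ho m with h | h
              · rw [← e, h]; exact ⟨by ring, rfl⟩
              · have := hκ m hm (by rw [h]; exact hm'E)
                rw [h] at this
                rw [← sub_eq_add_neg] at this
                omega
          obtain ⟨e1, e2⟩ := hmm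
          left
          refine ⟨m, hm, hk, ?_⟩
          have h1 := hin m' hm'E hk' hxm'
          rw [← abs_pm (ho m), abs_le] at hxr ⊢
          have e : ∀ y : ℝ, (o m : ℝ) * (y - m / 2) = o m' * (y - m' / 2) - 1 / 2 := by
            intro y
            rw [e2]
            have : (m : ℝ) = m' + o m' := by exact_mod_cast e1
            rw [this]
            linear_combination (-(1 / 2) : ℝ) * sq_pm (ho m')
          rw [e] at hxr ⊢
          rw [h1]
          have h2 := hp2 (o m' * (x - m' / 2))
          have h3 : (o m' : ℝ) * (x - m' / 2) ≤ 1 / 2 := by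
            have := Iv_iff.1 hxm'
            rw [← abs_pm (ho m')] at this
            exact (le_abs_self _).trans this
          have h4 : p (o m' * (x - m' / 2)) ≤ 1 / 2 := by
            have := p.monotone h3; rwa [ph] at this
          constructor <;> linarith [hxr.1]
        · rw [hout m' hm' hc hxm']
          left; exact ⟨m, hm, hk, hxr⟩
  · right
    have hxI : x ∈ Iv m := by
      rw [Iv_iff, ← abs_pm (ho m), abs_le]; constructor <;> linarith
    by_cases hpm : m % 2 = (k : ℤ) % 2
    · by_cases hk : κ m = k
      · have h1 := hin m hm hk hxI
        refine ⟨m, hm, hmE, ?_, ?_⟩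
        · rw [h1]; exact hx1.trans_le (hp2 _)
        · rw [h1, ← ph]; exact p.strictMono hx2
      · rw [hout m hpm (fun h => hk h.2) hxI]
        exact ⟨m, hm, hmE, hx1, hx2⟩
    · have : τ x = x := by
        apply hout (m + o m)
        · rcases ho m with h | h <;> rw [h] <;> omega
        · exact fun h => hmE h.1
        · rw [Iv_iff, ← abs_pm (ho m), abs_le]
          have e : (o m : ℝ) * (x - ((m + o m : ℤ) : ℝ) / 2) = o m * (x - m / 2) - 1 / 2 := by
            push_cast
            linear_combination (-(1 / 2) : ℝ) * sq_pm (ho m)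
          rw [e]
          constructor <;> linarith
      rw [this]
      exact ⟨m, hm, hmE, hx1, hx2⟩

lemma Dis_of {G : Subgroup Hm} {s : ℤ → ℤ} (hs : PM s) (h0 : BB G s Set.univ) (ho : PM o)
    (hso : Loc s {m | s m * o m = 1}) (hL : ∀ k, Loc s {m | m ∈ E ∧ κ m = k})
    (hconst : ∀ m ∈ E, m + 1 ∈ E → o (m + 1) = o m)
    (hκ : ∀ m ∈ E, m + o m ∈ E → κ m < κ (m + o m)) (hpar : ∀ m, m % 2 = (κ m : ℤ) % 2)
    {K : ℕ} (hK : ∀ m ∈ E, κ m < K) : Dis G E := by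
  intro r hr' hr
  obtain ⟨p, hp, hp1, hp2⟩ := push_exists (by linarith : 0 < r) hr
  have key : ∀ k : ℕ, ∃ t ∈ G, ∀ x ∈ Stg E o κ r 0, t x ∈ Stg E o κ r k := by
    intro k
    induction k with
    | zero => exact ⟨1, one_mem _, fun x hx => hx⟩
    | succ k ih =>
      obtain ⟨t, ht, h⟩ := ih
      obtain ⟨τ, hτ, h2⟩ := Sgp_combine hs ho h0 (hL k) hso k p hp
      exact ⟨τ * t, mul_mem hτ ht, fun x hx =>
        Stg_step ho hconst hκ hpar hr hr' (Fc_FO hp) hp1 hp2 h2 (h x hx)⟩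
  obtain ⟨t, ht, h⟩ := key K
  refine ⟨t, ht, Exit E o r, Exit_disj ho hr hr', ?_⟩
  intro u hu
  have hu0 : u ∈ Stg E o κ r 0 := by
    rcases hu with ⟨m, hm, hu⟩ | hu
    · left; exact ⟨m, hm, Nat.zero_le _, hu⟩
    · right; exact hu
  rcases h u hu0 with ⟨m, hm, hk, _⟩ | h
  · exact absurd (hK m hm) (by omega)
  · exact h

end dyn

/-! ### Orientation and depth -/

lemma Sim_mono {s : ℤ → ℤ} {R R' : ℕ} (h : R ≤ R') {m m' : ℤ} (h' : Sim s R' m m') :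
    Sim s R m m' := ⟨h'.1, fun i hi => h'.2 i (hi.trans (by exact_mod_cast h))⟩

lemma Sim_symm {s : ℤ → ℤ} {R : ℕ} {m m' : ℤ} (h : Sim s R m m') : Sim s R m' m :=
  ⟨h.1.symm, fun i hi => (h.2 i hi).symm⟩

lemma Sim_trans {s : ℤ → ℤ} {R : ℕ} {m m' m'' : ℤ} (h : Sim s R m m') (h' : Sim s R m' m'') :
    Sim s R m m'' := ⟨h.1.trans h'.1, fun i hi => (h.2 i hi).trans (h'.2 i hi)⟩

lemma qq_shift {s : ℤ → ℤ} (hs : PM s) (m i j : ℤ) :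
    qq s (m + s m * i) j = qq s m i * qq s m (i + qq s m i * j) := by
  have e : s (m + s m * i) = s m * qq s m i := by
    unfold qq
    rcases hs m with h | h <;> rw [h] <;> ring
  have e2 : m + s m * i + s m * qq s m i * j = m + s m * (i + qq s m i * j) := by ring
  have : qq s (m + s m * i) j = s (m + s m * i) * s (m + s m * i + s (m + s m * i) * j) := rfl
  rw [this, e, e2]
  have : qq s m (i + qq s m i * j) = s m * s (m + s m * (i + qq s m i * j)) := rfl
  rw [this]; ring

lemma Sim_shift {s : ℤ → ℤ} (hs : PM s) {R : ℕ} {m m' i : ℤ} {L : ℕ} (h : Sim s (R + L) m m')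
    (hi : |i| ≤ L) : Sim s R (m + s m * i) (m' + s m' * i) := by
  have hq : qq s m i = qq s m' i := h.2 i (by push_cast; omega)
  refine ⟨?_, fun j hj => ?_⟩
  · have h1 := h.1
    rcases hs m with h | h <;> rcases hs m' with h' | h' <;> rw [h, h'] <;> omega
  · rw [qq_shift hs, qq_shift hs, ← hq]
    congr 1
    apply h.2
    have : |qq s m i * j| = |j| := by
      rcases qq_pm hs m i with h | h <;> rw [h] <;> simp
    calc |i + qq s m i * j| ≤ |i| + |qq s m i * j| := abs_add_le _ _
      _ ≤ _ := by rw [this]; push_cast; omega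

noncomputable def out (E : Set ℤ) (ε m : ℤ) : ℕ := sInf {j : ℕ | m + ε * j ∉ E}

def Gap (E : Set ℤ) (L : ℕ) : Prop := ∀ m : ℤ, ∃ j : ℕ, j ≤ L ∧ m + j ∉ E

lemma Gap_pm {E : Set ℤ} {L : ℕ} (h : Gap E L) {ε : ℤ} (hε : ε = 1 ∨ ε = -1) (m : ℤ) :
    ∃ j : ℕ, j ≤ L ∧ m + ε * j ∉ E := by
  rcases hε with rfl | rfl
  · simpa using h m
  · obtain ⟨j, hj, hm⟩ := h (m - L)
    refine ⟨L - j, by omega, ?_⟩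
    push_cast [Nat.cast_sub hj]
    convert hm using 1
    ring

lemma out_le {E : Set ℤ} {L : ℕ} (h : Gap E L) {ε : ℤ} (hε : ε = 1 ∨ ε = -1) (m : ℤ) :
    out E ε m ≤ L := by
  obtain ⟨j, hj, hm⟩ := Gap_pm h hε m
  exact (Nat.sInf_le hm).trans hj

lemma out_mem {E : Set ℤ} {L : ℕ} (h : Gap E L) {ε : ℤ} (hε : ε = 1 ∨ ε = -1) (m : ℤ) :
    m + ε * out E ε m ∉ E := by
  obtain ⟨j, hj, hm⟩ := Gap_pm h hε m
  exact Nat.sInf_mem (s := {j : ℕ | m + ε * j ∉ E}) ⟨j, hm⟩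

lemma out_min {E : Set ℤ} {ε m : ℤ} {j : ℕ} (h : m + ε * j ∉ E) : out E ε m ≤ j := Nat.sInf_le h

lemma out_succ {E : Set ℤ} {L : ℕ} (h : Gap E L) {ε : ℤ} (hε : ε = 1 ∨ ε = -1) {m : ℤ}
    (hm : m ∈ E) : out E ε m = out E ε (m + ε) + 1 := by
  apply le_antisymm
  · apply out_min
    have := out_mem h hε (m + ε)
    push_cast
    convert this using 1
    ring
  · have h1 := out_mem h hε m
    have h2 : out E ε m ≠ 0 := by
      intro h0
      rw [h0] at h1
      simp at h1
      exact h1 hm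
    have h3 : out E ε (m + ε) ≤ out E ε m - 1 := by
      apply out_min
      rw [Nat.cast_sub (by omega)]
      convert h1 using 1
      push_cast; ring
    omega

lemma out_Sim {E : Set ℤ} {s : ℤ → ℤ} (hs : PM s) {R L : ℕ}
    (hE : ∀ m m', Sim s R m m' → (m ∈ E ↔ m' ∈ E)) (hg : Gap E L) {m m' : ℤ}
    (h : Sim s (R + L) m m') {ε : ℤ} (hε : ε = 1 ∨ ε = -1) :
    out E (ε * s m) m = out E (ε * s m') m' := by
  have pm : ∀ m, ε * s m = 1 ∨ ε * s m = -1 := by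
    intro m
    rcases hε with rfl | rfl <;> rcases hs m with h | h <;> simp [h]
  have key : ∀ j : ℕ, j ≤ L → (m + ε * s m * j ∈ E ↔ m' + ε * s m' * j ∈ E) := by
    intro j hj
    have := hE _ _ (Sim_shift hs (i := ε * j) h (by
      rcases hε with rfl | rfl <;> simp [hj]))
    convert this using 2 <;> ring_nf
  apply le_antisymm
  · apply out_min
    rw [key _ (out_le hg (pm m') m')]
    exact out_mem hg (pm m') m'
  · apply out_min
    rw [← key _ (out_le hg (pm m) m)]
    exact out_mem hg (pm m) m

/-- midpoint of a run, rounded to an even position if necessary -/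
def root (c : ℤ) : ℤ := if c % 2 = 0 then c / 2 else if c % 4 = 1 then (c - 1) / 2 else (c + 1) / 2

/-- the offset of the root -/
def roff (q D : ℤ) : ℤ :=
  if D % 2 = 0 then D / 2 else if (q + (D - 1) / 2) % 2 = 0 then (D - 1) / 2 else (D + 1) / 2

lemma roff_eq {ε : ℤ} (hε : ε = 1 ∨ ε = -1) (m D : ℤ) :
    root (2 * m + ε * D) = m + ε * roff (m % 2) D := by
  unfold root roff
  rcases hε with rfl | rfl <;> split_ifs <;> omega

lemma roff_le {q D : ℤ} {L : ℕ} (h : |D| ≤ L) : |roff q D| ≤ L := by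
  unfold roff
  rw [abs_le] at *
  split_ifs <;> omega

noncomputable def ori (s : ℤ → ℤ) (E : Set ℤ) (m : ℤ) : ℤ :=
  s (root (2 * m + (out E 1 m - out E (-1) m)))

noncomputable def kap (s : ℤ → ℤ) (E : Set ℤ) (m : ℤ) : ℕ :=
  2 * out E (-ori s E m) m + (m % 2).toNat

lemma Dis_Loc {G : Subgroup Hm} {s : ℤ → ℤ} (hs : PM s) (h0 : BB G s Set.univ) {E : Set ℤ}
    (hE : Loc s E) {L : ℕ} (hg : Gap E L) : Dis G E := by
  obtain ⟨R, hR⟩ := hE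
  have ho : PM (ori s E) := fun m => hs _
  have hneg : ∀ m, -ori s E m = 1 ∨ -ori s E m = -1 := by
    intro m; rcases ho m with h | h <;> simp [h]
  have one : (1 : ℤ) = 1 ∨ (1 : ℤ) = -1 := Or.inl rfl
  have mone : (-1 : ℤ) = 1 ∨ (-1 : ℤ) = -1 := Or.inr rfl
  -- the product of `s` and the orientation
  have hprod : ∀ m, s m * ori s E m =
      qq s m (roff (m % 2) (out E (1 * s m) m - out E (-1 * s m) m)) := by
    intro m
    unfold qq ori
    congr 2
    rw [← roff_eq (hs m)]
    congr 2
    rcases hs m with h | h <;> rw [h] <;> simp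
  have hprodS : ∀ m m', Sim s (R + L) m m' → s m * ori s E m = s m' * ori s E m' := by
    intro m m' h
    rw [hprod, hprod, ← out_Sim hs hR hg h one, ← out_Sim hs hR hg h mone, ← h.1]
    apply h.2
    have pm1 : 1 * s m = 1 ∨ 1 * s m = -1 := by rw [one_mul]; exact hs m
    have pm2 : -1 * s m = 1 ∨ -1 * s m = -1 := by
      rcases hs m with h | h <;> simp [h]
    have a1 := out_le hg pm1 m
    have a2 := out_le hg pm2 m
    have : |((out E (1 * s m) m : ℤ) - out E (-1 * s m) m)| ≤ L := by
      rw [abs_le]; constructor <;> omega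
    have := roff_le (q := m % 2) this
    push_cast
    omega
  have hkapS : ∀ m m', Sim s (R + L) m m' → kap s E m = kap s E m' := by
    intro m m' h
    unfold kap
    rw [h.1]
    have h1 := hprodS m m' h
    have e : ∀ m, -ori s E m = -(s m * ori s E m) * s m := by
      intro m; rcases hs m with h | h <;> rw [h] <;> ring
    rw [e m, e m', ← h1]
    rw [out_Sim hs hR hg h (ε := -(s m * ori s E m))]
    rcases hs m with h | h <;> rcases ho m with h' | h' <;> simp [h, h']
  refine Dis_of (o := ori s E) (κ := kap s E) (K := 2 * L + 2) hs h0 ho ⟨R + L, ?_⟩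
    (fun k => ⟨R + L, ?_⟩) ?_ ?_ ?_ ?_
  · intro m m' h
    simp only [Set.mem_ofPred_eq]
    rw [hprodS m m' h]
  · intro m m' h
    simp only [Set.mem_ofPred_eq]
    rw [hkapS m m' h, hR m m' (Sim_mono (Nat.le_add_right R L) h)]
  · intro m hm hm1
    have a1 := out_succ hg one hm
    have a2 := out_succ hg mone hm1
    rw [show m + 1 + -1 = m by ring] at a2
    unfold ori
    congr 2
    omega
  · intro m hm hm1
    have e : ori s E (m + ori s E m) = ori s E m := by
      have const : ∀ m ∈ E, m + 1 ∈ E → ori s E (m + 1) = ori s E m := by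
        intro m hm hm1
        have a1 := out_succ hg one hm
        have a2 := out_succ hg mone hm1
        rw [show m + 1 + -1 = m by ring] at a2
        unfold ori
        congr 2
        omega
      rcases ho m with h | h
      · rw [h] at hm1 ⊢
        rw [const m hm hm1, h]
      · rw [h] at hm1 ⊢
        have := const (m + -1) hm1 (by simpa using hm)
        rw [show m + -1 + 1 = m by ring] at this
        rw [← this, h]
    unfold kap
    rw [e]
    have := out_succ hg (hneg m) hm1
    rw [show m + ori s E m + -ori s E m = m by ring] at this
    rw [this]
    have b1 : (m % 2).toNat ≤ 1 := by omega
    omega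
  · intro m
    unfold kap
    omega
  · intro m _
    unfold kap
    have := out_le hg (hneg m) m
    omega

end QM

namespace QM
open Filter Topology
open scoped commutatorElement

lemma bw_eq (ρ : ℤ → Letter) (k : ℤ) (n : ℕ) :
    blockWord ρ k n = (List.range (n + 1)).map (fun i : ℕ => ρ (k + (i : ℤ))) := by
  unfold blockWord
  simp only [List.bind_eq_flatMap, List.pure_def, ← List.map_eq_flatMap, List.map_map]
  rfl

lemma infix_block {ρ : ℤ → Letter} {k k' : ℤ} {n n' : ℕ}
    (h : blockWord ρ k n <:+: blockWord ρ k' n') :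
    ∃ p : ℕ, p + n ≤ n' ∧ ∀ i : ℕ, i ≤ n → ρ (k' + p + i) = ρ (k + i) := by
  obtain ⟨u, v, huv⟩ := h
  have hlen := congrArg List.length huv
  simp only [bw_eq, List.length_append, List.length_map, List.length_range] at hlen
  refine ⟨u.length, by omega, fun i hi => ?_⟩
  have h1 : (blockWord ρ k' n')[u.length + i]? = some (ρ (k' + u.length + i)) := by
    simp only [bw_eq, List.getElem?_map]
    rw [List.getElem?_range (by omega)]
    simp [add_assoc]
  have h2 : (u ++ blockWord ρ k n ++ v)[u.length + i]? = some (ρ (k + i)) := by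
    rw [List.append_assoc, List.getElem?_append_right (by omega), Nat.add_sub_cancel_left,
      List.getElem?_append_left (by simp [bw_eq]; omega)]
    simp only [bw_eq, List.getElem?_map]
    rw [List.getElem?_range (by omega)]
    simp
  rw [huv, h1] at h2
  exact Option.some.inj h2

lemma inv_block {ρ : ℤ → Letter} {k k' : ℤ} {n : ℕ}
    (h : blockWord ρ k' n = wordInv (blockWord ρ k n)) (i : ℕ) (hi : i ≤ n) :
    ρ (k' + i) = (ρ (k + n - i)).inv := by
  have h1 : (blockWord ρ k' n)[i]? = some (ρ (k' + i)) := by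
    simp only [bw_eq, List.getElem?_map]
    rw [List.getElem?_range (by omega)]
    simp
  have h2 : (wordInv (blockWord ρ k n))[i]? = some ((ρ (k + n - i)).inv) := by
    unfold wordInv
    rw [List.getElem?_reverse (by simp [bw_eq]; omega)]
    simp only [bw_eq, List.getElem?_map, List.length_map, List.length_range]
    rw [List.getElem?_range (by omega)]
    have : ((n + 1 - 1 - i : ℕ) : ℤ) = n - i := by omega
    simp only [Option.map_some, this]
    rw [add_sub_assoc]
  rw [h, h2] at h1
  exact (Option.some.inj h1).symm

lemma sgn_congr {ρ : ℤ → Letter} {m m' : ℤ} (h : ρ m = ρ m') : sgn ρ m = sgn ρ m' := by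
  unfold sgn; rw [h]

lemma sgn_inv {ρ : ℤ → Letter} {m m' : ℤ} (h : ρ m = (ρ m').inv) : sgn ρ m = - sgn ρ m' := by
  unfold sgn; rw [h]
  cases ρ m' <;> simp [Letter.inv]

lemma par_congr {ρ : ℤ → Letter} (hl : IsLabelling ρ) {m m' : ℤ} (h : ρ m = ρ m') :
    m % 2 = m' % 2 := by
  rcases Int.even_or_odd m with e | e <;> rcases Int.even_or_odd m' with e' | e'
  · rw [Int.even_iff.1 e, Int.even_iff.1 e']
  · exfalso
    have h1 := (hl m).1 e
    have h2 := (hl m').2 e'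
    rw [h] at h1
    rcases h1 with h1 | h1 <;> rw [h1] at h2 <;> simp at h2
  · exfalso
    have h1 := (hl m).2 e
    have h2 := (hl m').1 e'
    rw [h] at h1
    rcases h1 with h1 | h1 <;> rw [h1] at h2 <;> simp at h2
  · rw [Int.odd_iff.1 e, Int.odd_iff.1 e']

lemma par_inv {ρ : ℤ → Letter} (hl : IsLabelling ρ) {m m' : ℤ} (h : ρ m = (ρ m').inv) :
    m % 2 = m' % 2 := by
  rcases Int.even_or_odd m with e | e <;> rcases Int.even_or_odd m' with e' | e'
  · rw [Int.even_iff.1 e, Int.even_iff.1 e']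
  · exfalso
    have h1 := (hl m).1 e
    have h2 := (hl m').2 e'
    rw [h] at h1
    rcases h2 with h2 | h2 <;> rw [h2] at h1 <;> simp [Letter.inv] at h1
  · exfalso
    have h1 := (hl m).2 e
    have h2 := (hl m').1 e'
    rw [h] at h1
    rcases h2 with h2 | h2 <;> rw [h2] at h1 <;> simp [Letter.inv] at h1
  · rw [Int.odd_iff.1 e, Int.odd_iff.1 e']

lemma per_mul {s : ℤ → ℤ} {d : ℤ} (h : ∀ x, s x = s (x + d)) (x : ℤ) (t : ℤ) :
    s (x + t * d) = s x := by
  have hp : Function.Periodic s d := fun x => (h x).symm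
  simpa using hp.int_mul t x

lemma not_per {ρ : ℤ → Letter} (hρ : IsQuasiPeriodic ρ) {d : ℕ} (hd : 1 ≤ d) :
    ∃ x, sgn ρ x ≠ sgn ρ (x + d) := by
  by_contra hcon
  push Not at hcon
  obtain ⟨hl, -, h2⟩ := hρ
  obtain ⟨k', hk⟩ := h2 0 d
  have hi := inv_block hk
  have hpar : (k' + d) % 2 = 0 := by
    have := par_inv hl (hi 0 (by omega))
    push_cast at this
    omega
  set e := (k' + d) / 2 with he
  have hee : k' + d = 2 * e := by omega
  -- x = e + t d in the window [k', k'+d]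
  set i : ℕ := ((e - k') % d).toNat with hidef
  have hd0 : (0 : ℤ) < d := by omega
  have hi0 : (i : ℤ) = (e - k') % d := by
    rw [hidef]; exact Int.toNat_of_nonneg (Int.emod_nonneg _ (by omega))
  have hilt : (i : ℤ) < d := by rw [hi0]; exact Int.emod_lt_of_pos _ hd0
  have hdm := Int.emod_add_mul_ediv (e - k') d
  set t := (e - k') / d with ht
  have e1 := sgn_inv (hi i (by omega))
  have p1 : sgn ρ (k' + i) = sgn ρ e := by
    have := per_mul hcon (k' + i) t
    rw [← this]; congr 1; rw [hi0]; linarith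
  have p2 : sgn ρ (0 + d - i) = sgn ρ e := by
    have := per_mul hcon e t
    rw [← this]; congr 1; rw [hi0]; linarith
  rw [p1, p2] at e1
  rcases sgn_PM ρ e with h | h <;> rw [h] at e1 <;> omega

lemma not_per_unif {ρ : ℤ → Letter} (hρ : IsQuasiPeriodic ρ) (n : ℕ) :
    ∃ r : ℕ, ∀ d : ℕ, 1 ≤ d → d ≤ n → ∀ m : ℤ,
      ∃ j : ℕ, j ≤ r ∧ sgn ρ (m + j) ≠ sgn ρ (m + j + d) := by
  have key : ∀ d : ℕ, ∃ r : ℕ, 1 ≤ d → ∀ m : ℤ,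
      ∃ j : ℕ, j ≤ r ∧ sgn ρ (m + j) ≠ sgn ρ (m + j + d) := by
    intro d
    by_cases hd : 1 ≤ d
    · obtain ⟨x, hx⟩ := not_per hρ hd
      obtain ⟨N, hN⟩ := hρ.2.1 x d
      refine ⟨N, fun _ m => ?_⟩
      obtain ⟨p, hp, hpi⟩ := infix_block (hN m N (by omega))
      refine ⟨p, by omega, ?_⟩
      have h0 := sgn_congr (hpi 0 (by omega))
      have h1 := sgn_congr (hpi d (by omega))
      simp only [Nat.cast_zero, add_zero] at h0
      rw [h0, h1]; exact hx
    · exact ⟨0, fun h => absurd h hd⟩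
  choose r hr using key
  refine ⟨∑ d ∈ Finset.range (n + 1), r d, fun d h1 h2 m => ?_⟩
  obtain ⟨j, hj, hh⟩ := hr d h1 m
  exact ⟨j, hj.trans (Finset.single_le_sum (f := r) (fun _ _ => Nat.zero_le _)
    (Finset.mem_range.2 (by omega))), hh⟩

/-- markers -/
def Om (s : ℤ → ℤ) (r : ℕ) : Set ℤ := {m | Sim s r 0 m}

lemma Om_sep {ρ : ℤ → Letter} (hρ : IsQuasiPeriodic ρ) (n : ℕ) :
    ∃ r : ℕ, ∀ m ∈ Om (sgn ρ) r, ∀ m' ∈ Om (sgn ρ) r, m < m' → n < m' - m := by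
  obtain ⟨r, hr⟩ := not_per_unif hρ n
  refine ⟨r + n, fun m hm m' hm' hlt => ?_⟩
  by_contra hcon
  push Not at hcon
  have hS := Sim_trans (Sim_symm hm) hm'
  set s := sgn ρ with hs
  have hPM : PM s := sgn_PM ρ
  obtain ⟨hp, hq⟩ := hS
  obtain ⟨d, hd⟩ : ∃ d : ℕ, m' = m + d := ⟨(m' - m).toNat, by omega⟩
  by_cases hsame : s m = s m'
  · obtain ⟨j, hj, hne⟩ := hr d (by omega) (by omega) m
    apply hne
    have := hq (s m * j) (by
      rcases hPM m with h | h <;> rw [h] <;> push_cast <;> simp <;> omega)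
    unfold qq at this
    rw [← hsame] at this
    have e : s m * (s m * j) = j := by
      rcases hPM m with h | h <;> rw [h] <;> ring
    rw [e] at this
    have hne0 : s m ≠ 0 := by rcases hPM m with h | h <;> rw [h] <;> norm_num
    have := mul_left_cancel₀ hne0 this
    rw [this]; congr 1; omega
  · have hopp : s m' = - s m := by
      rcases hPM m with h | h <;> rcases hPM m' with h' | h' <;> rw [h, h'] at hsame ⊢ <;> simp at hsame ⊢
    obtain ⟨e, he⟩ : ∃ e : ℕ, d = 2 * e := ⟨d / 2, by omega⟩
    have := hq (s m * e) (by
      rcases hPM m with h | h <;> rw [h] <;> push_cast <;> simp <;> omega)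
    unfold qq at this
    rw [hopp] at this
    have e1 : m + s m * (s m * e) = m + e := by
      rcases hPM m with h | h <;> rw [h] <;> ring
    have e2 : m' + -s m * (s m * e) = m + e := by
      rw [hd, he]; push_cast
      rcases hPM m with h | h <;> rw [h] <;> ring
    rw [e1, e2] at this
    rcases hPM m with h | h <;> rcases hPM (m + e) with h' | h' <;> rw [h, h'] at this <;> omega

lemma Om_synd {ρ : ℤ → Letter} (hρ : IsQuasiPeriodic ρ) (r : ℕ) :
    ∃ L : ℕ, Gap (Om (sgn ρ) r)ᶜ L := by
  obtain ⟨N, hN⟩ := hρ.2.1 (-r) (2 * r)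
  refine ⟨N, fun m => ?_⟩
  obtain ⟨p, hp, hpi⟩ := infix_block (hN m N (by omega))
  refine ⟨p + r, by omega, ?_⟩
  have key : ∀ i : ℤ, |i| ≤ r → ρ (m + (p + r : ℕ) + i) = ρ (0 + i) := by
    intro i hi
    rw [abs_le] at hi
    have := hpi (i + r).toNat (by omega)
    rw [Int.toNat_of_nonneg (by omega)] at this
    convert this using 2 <;> push_cast <;> ring
  simp only [Set.mem_compl_iff, not_not]
  have h0 := key 0 (by simp)
  simp only [add_zero] at h0
  have hs0 := sgn_congr h0
  refine ⟨(par_congr hρ.1 h0).symm, fun i hi => ?_⟩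
  unfold qq
  rw [hs0]
  have := sgn_congr (key (sgn ρ 0 * i) (by
    rcases sgn_PM ρ 0 with h | h <;> rw [h] <;> simpa using hi))
  rw [this]

def ED (s : ℤ → ℤ) (r D : ℕ) : Set ℤ := {m | ∃ o ∈ Om s r, |m - o| ≤ D}

lemma ED_Loc {s : ℤ → ℤ} (hs : PM s) (r D : ℕ) : Loc s (ED s r D) := by
  have key : ∀ m m', Sim s (r + D) m m' → m ∈ ED s r D → m' ∈ ED s r D := by
    rintro m m' h ⟨o, ho, hd⟩
    have hsq : s m * s m = 1 := by rcases hs m with h | h <;> rw [h] <;> norm_num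
    have hi : |s m * (o - m)| ≤ D := by
      rw [abs_sub_comm] at hd
      rcases hs m with h | h <;> rw [h] <;> simpa [abs_sub_comm] using hd
    have := Sim_shift hs h hi
    have e : m + s m * (s m * (o - m)) = o := by
      rw [← mul_assoc, hsq]; ring
    rw [e] at this
    refine ⟨_, Sim_trans ho this, ?_⟩
    have e2 : m' - (m' + s m' * (s m * (o - m))) = - (s m' * (s m * (o - m))) := by ring
    rw [e2, abs_neg]
    rcases hs m' with h | h <;> rw [h] <;> simpa using hi
  exact ⟨r + D, fun m m' h => ⟨key m m' h, key m' m (Sim_symm h)⟩⟩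

lemma Om_sub_ED (s : ℤ → ℤ) (r D : ℕ) : Om s r ⊆ ED s r D :=
  fun m hm => ⟨m, hm, by simp⟩

lemma ED_zero (s : ℤ → ℤ) (r : ℕ) : ED s r 0 = Om s r := by
  ext m
  constructor
  · rintro ⟨o, ho, hd⟩
    have : m = o := by
      have := abs_nonpos_iff.1 (by simpa using hd : |m - o| ≤ 0); omega
    rw [this]; exact ho
  · exact fun h => Om_sub_ED s r 0 h

lemma ED_Gap {s : ℤ → ℤ} {r D : ℕ}
    (h : ∀ m ∈ Om s r, ∀ m' ∈ Om s r, m < m' → ((2 * D + 1 : ℕ) : ℤ) < m' - m) :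
    Gap (ED s r D) (2 * D + 1) := by
  intro m
  by_contra hcon
  push Not at hcon
  obtain ⟨o, ho, hd⟩ := hcon 0 (by omega)
  simp only [Nat.cast_zero, add_zero] at hd
  rw [abs_le] at hd
  -- first position after o + D
  obtain ⟨j, hj⟩ : ∃ j : ℕ, (j : ℤ) = o + D + 1 - m := ⟨(o + D + 1 - m).toNat, by omega⟩
  obtain ⟨o', ho', hd'⟩ := hcon j (by omega)
  rw [abs_le] at hd'
  rcases lt_trichotomy o o' with hlt | heq | hlt
  · have := h o ho o' ho' hlt
    push_cast at this
    omega
  · omega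
  · have := h o' ho' o ho hlt
    push_cast at this
    omega
end QM

namespace QM
open Filter Topology
open scoped commutatorElement

lemma Loc_compl {s : ℤ → ℤ} {E : Set ℤ} (h : Loc s E) : Loc s Eᶜ := by
  obtain ⟨R, hR⟩ := h
  exact ⟨R, fun m m' hm => not_congr (hR m m' hm)⟩

lemma GS_split {G : Subgroup Hm} {s : ℤ → ℤ} (hs : PM s) (h0 : BB G s Set.univ) {E : Set ℤ}
    (hE : Loc s E) {z : Hm} (hz : z ∈ GS s) : ∃ z1 ∈ PE s E, ∃ z2 ∈ PE s Eᶜ, z = z1 * z2 := by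
  obtain ⟨c, f, hf, hz⟩ := hz
  obtain ⟨z1, -, k1⟩ := BB_Loc hs h0 hE c f hf
  obtain ⟨z2, -, k2⟩ := BB_Loc hs h0 (Loc_compl hE) c f hf
  refine ⟨z1, Subgroup.subset_closure ⟨E, subset_rfl, hE, c, f, hf, k1⟩, z2,
    Subgroup.subset_closure ⟨Eᶜ, subset_rfl, Loc_compl hE, c, f, hf, k2⟩, ?_⟩
  refine Sgp_uniq hz (Sgp_mk hs (Fc_FO hf) ?_ (fun m _ hm => absurd (Set.mem_univ m) hm))
  intro m hm _ x hx
  by_cases hmE : m ∈ E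
  · have a1 := Sgp_in k1 hm hmE
    have a2 := Sgp_out k2 hm (fun h => h hmE)
    have := (mul_mem a1 a2).1 x hx
    simpa using this
  · have a1 := Sgp_out k1 hm hmE
    have a2 := Sgp_in k2 hm hmE
    have := (mul_mem a1 a2).1 x hx
    simpa using this

lemma ED_mono (s : ℤ → ℤ) (r : ℕ) {D D' : ℕ} (h : D ≤ D') : ED s r D ⊆ ED s r D' := by
  rintro m ⟨o, ho, hd⟩
  exact ⟨o, ho, by omega⟩

lemma PE_comm {s : ℤ → ℤ} (hs : PM s) (r n : ℕ) {x y : Hm} (hx : x ∈ PE s (ED s r (n + 1))ᶜ)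
    (hy : y ∈ PE s (ED s r n)) : Commute x y := by
  obtain ⟨a, -, ha, hxa⟩ := PE_sup hs hx
  obtain ⟨b, -, hb, hyb⟩ := PE_sup hs hy
  refine hxa.comm hyb ?_
  rw [Set.disjoint_left]
  rintro u ⟨m, hm, hu⟩ ⟨m', ⟨o, ho, hd⟩, hu'⟩
  have hu := abs_le.1 hu
  have hu' := abs_le.1 hu'
  have a1 : (m' : ℝ) < m + 2 := by linarith
  have a2 : (m : ℝ) < m' + 2 := by linarith
  have a1 : m' < m + 2 := by exact_mod_cast a1
  have a2 : m < m' + 2 := by exact_mod_cast a2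
  apply hm
  refine ⟨o, ho, ?_⟩
  rw [abs_le] at hd ⊢
  push_cast
  omega

def PW (s : ℤ → ℤ) (n : ℕ) (g : Hm) : Prop :=
  ∀ r, ∃ h ∈ PE s (ED s r n), ∃ k ∈ PE s (Om s r)ᶜ, g = h * k

lemma PW_step {G : Subgroup Hm} {s : ℤ → ℤ} (hs : PM s) (h0 : BB G s Set.univ) {n : ℕ} {z g : Hm}
    (hz : z ∈ GS s) (hg : PW s n g) : PW s (n + 1) (z * g) := by
  intro r
  obtain ⟨h, hh, k, hk, rfl⟩ := hg r
  obtain ⟨z1, h1, z2, h2, rfl⟩ := GS_split hs h0 (ED_Loc hs r (n + 1)) hz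
  refine ⟨z1 * h, mul_mem h1 (PE_mono (ED_mono s r (Nat.le_succ n)) hh), z2 * k,
    mul_mem (PE_mono (Set.compl_subset_compl.2 (Om_sub_ED s r (n + 1))) h2) hk, ?_⟩
  have := (PE_comm hs r n h2 hh).eq
  calc z1 * z2 * (h * k) = z1 * (z2 * h) * k := by group
    _ = _ := by rw [this]; group

lemma GS_inv {s : ℤ → ℤ} {z : Hm} (hz : z ∈ GS s) : z⁻¹ ∈ GS s := by
  obtain ⟨c, f, hf, hz⟩ := hz
  exact ⟨c, f⁻¹, inv_mem hf, inv_mem hz⟩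

lemma PW_exists {G : Subgroup Hm} {s : ℤ → ℤ} (hs : PM s) (h0 : BB G s Set.univ) {g : Hm}
    (hg : g ∈ Subgroup.closure (GS s)) : ∃ n, PW s n g := by
  induction hg using Subgroup.closure_induction_left with
  | one => exact ⟨0, fun r => ⟨1, one_mem _, 1, one_mem _, by simp⟩⟩
  | mul_left x hx y hy ih => obtain ⟨n, hn⟩ := ih; exact ⟨n + 1, PW_step hs h0 hx hn⟩
  | inv_mul_cancel x hx y hy ih =>
    obtain ⟨n, hn⟩ := ih; exact ⟨n + 1, PW_step hs h0 (GS_inv hx) hn⟩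

lemma HQ_bdd {ρ : ℤ → Letter} (hρ : IsQuasiPeriodic ρ) {G : Subgroup Hm}
    (h0 : BB G (sgn ρ) Set.univ) {ψ : Hm → ℝ} {C : ℝ} (h : HQ G ψ C) {g : Hm}
    (hg : g ∈ Subgroup.closure (GS (sgn ρ))) : |ψ g| ≤ C := by
  have hs := sgn_PM ρ
  obtain ⟨n, hn⟩ := PW_exists hs h0 hg
  obtain ⟨r, hr⟩ := Om_sep hρ (2 * n + 1)
  obtain ⟨x, hx, y, hy, rfl⟩ := hn r
  have e1 : ψ x = 0 := PE_zero hs h0 h (Dis_Loc hs h0 (ED_Loc hs r n) (ED_Gap hr)) hx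
  obtain ⟨L, hL⟩ := Om_synd hρ r
  have hOL : Loc (sgn ρ) (Om (sgn ρ) r)ᶜ := by
    rw [← ED_zero]; exact Loc_compl (ED_Loc hs r 0)
  have e2 : ψ y = 0 := PE_zero hs h0 h (Dis_Loc hs h0 hOL hL) hy
  have := h.qm x (PE_le hs h0 _ hx) y (PE_le hs h0 _ hy)
  rw [e1, e2] at this
  simpa using this

lemma final {ρ : ℤ → Letter} (hρ : IsQuasiPeriodic ρ) {G : Subgroup Hm}
    (h0 : BB G (sgn ρ) Set.univ) (hG : G ≤ Subgroup.closure (GS (sgn ρ))) (φ : ↥G → ℝ) {D : ℝ}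
    (hφ : ∀ g h : ↥G, |φ (g * h) - φ g - φ h| ≤ D) : ∃ C : ℝ, ∀ g : ↥G, |φ g| ≤ C := by
  classical
  obtain ⟨ψ, h1, h2⟩ := homog hφ
  set Ψ : Hm → ℝ := fun g => if hg : g ∈ G then ψ ⟨g, hg⟩ else 0 with hΨ
  have hin : ∀ g : ↥G, Ψ g = ψ g := fun g => by simp [hΨ]
  have hQ : HQ G Ψ (4 * D) := by
    constructor
    · intro g hg k hk
      have e1 := hin ⟨g, hg⟩
      have e2 := hin ⟨k, hk⟩
      have e3 := hin (⟨g, hg⟩ * ⟨k, hk⟩)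
      simp only [Subgroup.coe_mul] at e1 e2 e3
      rw [e1, e2, e3]
      have a1 := abs_le.1 (h1 ⟨g, hg⟩)
      have a2 := abs_le.1 (h1 ⟨k, hk⟩)
      have a3 := abs_le.1 (h1 (⟨g, hg⟩ * ⟨k, hk⟩))
      have a4 := abs_le.1 (hφ ⟨g, hg⟩ ⟨k, hk⟩)
      rw [abs_le]
      constructor <;> linarith
    · intro g hg n
      have e1 := hin ⟨g, hg⟩
      have e2 := hin (⟨g, hg⟩ ^ n)
      simp only [Subgroup.coe_pow] at e1 e2
      rw [e1, e2, h2]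
  refine ⟨5 * D, fun g => ?_⟩
  have b := abs_le.1 (HQ_bdd hρ h0 hQ (hG g.2))
  rw [hin] at b
  have a := abs_le.1 (h1 g)
  rw [abs_le]
  constructor <;> linarith
end QM

/-- For a quasi-periodic labelling `ρ`, every quasimorphism on `G_ρ`
is bounded. -/
theorem quasimorphisms_are_bounded
    (ρ : ℤ → Letter) (hρ : IsQuasiPeriodic ρ)
    (H : Subgroup (ℝ ≃o ℝ)) (hH : ∀ f : ℝ ≃o ℝ, f ∈ H ↔ InH f)
    (ν₁ ν₂ ν₃ : ℝ ≃o ℝ) (hgen : Subgroup.closure {ν₁, ν₂, ν₃} = H)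
    (ζ₁ ζ₂ ζ₃ χ₁ χ₂ χ₃ : ℝ ≃o ℝ)
    (hζ₁ : IsZeta ρ ν₁ ζ₁) (hζ₂ : IsZeta ρ ν₂ ζ₂) (hζ₃ : IsZeta ρ ν₃ ζ₃)
    (hχ₁ : IsChi ρ ν₁ χ₁) (hχ₂ : IsChi ρ ν₂ χ₂) (hχ₃ : IsChi ρ ν₃ χ₃)
    (G : Subgroup (ℝ ≃o ℝ))
    (hG : G = Subgroup.closure {ζ₁, ζ₂, ζ₃, χ₁, χ₂, χ₃})
    (φ : ↥G → ℝ) (hφ : ∃ D : ℝ, ∀ g h : ↥G, |φ (g * h) - φ g - φ h| ≤ D) :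
    ∃ C : ℝ, ∀ g : ↥G, |φ g| ≤ C := by
  have hl := hρ.1
  have hs := QM.sgn_PM ρ
  have hν : ∀ ν ∈ ({ν₁, ν₂, ν₃} : Set (ℝ ≃o ℝ)), InH ν := fun ν h =>
    (hH ν).1 (hgen ▸ Subgroup.subset_closure h)
  have hν₁ := hν ν₁ (by simp)
  have hν₂ := hν ν₂ (by simp)
  have hν₃ := hν ν₃ (by simp)
  have z1 := QM.zeta_Sgp hl hν₁.1.1 hζ₁
  have z2 := QM.zeta_Sgp hl hν₂.1.1 hζ₂
  have z3 := QM.zeta_Sgp hl hν₃.1.1 hζ₃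
  have c1 := QM.chi_Sgp hl hν₁.1.1 hχ₁
  have c2 := QM.chi_Sgp hl hν₂.1.1 hχ₂
  have c3 := QM.chi_Sgp hl hν₃.1.1 hχ₃
  have hm : ∀ g ∈ ({ζ₁, ζ₂, ζ₃, χ₁, χ₂, χ₃} : Set (ℝ ≃o ℝ)), g ∈ G := fun g hg =>
    hG ▸ Subgroup.subset_closure hg
  have key : ∀ {ν ζ χ : ℝ ≃o ℝ}, ζ ∈ G → χ ∈ G →
      (QM.tr (-(1 / 2)) ν, ζ) ∈ QM.Sgp (QM.sgn ρ) 1 Set.univ →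
      (QM.tr (-(1 / 2)) ν, χ) ∈ QM.Sgp (QM.sgn ρ) 0 Set.univ →
      ∀ c, ∃ z ∈ G, (QM.tr (-(1 / 2)) ν, z) ∈ QM.Sgp (QM.sgn ρ) c Set.univ := by
    intro ν ζ χ hζ hχ h1 h2 c
    rcases Int.emod_two_eq_zero_or_one c with hc | hc
    · exact ⟨χ, hχ, QM.Sgp_congr h2 (by omega) (fun _ _ => Iff.rfl)⟩
    · exact ⟨ζ, hζ, QM.Sgp_congr h1 (by omega) (fun _ _ => Iff.rfl)⟩
  have h0 : QM.BB G (QM.sgn ρ) Set.univ := by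
    refine QM.BB_univ hH hgen ?_
    rintro ν (rfl | rfl | rfl)
    · exact key (hm ζ₁ (by simp)) (hm χ₁ (by simp)) z1 c1
    · exact key (hm ζ₂ (by simp)) (hm χ₂ (by simp)) z2 c2
    · exact key (hm ζ₃ (by simp)) (hm χ₃ (by simp)) z3 c3
  have hle : G ≤ Subgroup.closure (QM.GS (QM.sgn ρ)) := by
    rw [hG, Subgroup.closure_le]
    rintro g (rfl | rfl | rfl | rfl | rfl | rfl)
    · exact QM.mem_GS hs h0 hν₁ z1
    · exact QM.mem_GS hs h0 hν₂ z2
    · exact QM.mem_GS hs h0 hν₃ z3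
    · exact QM.mem_GS hs h0 hν₁ c1
    · exact QM.mem_GS hs h0 hν₂ c2
    · exact QM.mem_GS hs h0 hν₃ c3
  obtain ⟨D, hD⟩ := hφ
  exact QM.final hρ h0 hle φ hD
end

section
/- Let G be a group and let ω be a bounded homogeneous 2-cocycle on G. Then ω is conjugation-invariant: for all f, g, h ∈ G, ω(h⁻¹fh, h⁻¹gh) = ω(f, g). -/
/-- A bounded homogeneous 2-cocycle is conjugation-invariant. -/
theorem homogeneous_cocycle_conj_invariant {G : Type*} [Group G] (ω : G → G → ℝ)
    (hb : IsBounded2Cocycle ω) (hh : IsHomogeneous ω) (f g h : G) :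
    ω (h⁻¹ * f * h) (h⁻¹ * g * h) = ω f g := by
  obtain ⟨⟨C, hC⟩, hc⟩ := hb
  obtain ⟨φ, hφ⟩ : ∃ φ : G → ℝ, ∀ x, φ x = ω x h - ω h (h⁻¹ * x * h) := ⟨_, fun _ => rfl⟩
  have key : ∀ x y, φ (x * y) + ω x y = φ x + φ y + ω (h⁻¹ * x * h) (h⁻¹ * y * h) := by
    intro x y
    have h1 := hc x y h
    have h2 := hc x h (h⁻¹ * y * h)
    have h3 := hc h (h⁻¹ * x * h) (h⁻¹ * y * h)
    have e1 : h * (h⁻¹ * y * h) = y * h := by group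
    have e2 : h * (h⁻¹ * x * h) = x * h := by group
    have e3 : h⁻¹ * x * h * (h⁻¹ * y * h) = h⁻¹ * (x * y) * h := by group
    rw [e1] at h2
    rw [e2, e3] at h3
    rw [hφ, hφ, hφ]
    linarith
  have hpow : ∀ x : G, ∀ n : ℕ, φ (x ^ (n + 1)) = (n + 1) * φ x := by
    intro x n
    induction n with
    | zero => simp
    | succ n ih =>
      have k := key (x ^ (n + 1)) x
      have z1 : ω (x ^ (n + 1)) x = 0 := by
        have := hh x ((n + 1 : ℕ) : ℤ) 1
        rwa [zpow_natCast, zpow_one] at this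
      have e : h⁻¹ * x ^ (n + 1) * h = (h⁻¹ * x * h) ^ (n + 1) := by
        have := conj_pow (i := n + 1) (a := h⁻¹) (b := x)
        rw [inv_inv] at this
        exact this.symm
      have z2 : ω (h⁻¹ * x ^ (n + 1) * h) (h⁻¹ * x * h) = 0 := by
        have := hh (h⁻¹ * x * h) ((n + 1 : ℕ) : ℤ) 1
        rwa [zpow_natCast, zpow_one, ← e] at this
      rw [z1, z2, ih, ← pow_succ] at k
      push_cast
      linarith
  have hbd : ∀ x, |φ x| ≤ 2 * C := by
    intro x
    rw [hφ]
    have a := abs_le.1 (hC x h)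
    have b := abs_le.1 (hC h (h⁻¹ * x * h))
    rw [abs_le]
    constructor <;> linarith [a.1, a.2, b.1, b.2]
  have hz : ∀ x, φ x = 0 := by
    intro x
    by_contra hne
    have hp : 0 < |φ x| := abs_pos.2 hne
    obtain ⟨n, hn⟩ := exists_nat_gt (2 * C / |φ x|)
    rw [div_lt_iff₀ hp] at hn
    have b := hbd (x ^ (n + 1))
    rw [hpow, abs_mul, abs_of_nonneg (by positivity : (0 : ℝ) ≤ (n : ℝ) + 1)] at b
    linarith
  have k := key f g
  rw [hz, hz, hz] at k
  linarith
end

section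
/- Let G be a group and let ω be a bounded homogeneous 2-cocycle on G. Let E be the central extension of G by ℝ associated to ω, namely the set ℝ × G with group law (λ, f)·(μ, g) = (λ + μ + ω(f, g), fg), and let σ : G → E be the section σ(g) = (0, g). Then for all f, g ∈ G one has σ(g⁻¹fg) = σ(g)⁻¹σ(f)σ(g) in E. -/
/-- The underlying set `ℝ × G` of the central extension of `G` by `ℝ` determined by a
2-cocycle `ω`. -/
@[ext]
structure CocycleExt (G : Type*) (ω : G → G → ℝ) where
  re : ℝ
  el : G

/-- The group law `(λ, f)·(μ, g) = (λ + μ + ω(f,g), fg)` on the central extension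
determined by a homogeneous 2-cocycle `ω`. -/
def extGroup {G : Type*} [Group G] (ω : G → G → ℝ)
    (hc : ∀ g₁ g₂ g₃ : G, ω g₂ g₃ - ω (g₁ * g₂) g₃ + ω g₁ (g₂ * g₃) - ω g₁ g₂ = 0)
    (hh : IsHomogeneous ω) : Group (CocycleExt G ω) where
  mul p q := ⟨p.re + q.re + ω p.el q.el, p.el * q.el⟩
  one := ⟨0, 1⟩
  inv p := ⟨-p.re - ω p.el⁻¹ p.el, p.el⁻¹⟩
  mul_assoc p q r := by
    ext
    · have := hc p.el q.el r.el
      show p.re + q.re + ω p.el q.el + r.re + ω (p.el * q.el) r.el =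
        p.re + (q.re + r.re + ω q.el r.el) + ω p.el (q.el * r.el)
      linarith
    · exact mul_assoc _ _ _
  one_mul p := by
    have h0 : ω 1 p.el = 0 := by
      have := hh p.el 0 1
      simpa using this
    ext
    · show 0 + p.re + ω 1 p.el = p.re
      rw [h0]; ring
    · exact one_mul _
  mul_one p := by
    have h0 : ω p.el 1 = 0 := by
      have := hh p.el 1 0
      simpa using this
    ext
    · show p.re + 0 + ω p.el 1 = p.re
      rw [h0]; ring
    · exact mul_one _
  inv_mul_cancel p := by
    ext
    · show -p.re - ω p.el⁻¹ p.el + p.re + ω p.el⁻¹ p.el = 0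
      ring
    · exact inv_mul_cancel _

theorem ext_pow_aux {G : Type*} [Group G] (ω : G → G → ℝ)
    (hc : ∀ g₁ g₂ g₃ : G, ω g₂ g₃ - ω (g₁ * g₂) g₃ + ω g₁ (g₂ * g₃) - ω g₁ g₂ = 0)
    (hh : IsHomogeneous ω) (c : ℝ) (h : G) (n : ℕ) :
    letI : Group (CocycleExt G ω) := extGroup ω hc hh
    (⟨c, h⟩ : CocycleExt G ω) ^ n = ⟨n * c, h ^ n⟩ := by
  letI : Group (CocycleExt G ω) := extGroup ω hc hh
  show (⟨c, h⟩ : CocycleExt G ω) ^ n = ⟨n * c, h ^ n⟩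
  induction n with
  | zero =>
    rw [pow_zero]
    ext
    · show (0 : ℝ) = ((0 : ℕ) : ℝ) * c
      simp
    · show (1 : G) = h ^ 0
      simp
  | succ n ih =>
    rw [pow_succ, ih]
    have h0 : ω (h ^ n) h = 0 := by simpa using hh h n 1
    ext
    · show (n : ℝ) * c + c + ω (h ^ n) h = ((n + 1 : ℕ) : ℝ) * c
      rw [h0]; push_cast; ring
    · show h ^ n * h = h ^ (n + 1)
      rw [pow_succ]

/-- For a bounded homogeneous 2-cocycle `ω` on `G`, the canonical
section `σ(g) = (0, g)` of the associated central extension `E = ℝ × G` is compatible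
with conjugation: `σ(g⁻¹ f g) = σ(g)⁻¹ σ(f) σ(g)`. -/
theorem section_of_homogeneous_cocycle_conj {G : Type*} [Group G] (ω : G → G → ℝ)
    (hb : IsBounded2Cocycle ω) (hh : IsHomogeneous ω) (f g : G) :
    letI : Group (CocycleExt G ω) := extGroup ω hb.2 hh
    (⟨0, g⁻¹ * f * g⟩ : CocycleExt G ω) =
      (⟨0, g⟩ : CocycleExt G ω)⁻¹ * ⟨0, f⟩ * ⟨0, g⟩ := by
  letI : Group (CocycleExt G ω) := extGroup ω hb.2 hh
  show (⟨0, g⁻¹ * f * g⟩ : CocycleExt G ω) =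
      (⟨0, g⟩ : CocycleExt G ω)⁻¹ * ⟨0, f⟩ * ⟨0, g⟩
  obtain ⟨C, hC⟩ := hb.1
  have key : ∀ x : G, (⟨0, g⟩ : CocycleExt G ω)⁻¹ * ⟨0, x⟩ * ⟨0, g⟩ =
      ⟨-0 - ω g⁻¹ g + 0 + ω g⁻¹ x + 0 + ω (g⁻¹ * x) g, g⁻¹ * x * g⟩ := fun x => rfl
  have hpow : ∀ n : ℕ, ((⟨0, g⟩ : CocycleExt G ω)⁻¹ * ⟨0, f⟩ * ⟨0, g⟩) ^ n =
      (⟨0, g⟩ : CocycleExt G ω)⁻¹ * ⟨0, f ^ n⟩ * ⟨0, g⟩ := by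
    intro n
    have h1 := conj_pow (i := n) (a := (⟨0, g⟩ : CocycleExt G ω)⁻¹) (b := ⟨0, f⟩)
    rw [inv_inv] at h1
    have h2 : (⟨0, f⟩ : CocycleExt G ω) ^ n = ⟨n * 0, f ^ n⟩ := ext_pow_aux ω hb.2 hh 0 f n
    rw [h1, h2, mul_zero]
  rw [key f]
  simp only [key f] at hpow
  generalize -0 - ω g⁻¹ g + 0 + ω g⁻¹ f + 0 + ω (g⁻¹ * f) g = c at hpow ⊢
  have hbd : ∀ n : ℕ, n * |c| ≤ 3 * C := by
    intro n
    have h1 := hpow n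
    have h2 : (⟨c, g⁻¹ * f * g⟩ : CocycleExt G ω) ^ n = ⟨n * c, (g⁻¹ * f * g) ^ n⟩ :=
      ext_pow_aux ω hb.2 hh c _ n
    rw [h2, key] at h1
    have h3 := congrArg CocycleExt.re h1
    simp only at h3
    have e : (n : ℝ) * |c| = |n * c| := by rw [abs_mul, Nat.abs_cast]
    rw [e, h3]
    have a1 := abs_le.1 (hC g⁻¹ g)
    have a2 := abs_le.1 (hC g⁻¹ (f ^ n))
    have a3 := abs_le.1 (hC (g⁻¹ * f ^ n) g)
    rw [abs_le]
    constructor <;> linarith [a1.1, a1.2, a2.1, a2.2, a3.1, a3.2]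
  have hc0 : c = 0 := by
    by_contra hne
    have hpos : 0 < |c| := abs_pos.2 hne
    obtain ⟨n, hn⟩ := exists_nat_gt (3 * C / |c|)
    rw [div_lt_iff₀ hpos] at hn
    linarith [hbd n]
  rw [hc0]
end

section
/- Let G be a group, let H ≤ G be a subgroup that is 2-boundedly acyclic, and let ω be a bounded homogeneous 2-cocycle on G. Then ω vanishes identically on H: ω(g, h) = 0 for all g, h ∈ H. -/
/-- A bounded homogeneous 2-cocycle on `G` vanishes identically on any
2-boundedly acyclic subgroup. -/
theorem homogeneous_cocycle_vanishes_on_acyclic_subgroup {G : Type*} [Group G]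
    (H : Subgroup G) (hH : Is2BoundedlyAcyclic ↥H) (ω : G → G → ℝ)
    (hb : IsBounded2Cocycle ω) (hh : IsHomogeneous ω) :
    ∀ g h : G, g ∈ H → h ∈ H → ω g h = 0 := by
  obtain ⟨⟨C, hC⟩, hc⟩ := hb
  obtain ⟨φ, ⟨D, hD⟩, hφ⟩ := hH (fun a b => ω a b)
    ⟨⟨C, fun a b => hC a b⟩, fun a b c => by simpa using hc a b c⟩
  have key : ∀ (x : H) (n : ℕ), φ (x ^ (n + 1)) = (n + 1) * φ x := by
    intro x n
    induction n with
    | zero => simp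
    | succ k ih =>
      have h1 := hφ (x ^ (k + 1)) x
      have h2 := hh (x : G) ((k + 1 : ℕ) : ℤ) 1
      rw [zpow_natCast, zpow_one] at h2
      rw [← pow_succ] at h1
      simp only [Subgroup.coe_pow] at h1
      rw [h2, ih] at h1
      push_cast
      linarith
  have zero : ∀ x : H, φ x = 0 := by
    intro x
    by_contra hx
    have hpos : 0 < |φ x| := abs_pos.mpr hx
    obtain ⟨n, hn⟩ := exists_nat_gt (D / |φ x|)
    rw [div_lt_iff₀ hpos] at hn
    have h1 := hD (x ^ (n + 1))
    rw [key, abs_mul, abs_of_nonneg (by positivity : (0 : ℝ) ≤ n + 1)] at h1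
    linarith
  intro g h hg hh'
  have := hφ ⟨g, hg⟩ ⟨h, hh'⟩
  simpa [zero] using this
end
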